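/- Let n ≥ 2, 1 ≤ j ≤ n−1, 0 < D < 1 and r ≥ 1. Then, as p → ∞ along primes, the proportion of subgroups H ∈ H_{p,j}(n) for which #{x ∈ ℤⁿ : ‖x‖∞ ≤ D·p^{j/n} and (x mod p) ∈ H} = r tends to c_{n,r} = μ(Ω̃_{n,r}). -/

import Mathlib

open Matrix MeasureTheory

noncomputable section

/-- The subgroup `Γ = SL_n(ℤ)` inside `G = SL_n(ℝ)`, realized as the range of the map
induced by the ring homomorphism `ℤ → ℝ`. -/
def Gamma (n : ℕ) : Subgroup (Matrix.SpecialLinearGroup (Fin n) ℝ) :=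
  (Matrix.SpecialLinearGroup.map (Int.castRingHom ℝ)).range

/-- The homogeneous space `X = Γ\G = SL_n(ℤ)\SL_n(ℝ)` (right cosets `Γg`). -/
def XSpace (n : ℕ) : Type :=
  Quotient (QuotientGroup.rightRel (Gamma n))

/-- The topology on `SL_n(ℝ)` induced from the space of matrices. -/
instance (n : ℕ) : TopologicalSpace (Matrix.SpecialLinearGroup (Fin n) ℝ) :=
  TopologicalSpace.induced (fun g => (g : Matrix (Fin n) (Fin n) ℝ)) inferInstance

/-- The quotient topology on `X = Γ\G`. -/
instance (n : ℕ) : TopologicalSpace (XSpace n) :=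
  instTopologicalSpaceQuotient

/-- The Borel σ-algebra on `X`. -/
instance (n : ℕ) : MeasurableSpace (XSpace n) := borel _

instance (n : ℕ) : BorelSpace (XSpace n) := ⟨rfl⟩

/-- Right translation `Γx ↦ Γxg` of `G` on `X = Γ\G`. -/
def rightTranslate (n : ℕ) (g : Matrix.SpecialLinearGroup (Fin n) ℝ) :
    XSpace n → XSpace n :=
  Quotient.map' (fun x => x * g) (fun x y hxy => by
    simp only [QuotientGroup.rightRel_apply] at hxy ⊢
    simpa [mul_assoc] using hxy)

/-- `Ω̃_{n,r}` : the set of cosets `Γg ∈ X` such that the lattice `ℤⁿg` contains exactly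
`r` points `vg` (for `v ∈ ℤⁿ`) of sup-norm at most `D`. -/
def OmegaTilde (n : ℕ) (D : ℝ) (r : ℕ) : Set (XSpace n) :=
  {x | ∃ g : Matrix.SpecialLinearGroup (Fin n) ℝ,
    (Quotient.mk'' g : XSpace n) = x ∧
    Set.ncard {v : Fin n → ℤ |
      ‖Matrix.vecMul (fun i => (v i : ℝ)) (g : Matrix (Fin n) (Fin n) ℝ)‖ ≤ D} = r}


/-- `H_{N,j}(n)`: the set of subgroups of `(ℤ/Nℤ)ⁿ` that are solution sets of a system
`Ax ≡ 0 (mod N)` of `j` linear congruences in `n` variables whose associated map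
`(ℤ/Nℤ)ⁿ → (ℤ/Nℤ)ʲ` is surjective. -/
def congruenceSet (N n j : ℕ) : Set (AddSubgroup (Fin n → ZMod N)) :=
  {H | ∃ A : Matrix (Fin j) (Fin n) (ZMod N),
    (Function.Surjective fun x : Fin n → ZMod N => A.mulVec x) ∧
    (H : Set (Fin n → ZMod N)) = {x | A.mulVec x = 0}}

section ModuleB1
open Matrix MeasureTheory Topology

abbrev SLR (n : ℕ) := Matrix.SpecialLinearGroup (Fin n) ℝ

section Base
variable {n : ℕ}

instance instTopGroupSLR : IsTopologicalGroup (SLR n) :=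
  Matrix.SpecialLinearGroup.topologicalGroup (n := Fin n) (R := ℝ)

lemma isClosedEmbedding_valSLR :
    IsClosedEmbedding (fun g : SLR n => (g : Matrix (Fin n) (Fin n) ℝ)) :=
  Matrix.SpecialLinearGroup.isClosedEmbedding_val (n := Fin n) (R := ℝ)

instance : MeasurableSpace (SLR n) := borel _
instance : BorelSpace (SLR n) := ⟨rfl⟩
instance : SecondCountableTopology (SLR n) :=
  haveI : SecondCountableTopology (Matrix (Fin n) (Fin n) ℝ) :=
    inferInstanceAs (SecondCountableTopology (Fin n → Fin n → ℝ))
  isClosedEmbedding_valSLR.isEmbedding.secondCountableTopology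
instance : LocallyCompactSpace (SLR n) :=
  haveI : LocallyCompactSpace (Matrix (Fin n) (Fin n) ℝ) :=
    inferInstanceAs (LocallyCompactSpace (Fin n → Fin n → ℝ))
  isClosedEmbedding_valSLR.locallyCompactSpace
instance : PolishSpace (SLR n) :=
  haveI : PolishSpace (Matrix (Fin n) (Fin n) ℝ) :=
    inferInstanceAs (PolishSpace (Fin n → Fin n → ℝ))
  isClosedEmbedding_valSLR.polishSpace

lemma continuous_entry (i j : Fin n) : Continuous (fun g : SLR n => (g : Matrix (Fin n) (Fin n) ℝ) i j) :=
  (continuous_apply_apply i j).comp isClosedEmbedding_valSLR.continuous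

lemma continuous_toSLR {α : Type*} [TopologicalSpace α] {f : α → SLR n}
    (h : ∀ i j, Continuous fun a => (f a : Matrix (Fin n) (Fin n) ℝ) i j) : Continuous f := by
  rw [isClosedEmbedding_valSLR.isInducing.continuous_iff]
  exact continuous_matrix h

/-- projection -/
def pr (g : SLR n) : XSpace n := Quotient.mk'' g

lemma pr_surj : Function.Surjective (pr : SLR n → XSpace n) := Quotient.mk''_surjective

lemma pr_eq {g h : SLR n} : pr g = pr h ↔ h * g⁻¹ ∈ Gamma n := by
  exact (Quotient.eq'' (s₁ := QuotientGroup.rightRel (Gamma n))).trans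
    (by rw [QuotientGroup.rightRel_apply])

lemma pr_gamma {γ : SLR n} (hγ : γ ∈ Gamma n) (g : SLR n) : pr (γ * g) = pr g := by
  rw [pr_eq]; simpa using (Gamma n).inv_mem hγ

@[simp] lemma rt_pr (g h : SLR n) : rightTranslate n h (pr g) = pr (g * h) := rfl
@[simp] lemma rt_one (x : XSpace n) : rightTranslate n 1 x = x := by
  obtain ⟨g, rfl⟩ := pr_surj x; simp
lemma rt_mul (g h : SLR n) (x : XSpace n) :
    rightTranslate n (g * h) x = rightTranslate n h (rightTranslate n g x) := by
  obtain ⟨a, rfl⟩ := pr_surj x; simp [mul_assoc]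

lemma continuous_pr : Continuous (pr : SLR n → XSpace n) := continuous_quot_mk

lemma isOpenMap_pr : IsOpenMap (pr : SLR n → XSpace n) := by
  intro U hU
  have : IsOpen (pr ⁻¹' (pr '' U) : Set (SLR n)) := by
    have h : (pr ⁻¹' (pr '' U) : Set (SLR n)) = ⋃ γ : Gamma n, (fun g => (γ : SLR n) * g) ⁻¹' U := by
      ext g
      simp only [Set.mem_preimage, Set.mem_image, Set.mem_iUnion]
      constructor
      · rintro ⟨h, hh, he⟩
        rw [eq_comm, pr_eq] at he
        exact ⟨⟨_, he⟩, by simpa using hh⟩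
      · rintro ⟨γ, hγ⟩
        exact ⟨_, hγ, pr_gamma γ.2 g⟩
    rw [h]
    exact isOpen_iUnion fun γ => hU.preimage (continuous_const_mul _)
  exact this

lemma isQuotientMap_pr : IsOpenQuotientMap (pr : SLR n → XSpace n) :=
  ⟨pr_surj, continuous_pr, isOpenMap_pr⟩

lemma continuous_rt2 : Continuous (fun q : XSpace n × SLR n => rightTranslate n q.2 q.1) := by
  have h : IsOpenQuotientMap (Prod.map (pr : SLR n → XSpace n) (id : SLR n → SLR n)) :=
    isQuotientMap_pr.prodMap IsOpenQuotientMap.id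
  rw [h.isQuotientMap.continuous_iff]
  exact continuous_pr.comp continuous_mul

lemma continuous_rt (g : SLR n) : Continuous (rightTranslate n g) :=
  continuous_rt2.comp (by fun_prop : Continuous fun x : XSpace n => (x, g))

lemma measurable_rt (g : SLR n) : Measurable (rightTranslate n g) := (continuous_rt g).measurable

instance : SecondCountableTopology (XSpace n) := isQuotientMap_pr.isQuotientMap.secondCountableTopology isOpenMap_pr

lemma mem_Gamma_of_int {g : SLR n} (h : ∀ i j, ∃ k : ℤ, (k : ℝ) = (g : Matrix (Fin n) (Fin n) ℝ) i j) :
    g ∈ Gamma n := by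
      choose f hf using h
      have hM : (Matrix.of f).map (Int.cast : ℤ → ℝ) = (g : Matrix (Fin n) (Fin n) ℝ) := by
        ext i j; simp [hf]
      refine ⟨⟨Matrix.of f, ?_⟩, ?_⟩
      · have := g.2
        rw [← hM] at this
        have h2 := (Int.castRingHom ℝ).map_det (Matrix.of f)
        simp only [RingHom.mapMatrix_apply, Int.coe_castRingHom] at h2
        rw [this] at h2
        exact_mod_cast h2
      · exact Matrix.SpecialLinearGroup.ext _ _ fun i j => hf i j

lemma isClosed_Gamma : IsClosed (Gamma n : Set (SLR n)) := by
  have h : (Gamma n : Set (SLR n)) =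
      ⋂ i, ⋂ j, (fun g : SLR n => (g : Matrix (Fin n) (Fin n) ℝ) i j) ⁻¹' (Set.range ((↑) : ℤ → ℝ)) := by
    ext g
    simp only [Set.mem_iInter, Set.mem_preimage, Set.mem_range, SetLike.mem_coe]
    constructor
    · rintro ⟨γ, rfl⟩ i j
      exact ⟨γ i j, rfl⟩
    · intro h
      exact mem_Gamma_of_int h
  rw [h]
  exact isClosed_iInter fun i => isClosed_iInter fun j =>
    (Int.isClosedEmbedding_coe_real.isClosed_range).preimage (continuous_entry i j)

instance : T2Space (XSpace n) := by
  rw [t2Space_iff_of_isOpenQuotientMap isQuotientMap_pr]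
  have : {q : SLR n × SLR n | pr q.1 = pr q.2} = (fun q : SLR n × SLR n => q.2 * q.1⁻¹) ⁻¹' (Gamma n : Set (SLR n)) := by
    ext q; simp [pr_eq]
  rw [this]
  exact isClosed_Gamma.preimage (by fun_prop)

lemma measurable_X_iff {β : Type*} [MeasurableSpace β] {f : XSpace n → β}  :
    Measurable f ↔ Measurable (fun g : SLR n => f (pr g)) := by
  constructor
  · intro h; exact h.comp continuous_pr.measurable
  · intro h s hs
    have := h hs
    exact (continuous_pr.measurable.measurableSet_preimage_iff_of_surjective pr_surj).1 this

lemma continuous_X_iff {β : Type*} [TopologicalSpace β] {f : XSpace n → β}  :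
    Continuous f ↔ Continuous (fun g : SLR n => f (pr g)) :=
  isQuotientMap_pr.isQuotientMap.continuous_iff

end Base

end ModuleB1

section ModuleB2
open Matrix MeasureTheory Topology

section FubiniConst
variable {G Z : Type*} [Group G] [MeasurableSpace G] [MeasurableMul G] [MeasurableSpace Z]

lemma ae_const_of_invariant {β : Type*} [MeasurableSpace β] [MeasurableEq β] [MeasurableSingletonClass β]
    (act : Z → G → Z) (hact : Measurable (Function.uncurry act))
    (hassoc : ∀ z g h, act (act z g) h = act z (g * h))
    (lam : Measure G) [lam.IsMulLeftInvariant] [SFinite lam] (hlam : lam ≠ 0)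
    (J : Measure Z) [SFinite J] (hJ0 : J ≠ 0) (hJ : ∀ g, J.map (fun z => act z g) = J)
    (z0 : Z) (hz0 : ∀ᵐ z ∂J, ∃ g, z = act z0 g)
    (f : Z → β) (hf : Measurable f) (hinv : ∀ g, ∀ᵐ z ∂J, f (act z g) = f z) :
    ∃ c, ∀ᵐ z ∂J, f z = c := by
  have hm1 : MeasurableSet {q : G × Z | f (act q.2 q.1) = f q.2} := by
    apply measurableSet_eq_fun
    · exact hf.comp (hact.comp measurable_swap)
    · exact hf.comp measurable_snd
  have h1 : ∀ᵐ q ∂(lam.prod J), f (act q.2 q.1) = f q.2 :=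
    (Measure.ae_prod_iff_ae_ae hm1).2 (Filter.Eventually.of_forall hinv)
  have h2 : ∀ᵐ z ∂J, ∀ᵐ g ∂lam, f (act z g) = f z := by
    have h1' : ∀ᵐ q ∂(J.prod lam), f (act q.1 q.2) = f q.1 := by
      have := Measure.prod_swap (μ := lam) (ν := J)
      rw [← this]
      rw [ae_map_iff measurable_swap.aemeasurable]
      · exact h1
      · exact measurableSet_eq_fun (hf.comp hact) (hf.comp measurable_fst)
    exact Measure.ae_ae_of_ae_prod h1'
  have : (ae J).NeBot := ae_neBot.2 hJ0
  obtain ⟨z1, hz1, g1, hg1⟩ := (h2.and hz0).exists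
  refine ⟨f z1, ?_⟩
  have h3 : ∀ h, ∀ᵐ g ∂lam, f (act z0 (h * g)) = f z1 := by
    intro h
    have h4 : ∀ᵐ g ∂lam, f (act z0 (g1 * g)) = f z1 := by
      filter_upwards [hz1] with g hg
      rw [← hassoc, ← hg1, hg]
    have h5 := (measurePreserving_mul_left lam (g1⁻¹ * h)).quasiMeasurePreserving.ae h4
    filter_upwards [h5] with g hg
    rw [← hg]; congr 2; group
  have hm2 : MeasurableSet {q : G × Z | f (act q.2 q.1) = f z1} := by
    exact (hf.comp (hact.comp measurable_swap)) (measurableSet_singleton (f z1))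
  have h6 : ∀ᵐ z ∂J, ∀ᵐ g ∂lam, f (act z g) = f z1 := by
    filter_upwards [hz0] with z hz
    obtain ⟨h, rfl⟩ := hz
    filter_upwards [h3 h] with g hg
    rw [hassoc, hg]
  have h7 : ∀ᵐ q ∂(lam.prod J), f (act q.2 q.1) = f z1 := by
    have := Measure.prod_swap (μ := J) (ν := lam)
    rw [← this]
    rw [ae_map_iff measurable_swap.aemeasurable hm2]
    exact (Measure.ae_prod_iff_ae_ae (measurable_swap hm2)).2 h6
  have h8 := Measure.ae_ae_of_ae_prod h7
  have : (ae lam).NeBot := ae_neBot.2 hlam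
  obtain ⟨g, hg⟩ := h8.exists
  have hmg : Measurable (fun z => act z g) := hact.comp (measurable_id.prodMk measurable_const)
  rw [← hJ g, ae_map_iff (p := fun z => f z = f z1) hmg.aemeasurable (hf (measurableSet_singleton _))]
  exact hg

lemma invariant_unique (act : Z → G → Z) (hact : Measurable (Function.uncurry act))
    (hassoc : ∀ z g h, act (act z g) h = act z (g * h)) (hone : ∀ z, act z 1 = z)
    (lam : Measure G) [lam.IsMulLeftInvariant] [SFinite lam] (hlam : lam ≠ 0)
    (J₁ J₂ : Measure Z) [IsProbabilityMeasure J₁] [IsProbabilityMeasure J₂]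
    (hJ₁ : ∀ g, J₁.map (fun z => act z g) = J₁) (hJ₂ : ∀ g, J₂.map (fun z => act z g) = J₂)
    (z0 : Z) (hz₁ : ∀ᵐ z ∂J₁, ∃ g, z = act z0 g) (hz₂ : ∀ᵐ z ∂J₂, ∃ g, z = act z0 g) :
    J₁ = J₂ := by
  set J := J₁ + J₂ with hJd
  have hmg : ∀ g, Measurable (fun z => act z g) := fun g => hact.comp (measurable_id.prodMk measurable_const)
  have hJ : ∀ g, J.map (fun z => act z g) = J := by
    intro g; rw [hJd, Measure.map_add _ _ (hmg g), hJ₁, hJ₂]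
  have hz : ∀ᵐ z ∂J, ∃ g, z = act z0 g := by
    rw [hJd, ae_add_measure_iff]; exact ⟨hz₁, hz₂⟩
  have hac : J₁ ≪ J := Measure.absolutelyContinuous_of_le (Measure.le_add_right le_rfl)
  have hJ0 : J ≠ 0 := by
    intro h
    have : J Set.univ = 0 := by rw [h]; simp
    simp [hJd] at this
  set f := J₁.rnDeriv J with hfd
  have hf : Measurable f := Measure.measurable_rnDeriv _ _
  have hden : J.withDensity f = J₁ := Measure.withDensity_rnDeriv_eq _ _ hac
  have hinv : ∀ g, ∀ᵐ z ∂J, f (act z g) = f z := by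
    intro g
    have hfi : ∫⁻ z, f z ∂J ≠ ⊤ := by
      have : ∫⁻ z, f z ∂J = J₁ Set.univ := by rw [← hden, withDensity_apply _ MeasurableSet.univ]; simp
      rw [this]; simp
    refine (withDensity_eq_iff (hf.comp (hmg g)).aemeasurable hf.aemeasurable ?_).1 ?_
    · have : ∫⁻ z, (f ∘ fun z => act z g) z ∂J = ∫⁻ z, f z ∂J := by
        conv_rhs => rw [← hJ g]
        rw [lintegral_map hf (hmg g)]; rfl
      rwa [this]
    · rw [hden]
      ext A hA
      rw [withDensity_apply _ hA]
      -- A = preimage of (act g⁻¹)⁻¹ A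
      set B := (fun z => act z g⁻¹) ⁻¹' A with hB
      have hBm : MeasurableSet B := hmg _ hA
      have hAB : A = (fun z => act z g) ⁻¹' B := by
        ext z; simp [hB, hassoc, hone]
      have e1 : ∫⁻ z in A, (f ∘ fun z => act z g) z ∂J = ∫⁻ z in B, f z ∂J := by
        conv_rhs => rw [← hJ g, setLIntegral_map hBm hf (hmg g)]
        rw [← hAB]; rfl
      rw [e1, ← withDensity_apply _ hBm, hden]
      conv_rhs => rw [← hJ₁ g, hAB]
      rw [Measure.map_apply (hmg g) (hmg g hBm)]
      conv_lhs => rw [← hJ₁ g⁻¹, Measure.map_apply (hmg _) hBm]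
      have : (fun z => act z g⁻¹) ⁻¹' B = (fun z => act z (g⁻¹ * g⁻¹)) ⁻¹' A := by
        ext z; simp [hB, hassoc]
      rw [this]
      have h2 : (fun z => act z g) ⁻¹' ((fun z => act z g) ⁻¹' B) = (fun z => act z g) ⁻¹' A := by
        rw [← hAB]
      rw [h2, ← Measure.map_apply (hmg _) hA, ← Measure.map_apply (hmg _) hA, hJ₁, hJ₁]
  obtain ⟨c, hc⟩ := ae_const_of_invariant act hact hassoc lam hlam J hJ0 hJ z0 hz f hf hinv
  have h1 : J₁ = c • J := by
    rw [← hden, withDensity_congr_ae hc]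
    exact withDensity_const c
  have h2 : c * 2 = 1 := by
    have : J₁ Set.univ = c * J Set.univ := by conv_lhs => rw [h1]; simp
    simp [hJd] at this
    rw [← one_add_one_eq_two, ← this]
  have hc2 : c = 2⁻¹ := ENNReal.eq_inv_of_mul_eq_one_left h2
  have h3 : J₁ + J₁ = J₁ + J₂ := by
    rw [← hJd]
    nth_rw 1 2 [h1]
    rw [← add_smul, hc2, ENNReal.inv_two_add_inv_two, one_smul]
  ext A hA
  have := congrArg (fun m => m A) h3
  simp only [Measure.add_apply] at this
  exact (ENNReal.add_right_inj (measure_ne_top J₁ A)).1 this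

end FubiniConst

end ModuleB2

section ModuleB3
open Matrix MeasureTheory Topology
open scoped ENNReal

section Hecke
variable {n : ℕ}

/-- A finite nonempty `Γ`-invariant subset of `X`, equal to the orbit `{Γ d γ}`. -/
structure HSet (n : ℕ) where
  d : SLR n
  C : Finset (XSpace n)
  mem_iff : ∀ x, x ∈ C ↔ ∃ γ ∈ Gamma n, x = pr (d * γ)

lemma HSet.nonempty (S : HSet n) : S.C.Nonempty :=
  ⟨pr S.d, (S.mem_iff _).2 ⟨1, one_mem _, by simp⟩⟩

lemma HSet.card_pos (S : HSet n) : 0 < S.C.card := S.nonempty.card_pos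

lemma HSet.inv (S : HSet n) {γ : SLR n} (hγ : γ ∈ Gamma n) {x : XSpace n} (hx : x ∈ S.C) :
    rightTranslate n γ x ∈ S.C := by
  obtain ⟨δ, hδ, rfl⟩ := (S.mem_iff _).1 hx
  exact (S.mem_iff _).2 ⟨δ * γ, mul_mem hδ hγ, by simp [mul_assoc]⟩

def rep (x : XSpace n) : SLR n := Quotient.out x
@[simp] lemma pr_rep (x : XSpace n) : pr (rep x) = x := Quotient.out_eq x

lemma HSet.sum_inv (S : HSet n) {M : Type*} [AddCommMonoid M] (F : XSpace n → M) {γ : SLR n}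
    (hγ : γ ∈ Gamma n) : ∑ y ∈ S.C, F (rightTranslate n γ y) = ∑ y ∈ S.C, F y := by
  refine Finset.sum_bij' (fun y _ => rightTranslate n γ y) (fun y _ => rightTranslate n γ⁻¹ y)
    (fun y hy => S.inv hγ hy) (fun y hy => S.inv (inv_mem hγ) hy) ?_ ?_ ?_
  · intro y _; rw [← rt_mul]; simp
  · intro y _; rw [← rt_mul]; simp
  · intro y _; rfl

lemma HSet.sum_congr_pr (S : HSet n) {M : Type*} [AddCommMonoid M] (F : XSpace n → M) {g h : SLR n}
    (hgh : pr g = pr h) :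
    ∑ y ∈ S.C, F (rightTranslate n g y) = ∑ y ∈ S.C, F (rightTranslate n h y) := by
  rw [pr_eq] at hgh
  have := S.sum_inv (fun y => F (rightTranslate n g y)) hgh
  rw [← this]
  refine Finset.sum_congr rfl fun y _ => ?_
  rw [← rt_mul]; simp

/-- real Hecke operator -/
def HSet.T (S : HSet n) (η : XSpace n → ℝ) (x : XSpace n) : ℝ :=
  (S.C.card : ℝ)⁻¹ * ∑ y ∈ S.C, η (rightTranslate n (rep x) y)

/-- extended Hecke operator -/
def HSet.Te (S : HSet n) (η : XSpace n → ℝ≥0∞) (x : XSpace n) : ℝ≥0∞ :=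
  (S.C.card : ℝ≥0∞)⁻¹ * ∑ y ∈ S.C, η (rightTranslate n (rep x) y)

lemma HSet.T_pr (S : HSet n) (η : XSpace n → ℝ) (g : SLR n) :
    S.T η (pr g) = (S.C.card : ℝ)⁻¹ * ∑ y ∈ S.C, η (rightTranslate n g y) := by
  unfold HSet.T; rw [S.sum_congr_pr η (pr_rep (pr g))]

lemma HSet.Te_pr (S : HSet n) (η : XSpace n → ℝ≥0∞) (g : SLR n) :
    S.Te η (pr g) = (S.C.card : ℝ≥0∞)⁻¹ * ∑ y ∈ S.C, η (rightTranslate n g y) := by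
  unfold HSet.Te; rw [S.sum_congr_pr η (pr_rep (pr g))]

lemma HSet.T_rt (S : HSet n) (η : XSpace n → ℝ) (g : SLR n) (x : XSpace n) :
    S.T η (rightTranslate n g x) = S.T (fun y => η (rightTranslate n g y)) x := by
  obtain ⟨h, rfl⟩ := pr_surj x
  simp only [rt_pr, S.T_pr, rt_mul]

lemma HSet.Te_rt (S : HSet n) (η : XSpace n → ℝ≥0∞) (g : SLR n) (x : XSpace n) :
    S.Te η (rightTranslate n g x) = S.Te (fun y => η (rightTranslate n g y)) x := by
  obtain ⟨h, rfl⟩ := pr_surj x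
  simp only [rt_pr, S.Te_pr, rt_mul]

lemma HSet.Te_one (S : HSet n) (c : ℝ≥0∞) (x : XSpace n) : S.Te (fun _ => c) x = c := by
  unfold HSet.Te
  rw [Finset.sum_const, nsmul_eq_mul, ← mul_assoc, ENNReal.inv_mul_cancel, one_mul]
  · simpa using S.nonempty.ne_empty
  · simp

lemma HSet.T_const (S : HSet n) (c : ℝ) (x : XSpace n) : S.T (fun _ => c) x = c := by
  unfold HSet.T
  rw [Finset.sum_const, nsmul_eq_mul, ← mul_assoc, inv_mul_cancel₀, one_mul]
  simpa using S.nonempty.ne_empty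

lemma HSet.T_mono (S : HSet n) {f g : XSpace n → ℝ} (h : ∀ x, f x ≤ g x) (x : XSpace n) :
    S.T f x ≤ S.T g x := by
  unfold HSet.T
  gcongr with y _
  exact h _

lemma HSet.Te_mono (S : HSet n) {f g : XSpace n → ℝ≥0∞} (h : ∀ x, f x ≤ g x) (x : XSpace n) :
    S.Te f x ≤ S.Te g x := by
  unfold HSet.Te
  gcongr with y _
  exact h _

lemma HSet.T_add (S : HSet n) (f g : XSpace n → ℝ) (x : XSpace n) :
    S.T (fun y => f y + g y) x = S.T f x + S.T g x := by
  unfold HSet.T; rw [Finset.sum_add_distrib, mul_add]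

lemma HSet.T_sub (S : HSet n) (f g : XSpace n → ℝ) (x : XSpace n) :
    S.T (fun y => f y - g y) x = S.T f x - S.T g x := by
  unfold HSet.T; rw [Finset.sum_sub_distrib, mul_sub]

lemma HSet.T_abs (S : HSet n) (f : XSpace n → ℝ) (x : XSpace n) :
    |S.T f x| ≤ S.T (fun y => |f y|) x := by
  unfold HSet.T
  rw [abs_mul, abs_of_nonneg (by positivity : (0 : ℝ) ≤ (S.C.card : ℝ)⁻¹)]
  gcongr
  exact Finset.abs_sum_le_sum_abs _ _

lemma HSet.T_nonneg (S : HSet n) {f : XSpace n → ℝ} (hf : ∀ x, 0 ≤ f x) (x : XSpace n) :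
    0 ≤ S.T f x := by
  have := S.T_mono hf x
  rwa [S.T_const] at this

lemma HSet.ofReal_T (S : HSet n) {f : XSpace n → ℝ} (hf : ∀ x, 0 ≤ f x) (x : XSpace n) :
    ENNReal.ofReal (S.T f x) = S.Te (fun y => ENNReal.ofReal (f y)) x := by
  unfold HSet.T HSet.Te
  rw [ENNReal.ofReal_mul (by positivity), ENNReal.ofReal_sum_of_nonneg (fun _ _ => hf _),
    ENNReal.ofReal_inv_of_pos (by exact_mod_cast S.card_pos), ENNReal.ofReal_natCast]

lemma HSet.T_finset_sum (S : HSet n) {ι : Type*} (s : Finset ι) (f : ι → XSpace n → ℝ) (x : XSpace n) :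
    S.T (fun y => ∑ i ∈ s, f i y) x = ∑ i ∈ s, S.T (f i) x := by
  unfold HSet.T
  rw [Finset.sum_comm, Finset.mul_sum]

lemma HSet.T_const_mul (S : HSet n) (c : ℝ) (f : XSpace n → ℝ) (x : XSpace n) :
    S.T (fun y => c * f y) x = c * S.T f x := by
  unfold HSet.T
  rw [← Finset.mul_sum]; ring

/-- invariance at points fixed by a translation -/
lemma HSet.T_fix (S : HSet n) (f : XSpace n → ℝ) {x : XSpace n} {g : SLR n}
    (h : rightTranslate n g x = x) : S.T (fun y => f (rightTranslate n g y)) x = S.T f x := by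
  rw [← S.T_rt, h]

lemma HSet.continuous_T (S : HSet n) {f : XSpace n → ℝ} (hf : Continuous f) : Continuous (S.T f) := by
  rw [continuous_X_iff]
  simp only [S.T_pr]
  refine continuous_const.mul (continuous_finsetSum _ fun y _ => hf.comp ?_)
  exact continuous_rt2.comp (by fun_prop : Continuous fun g : SLR n => (y, g))

lemma HSet.measurable_Te (S : HSet n) {f : XSpace n → ℝ≥0∞} (hf : Measurable f) :
    Measurable (S.Te f) := by
  rw [measurable_X_iff]
  simp only [S.Te_pr]
  refine measurable_const.mul (Finset.measurable_fun_sum _ fun y _ => hf.comp ?_)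
  exact (continuous_rt2.comp (by fun_prop : Continuous fun g : SLR n => (y, g))).measurable

def HSet.ker (S : HSet n) (x : XSpace n) : Measure (XSpace n × XSpace n) :=
  (S.C.card : ℝ≥0∞)⁻¹ • ∑ y ∈ S.C, Measure.dirac (x, rightTranslate n (rep x) y)

lemma HSet.lintegral_ker (S : HSet n) {Φ : XSpace n × XSpace n → ℝ≥0∞} (hΦ : Measurable Φ)
    (x : XSpace n) : ∫⁻ z, Φ z ∂(S.ker x) = S.Te (fun y => Φ (x, y)) x := by
  unfold HSet.ker HSet.Te
  rw [lintegral_smul_measure, lintegral_finsetSum_measure, smul_eq_mul]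
  congr 1
  exact Finset.sum_congr rfl fun y _ => lintegral_dirac' _ hΦ

lemma HSet.measurable_Te2 (S : HSet n) {Φ : XSpace n × XSpace n → ℝ≥0∞} (hΦ : Measurable Φ) :
    Measurable (fun x => S.Te (fun y => Φ (x, y)) x) := by
  rw [measurable_X_iff]
  simp only [S.Te_pr]
  refine measurable_const.mul (Finset.measurable_fun_sum _ fun y _ => hΦ.comp ?_)
  exact continuous_pr.measurable.prodMk
    (continuous_rt2.comp (by fun_prop : Continuous fun g : SLR n => (y, g))).measurable

lemma HSet.measurable_ker (S : HSet n) : Measurable S.ker := by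
  refine Measure.measurable_of_measurable_coe _ fun A hA => ?_
  have : (fun x => S.ker x A) = fun x => S.Te (fun y => A.indicator 1 (x, y)) x := by
    funext x
    rw [← S.lintegral_ker (measurable_one.indicator hA), lintegral_indicator_one hA]
  rw [this]
  exact S.measurable_Te2 (measurable_one.indicator hA)

def HSet.J (S : HSet n) (μ : Measure (XSpace n)) : Measure (XSpace n × XSpace n) := μ.bind S.ker

lemma HSet.lintegral_J (S : HSet n) (μ : Measure (XSpace n)) {Φ : XSpace n × XSpace n → ℝ≥0∞}
    (hΦ : Measurable Φ) : ∫⁻ z, Φ z ∂(S.J μ) = ∫⁻ x, S.Te (fun y => Φ (x, y)) x ∂μ := by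
  unfold HSet.J
  rw [Measure.lintegral_bind S.measurable_ker.aemeasurable hΦ.aemeasurable]
  exact lintegral_congr fun x => S.lintegral_ker hΦ x

def act2 (z : XSpace n × XSpace n) (g : SLR n) : XSpace n × XSpace n :=
  (rightTranslate n g z.1, rightTranslate n g z.2)

lemma measurable_act2 : Measurable (Function.uncurry (act2 (n := n))) := by
  apply Continuous.measurable
  unfold act2 Function.uncurry
  apply Continuous.prodMk
  · exact continuous_rt2.comp (by fun_prop : Continuous fun q : (XSpace n × XSpace n) × SLR n => (q.1.1, q.2))
  · exact continuous_rt2.comp (by fun_prop : Continuous fun q : (XSpace n × XSpace n) × SLR n => (q.1.2, q.2))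

lemma measurable_act2' (g : SLR n) : Measurable (fun z => act2 (n := n) z g) :=
  measurable_act2.comp (measurable_id.prodMk measurable_const)

lemma HSet.J_prob (S : HSet n) (μ : Measure (XSpace n)) [IsProbabilityMeasure μ] :
    IsProbabilityMeasure (S.J μ) := by
  constructor
  have := S.lintegral_J μ (Φ := fun _ => 1) measurable_const
  simpa [S.Te_one] using this

lemma HSet.J_inv (S : HSet n) (μ : Measure (XSpace n))
    (hinv : ∀ g, Measure.map (rightTranslate n g) μ = μ) (g : SLR n) :
    (S.J μ).map (fun z => act2 z g) = S.J μ := by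
  ext A hA
  rw [← lintegral_indicator_one hA, ← lintegral_indicator_one hA,
    lintegral_map (measurable_one.indicator hA) (measurable_act2' g),
    S.lintegral_J μ (measurable_one.indicator hA), S.lintegral_J μ
      (Φ := fun z => A.indicator 1 (act2 z g)) ((measurable_one.indicator hA).comp (measurable_act2' g))]
  conv_rhs => rw [← hinv g, lintegral_map (S.measurable_Te2 (measurable_one.indicator hA)) (measurable_rt g)]
  refine lintegral_congr fun x => ?_
  rw [S.Te_rt]
  rfl

lemma HSet.J_orbit (S : HSet n) (μ : Measure (XSpace n)) :
    ∀ᵐ z ∂(S.J μ), ∃ g, z = (pr g, pr (S.d * g)) := by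
  set O : Set (XSpace n × XSpace n) := {z | ∃ g, z = (pr g, pr (S.d * g))} with hO
  have hmem : ∀ (g : SLR n) (y : XSpace n), (pr g, y) ∈ O ↔ ∃ c ∈ S.C, y = rightTranslate n g c := by
    intro g y
    constructor
    · rintro ⟨h, hh⟩
      have h1 : pr g = pr h := (Prod.ext_iff.1 hh).1
      have h2 : y = pr (S.d * h) := (Prod.ext_iff.1 hh).2
      rw [pr_eq] at h1
      refine ⟨pr (S.d * (h * g⁻¹)), (S.mem_iff _).2 ⟨_, h1, rfl⟩, ?_⟩
      rw [h2, rt_pr]; congr 1; group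
    · rintro ⟨c, hc, rfl⟩
      obtain ⟨γ, hγ, rfl⟩ := (S.mem_iff _).1 hc
      refine ⟨γ * g, ?_⟩
      rw [pr_gamma hγ, rt_pr, mul_assoc]
  have hclosed : IsClosed O := by
    have h : IsOpenQuotientMap (Prod.map (pr : SLR n → XSpace n) (id : XSpace n → XSpace n)) :=
      isQuotientMap_pr.prodMap IsOpenQuotientMap.id
    rw [← h.isQuotientMap.isClosed_preimage]
    have : (Prod.map (pr : SLR n → XSpace n) (id : XSpace n → XSpace n)) ⁻¹' O =
        ⋃ c ∈ S.C, {q : SLR n × XSpace n | q.2 = rightTranslate n q.1 c} := by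
      ext ⟨g, y⟩
      simp [hmem]
    rw [this]
    refine Set.Finite.isClosed_biUnion S.C.finite_toSet fun c _ => ?_
    exact isClosed_eq continuous_snd
      (continuous_rt2.comp (by fun_prop : Continuous fun q : SLR n × XSpace n => (c, q.1)))
  have hm : MeasurableSet Oᶜ := hclosed.measurableSet.compl
  change S.J μ Oᶜ = 0
  rw [← lintegral_indicator_one hm, S.lintegral_J μ (measurable_one.indicator hm)]
  simp only [lintegral_eq_zero_iff (S.measurable_Te2 (measurable_one.indicator hm))]
  refine Filter.Eventually.of_forall fun x => ?_
  obtain ⟨g, rfl⟩ := pr_surj x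
  change S.Te (fun y => Oᶜ.indicator 1 (pr g, y)) (pr g) = 0
  rw [S.Te_pr]
  simp only [mul_eq_zero]
  right
  refine Finset.sum_eq_zero fun c hc => ?_
  apply Set.indicator_of_notMem
  intro hn
  exact hn ((hmem _ _).2 ⟨c, hc, rfl⟩)

lemma haar_ne_zero : (Measure.haar : Measure (SLR n)) ≠ 0 :=
  (inferInstance : NeZero (Measure.haar : Measure (SLR n))).out

theorem hecke_adjoint (S S' : HSet n) (hd : S'.d = S.d⁻¹) (μ : Measure (XSpace n))
    [IsProbabilityMeasure μ] (hinv : ∀ g, Measure.map (rightTranslate n g) μ = μ)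
    {F K : XSpace n → ℝ≥0∞} (hF : Measurable F) (hK : Measurable K) :
    ∫⁻ x, F x * S.Te K x ∂μ = ∫⁻ x, S'.Te F x * K x ∂μ := by
  have hp1 := S.J_prob μ
  have hp2 := S'.J_prob μ
  have hp3 : IsProbabilityMeasure ((S'.J μ).map Prod.swap) :=
    Measure.isProbabilityMeasure_map measurable_swap.aemeasurable
  have key : S.J μ = (S'.J μ).map Prod.swap := by
    refine invariant_unique (act2 (n := n)) measurable_act2 ?_ ?_ Measure.haar haar_ne_zero _ _
      (S.J_inv μ hinv) ?_ (pr 1, pr S.d) ?_ ?_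
    · intro z g h; simp [act2, rt_mul]
    · intro z; simp [act2]
    · intro g
      rw [Measure.map_map (measurable_act2' g) measurable_swap]
      conv_rhs => rw [← S'.J_inv μ hinv g, Measure.map_map measurable_swap (measurable_act2' g)]
      rfl
    · filter_upwards [S.J_orbit μ] with z hz
      obtain ⟨g, rfl⟩ := hz
      exact ⟨g, by simp [act2]⟩
    · have := S'.J_orbit μ
      refine (MeasurableEquiv.prodComm.measurableEmbedding.ae_map_iff
        (p := fun z : XSpace n × XSpace n => ∃ g, z = act2 (pr 1, pr S.d) g)).2 ?_
      filter_upwards [this] with z hz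
      obtain ⟨g, rfl⟩ := hz
      refine ⟨S.d⁻¹ * g, ?_⟩
      simp [act2, hd, MeasurableEquiv.prodComm]
  have e1 := S.lintegral_J μ (Φ := fun z => F z.1 * K z.2)
    ((hF.comp measurable_fst).mul (hK.comp measurable_snd))
  rw [key, lintegral_map (f := fun z => F z.1 * K z.2) ((hF.comp measurable_fst).mul (hK.comp measurable_snd)) measurable_swap,
    S'.lintegral_J μ (Φ := fun z => F z.swap.1 * K z.swap.2)
    ((hF.comp measurable_snd).mul (hK.comp measurable_fst))] at e1
  have t1 : ∀ x, S.Te (fun y => F x * K y) x = F x * S.Te K x := by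
    intro x; unfold HSet.Te; rw [← Finset.mul_sum]; ring
  have t2 : ∀ x, S'.Te (fun y => F y * K x) x = S'.Te F x * K x := by
    intro x; unfold HSet.Te; rw [← Finset.sum_mul]; ring
  simpa [t1, t2] using e1.symm

theorem hecke_lintegral (S S' : HSet n) (hd : S'.d = S.d⁻¹) (μ : Measure (XSpace n))
    [IsProbabilityMeasure μ] (hinv : ∀ g, Measure.map (rightTranslate n g) μ = μ)
    {K : XSpace n → ℝ≥0∞} (hK : Measurable K) :
    ∫⁻ x, S.Te K x ∂μ = ∫⁻ x, K x ∂μ := by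
  have := hecke_adjoint S S' hd μ hinv (F := fun _ => 1) measurable_const hK
  simpa [S'.Te_one] using this

end Hecke

end ModuleB3

section ModuleB4
open Matrix MeasureTheory Topology
open scoped ENNReal

section Transv
variable {ι F : Type*} [DecidableEq ι] [Fintype ι] [Field F]
open Matrix.SpecialLinearGroup

lemma transv_apply (i j k l : ι) (b : F) : Matrix.transvection i j b k l =
    (if k = l then 1 else 0) + if i = k ∧ j = l then b else 0 := by
  simp [Matrix.transvection, Matrix.one_apply, Matrix.single_apply]

lemma diag2n_decompose {i j : ι} (hij : i ≠ j) (a : F) (ha : a ≠ 0) :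
    diag2n hij a ha = transvection hij a * (transvection hij.symm (- a⁻¹) * (transvection hij a *
      (transvection hij (-1) * (transvection hij.symm 1 * transvection hij (-1))))) := by
  refine Matrix.SpecialLinearGroup.ext _ _ fun k l => ?_
  change (diag2n hij a ha).1 k l = (Matrix.transvection i j a * (Matrix.transvection j i (- a⁻¹) * (Matrix.transvection i j a *
      (Matrix.transvection i j (-1) * (Matrix.transvection j i 1 * Matrix.transvection i j (-1))))) : Matrix ι ι F) k l
  rw [diag2n_coe]
  have hji := hij.symm
  by_cases hi : k = i
  · subst hi
    by_cases hl : l = k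
    · subst hl
      simp [Matrix.transvection_mul_apply_same, Matrix.transvection_mul_apply_of_ne, hij, hji, transv_apply, ha]
      try field_simp
      try ring
    · by_cases hl2 : l = j
      · subst hl2
        simp [Matrix.transvection_mul_apply_same, Matrix.transvection_mul_apply_of_ne, hij, hji, transv_apply, ha]
        try field_simp
        try ring
      · simp [Matrix.transvection_mul_apply_same, Matrix.transvection_mul_apply_of_ne, hij, hji, transv_apply, ha,
          Matrix.one_apply, Matrix.single_apply, Ne.symm hl, Ne.symm hl2]
  · by_cases hj : k = j
    · subst hj
      by_cases hl : l = k
      · subst hl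
        simp [Matrix.transvection_mul_apply_same, Matrix.transvection_mul_apply_of_ne, hij, hji, transv_apply, ha]
        try field_simp
        try ring
      · by_cases hl2 : l = i
        · subst hl2
          simp [Matrix.transvection_mul_apply_same, Matrix.transvection_mul_apply_of_ne, hij, hji, transv_apply, ha]
          try field_simp
          try ring
        · simp [Matrix.transvection_mul_apply_same, Matrix.transvection_mul_apply_of_ne, hij, hji, transv_apply, ha,
            Matrix.one_apply, Matrix.single_apply, Ne.symm hl, Ne.symm hl2]
    · simp [Matrix.transvection_mul_apply_of_ne, hi, hj, transv_apply, Matrix.single_apply, Ne.symm hi,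
        Matrix.diagonal_apply, Matrix.one_apply]

lemma mem_of_transvection_mem [Nontrivial ι] (H : Submonoid (SpecialLinearGroup ι F))
    (h : ∀ (i j : ι) (hij : i ≠ j) (a : F), transvection hij a ∈ H) (M : SpecialLinearGroup ι F) :
    M ∈ H := by
  refine diagonal_transvection_induction' (fun M => M ∈ H) M ?_ h (fun A B hA hB => H.mul_mem hA hB)
  intro i j hij c hc
  rw [diag2n_decompose]
  have := h i j hij
  have := h j i hij.symm
  refine H.mul_mem ?_ (H.mul_mem ?_ (H.mul_mem ?_ (H.mul_mem ?_ (H.mul_mem ?_ ?_)))) <;> apply_assumption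

end Transv

section Mautner
variable {n : ℕ}
open Matrix.SpecialLinearGroup

/-- transvection -/
abbrev tv {i j : Fin n} (hij : i ≠ j) (c : ℝ) : SLR n := SpecialLinearGroup.transvection hij c

lemma continuous_tv {i j : Fin n} (hij : i ≠ j) : Continuous (fun c : ℝ => tv hij c) := by
  apply continuous_toSLR
  intro a b
  simp only [tv, SpecialLinearGroup.transvection, Matrix.transvection, Matrix.add_apply, Matrix.single_apply]
  apply continuous_const.add
  split_ifs <;> fun_prop

lemma tv_zero {i j : Fin n} (hij : i ≠ j) : tv hij 0 = 1 := transvection_coeff_zero hij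

lemma mautner_diag {i0 i1 : Fin n} (h01 : i0 ≠ i1) (M : ℝ) (hM : M ≠ 0) :
    diag2n h01 (2⁻¹ : ℝ) (by norm_num) = tv h01.symm (2 * M) * (tv h01 (1 / (2 * M)) *
      (tv h01.symm (-M) * tv h01 (-(1 / M)))) := by
  have hij := h01
  have hji := h01.symm
  refine Matrix.SpecialLinearGroup.ext _ _ fun k l => ?_
  change (diag2n h01 (2⁻¹ : ℝ) (by norm_num)).1 k l = (Matrix.transvection i1 i0 (2 * M) * (Matrix.transvection i0 i1 (1 / (2 * M)) *
      (Matrix.transvection i1 i0 (-M) * Matrix.transvection i0 i1 (-(1 / M))))) k l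
  rw [diag2n_coe]
  by_cases hi : k = i0
  · subst hi
    by_cases hl : l = k
    · subst hl
      simp [Matrix.transvection_mul_apply_same, Matrix.transvection_mul_apply_of_ne, hij, hji, transv_apply, hM]
      try field_simp
      try ring
    · by_cases hl2 : l = i1
      · subst hl2
        simp [Matrix.transvection_mul_apply_same, Matrix.transvection_mul_apply_of_ne, hij, hji, transv_apply]
        try field_simp
        try ring
      · simp [Matrix.transvection_mul_apply_same, Matrix.transvection_mul_apply_of_ne, hij, hji, transv_apply, 
          Matrix.one_apply, Matrix.single_apply, Ne.symm hl, Ne.symm hl2]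
  · by_cases hj : k = i1
    · subst hj
      by_cases hl : l = k
      · subst hl
        simp [Matrix.transvection_mul_apply_same, Matrix.transvection_mul_apply_of_ne, hij, hji, transv_apply]
        try field_simp
        try ring
      · by_cases hl2 : l = i0
        · subst hl2
          simp [Matrix.transvection_mul_apply_same, Matrix.transvection_mul_apply_of_ne, hij, hji, transv_apply]
          try field_simp
          try ring
        · simp [Matrix.transvection_mul_apply_same, Matrix.transvection_mul_apply_of_ne, hij, hji, transv_apply,
            Matrix.one_apply, Matrix.single_apply, Ne.symm hl, Ne.symm hl2]
    · simp [Matrix.transvection_mul_apply_of_ne, hi, hj, transv_apply, Matrix.single_apply, Ne.symm hi,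
        Matrix.diagonal_apply, Matrix.one_apply, Ne.symm hj]

lemma diag_conj {i0 i1 : Fin n} (h01 : i0 ≠ i1) {i j : Fin n} (hij : i ≠ j) (t : ℝ) :
    diag2n h01 (2⁻¹ : ℝ) (by norm_num) * tv hij t * (diag2n h01 (2⁻¹ : ℝ) (by norm_num))⁻¹ =
     tv hij ((if i = i0 then 2⁻¹ else if i = i1 then 2 else 1) /
      (if j = i0 then 2⁻¹ else if j = i1 then 2 else 1) * t) := by
  rw [mul_inv_eq_iff_eq_mul]
  refine Matrix.SpecialLinearGroup.ext _ _ fun k l => ?_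
  change ((diag2n h01 (2⁻¹ : ℝ) (by norm_num)).1 * Matrix.transvection i j t) k l = (Matrix.transvection i j _ *
    (diag2n h01 (2⁻¹ : ℝ) (by norm_num)).1 : Matrix (Fin n) (Fin n) ℝ) k l
  rw [diag2n_coe]
  rw [Matrix.diagonal_mul, Matrix.mul_diagonal]
  simp only [Matrix.transvection, Matrix.add_apply, Matrix.one_apply, Matrix.single_apply]
  by_cases hk : i = k
  · subst hk
    by_cases hl : j = l
    · subst hl
      simp only [hij, if_false, and_self, if_true, zero_add, inv_inv]
      have : (if j = i0 then (2⁻¹:ℝ) else if j = i1 then 2 else 1) ≠ 0 := by split_ifs <;> norm_num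
      field_simp
    · simp only [hl, and_false, if_false, add_zero]
      by_cases h : i = l
      · subst h; ring
      · simp [h]
  · simp only [hk, false_and, if_false, add_zero]
    by_cases h : k = l
    · subst h; ring
    · simp [h]

lemma tv_comm {i k j : Fin n} (hik : i ≠ k) (hkj : k ≠ j) (hij : i ≠ j) (t : ℝ) :
    tv hij t = tv hik t * tv hkj 1 * (tv hik t)⁻¹ * (tv hkj 1)⁻¹ := by
  rw [eq_mul_inv_iff_mul_eq, eq_mul_inv_iff_mul_eq]
  apply Subtype.ext
  change Matrix.transvection i j t * Matrix.transvection k j 1 * Matrix.transvection i k t =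
    Matrix.transvection i k t * Matrix.transvection k j 1
  simp only [Matrix.transvection]
  simp only [mul_add, add_mul, mul_one, one_mul]
  simp [Matrix.single_mul_single_same, Matrix.single_mul_single_of_ne, hik, hkj, hij, hij.symm, hik.symm, hkj.symm]
  abel

theorem mautner {i0 i1 : Fin n} (h01 : i0 ≠ i1) (N : SLR n → ℝ) (hN0 : ∀ g, 0 ≤ N g)
    (hmul : ∀ g h, N (g * h) ≤ N g + N h) (hinv : ∀ g, N g⁻¹ = N g)
    (hcont : ContinuousAt N 1) (hone : N 1 = 0) (hu : N (tv h01.symm 1) = 0) (g : SLR n) : N g = 0 := by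
  have : Nontrivial (Fin n) := ⟨i0, i1, h01⟩
  let Z : Subgroup (SLR n) :=
    { carrier := {g | N g = 0}
      one_mem' := hone
      mul_mem' := by
        intro a b ha hb
        have := hmul a b
        simp only [Set.mem_setOf_eq] at ha hb ⊢
        linarith [hN0 (a * b)]
      inv_mem' := by
        intro a ha
        simp only [Set.mem_setOf_eq] at ha ⊢
        rw [hinv, ha] }
  have hZ : ∀ g, g ∈ Z ↔ N g = 0 := fun g => Iff.rfl
  have htend : ∀ {i j : Fin n} (hij : i ≠ j) {u : ℕ → ℝ}, Filter.Tendsto u Filter.atTop (𝓝 0) →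
      Filter.Tendsto (fun k => N (tv hij (u k))) Filter.atTop (𝓝 0) := by
    intro i j hij u hu
    have h1 : Filter.Tendsto (fun k => tv hij (u k)) Filter.atTop (𝓝 1) := by
      rw [← tv_zero hij]
      exact (continuous_tv hij).continuousAt.tendsto.comp hu
    have h2 := hcont.tendsto.comp h1
    rw [hone] at h2
    exact h2
  have hL : ∀ k : ℤ, tv h01.symm (k : ℝ) ∈ Z := by
    intro k
    have h1 : ∀ m : ℕ, tv h01.symm (m : ℝ) ∈ Z := by
      intro m
      induction m with
      | zero => simpa using Z.one_mem
      | succ m ih =>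
        have : tv h01.symm ((m + 1 : ℕ) : ℝ) = tv h01.symm (m : ℝ) * tv h01.symm 1 := by
          rw [Nat.cast_add, Nat.cast_one]; exact transvection_add _ _ _
        rw [this]
        exact Z.mul_mem ih hu
    obtain ⟨m, rfl | rfl⟩ := k.eq_nat_or_neg
    · exact_mod_cast h1 m
    · have := Z.inv_mem (h1 m)
      rw [transvection_inv] at this
      simpa using this
  have hD : diag2n h01 (2⁻¹ : ℝ) (by norm_num) ∈ Z := by
    rw [hZ]
    apply le_antisymm _ (hN0 _)
    have hb : ∀ k : ℕ, N (diag2n h01 (2⁻¹ : ℝ) (by norm_num)) ≤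
        N (tv h01 (1 / (2 * ((k : ℝ) + 1)))) + N (tv h01 (-(1 / ((k : ℝ) + 1)))) := by
      intro k
      have hk : ((k : ℝ) + 1) ≠ 0 := by positivity
      rw [mautner_diag h01 _ hk]
      have e1 : N (tv h01.symm (2 * ((k : ℝ) + 1))) = 0 := by
        have := hL (2 * ((k : ℤ) + 1)); rw [hZ] at this; push_cast at this; exact this
      have e2 : N (tv h01.symm (-((k : ℝ) + 1))) = 0 := by
        have := hL (-((k : ℤ) + 1)); rw [hZ] at this; push_cast at this; exact this
      refine (hmul _ _).trans ?_
      rw [e1, zero_add]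
      refine (hmul _ _).trans ?_
      gcongr
      refine (hmul _ _).trans ?_
      rw [e2, zero_add]
    refine ge_of_tendsto' (x := Filter.atTop) ?_ hb
    have t0 : Filter.Tendsto (fun k : ℕ => 1 / ((k : ℝ) + 1)) Filter.atTop (𝓝 0) :=
      tendsto_one_div_add_atTop_nhds_zero_nat
    have t1 : Filter.Tendsto (fun k : ℕ => 1 / (2 * ((k : ℝ) + 1))) Filter.atTop (𝓝 0) := by
      have := t0.const_mul (1/2)
      simp only [mul_zero] at this
      refine this.congr fun k => ?_
      field_simp
    have t2 : Filter.Tendsto (fun k : ℕ => -(1 / ((k : ℝ) + 1))) Filter.atTop (𝓝 0) := by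
      simpa using t0.neg
    simpa using (htend h01 t1).add (htend h01 t2)
  have hscale : ∀ {i j : Fin n} (hij : i ≠ j) (r : ℝ), 0 < r → r < 1 → (∀ t, N (tv hij t) = N (tv hij (r * t))) →
      ∀ t, tv hij t ∈ Z := by
    intro i j hij r h0 h1 hs t
    have hk : ∀ k : ℕ, N (tv hij t) = N (tv hij (r ^ k * t)) := by
      intro k
      induction k with
      | zero => simp
      | succ k ih => rw [ih, hs, pow_succ']; congr 2; ring
    have := htend hij (u := fun k => r ^ k * t) (by
      simpa using (tendsto_pow_atTop_nhds_zero_of_lt_one h0.le h1).mul_const t)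
    have h2 : Filter.Tendsto (fun k : ℕ => N (tv hij t)) Filter.atTop (𝓝 0) :=
      this.congr fun k => (hk k).symm
    exact tendsto_nhds_unique tendsto_const_nhds h2
  have hconj : ∀ z ∈ Z, ∀ g, N (z * g * z⁻¹) = N g := by
    have : ∀ z ∈ Z, ∀ g, N (z * g * z⁻¹) ≤ N g := by
      intro z hz g
      have h1 := hmul (z * g) z⁻¹
      have h2 := hmul z g
      rw [hinv, (hZ z).1 hz] at h1
      rw [(hZ z).1 hz] at h2
      linarith
    intro z hz g
    refine le_antisymm (this z hz g) ?_
    have := this z⁻¹ (Z.inv_mem hz) (z * g * z⁻¹)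
    have e : z⁻¹ * (z * g * z⁻¹) * z⁻¹⁻¹ = g := by group
    rwa [e] at this
  have hmix : ∀ {i j : Fin n} (hij : i ≠ j), (i = i0 ∨ i = i1 ∨ j = i0 ∨ j = i1) → ∀ t, tv hij t ∈ Z := by
    intro i j hij hc
    set r : ℝ := (if i = i0 then 2⁻¹ else if i = i1 then 2 else 1) /
      (if j = i0 then 2⁻¹ else if j = i1 then 2 else 1) with hr
    have hs : ∀ t, N (tv hij t) = N (tv hij (r * t)) := by
      intro t
      rw [hr, ← diag_conj h01 hij, hconj _ hD]
    have hr0 : 0 < r := by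
      rw [hr]; split_ifs <;> norm_num
    have hr1 : r ≠ 1 := by
      rw [hr]
      split_ifs <;> first | (norm_num; done) | (exfalso; clear hs hr; clear_value r; subst_vars; tauto) | (exfalso; tauto)
    rcases lt_or_gt_of_ne hr1 with h | h
    · exact hscale hij r hr0 h hs
    · refine hscale hij r⁻¹ (inv_pos.2 hr0) (inv_lt_one_of_one_lt₀ h) fun t => ?_
      rw [hs (r⁻¹ * t)]
      congr 2
      field_simp
  refine mem_of_transvection_mem Z.toSubmonoid ?_ g
  intro i j hij t
  by_cases hc : (i = i0 ∨ i = i1 ∨ j = i0 ∨ j = i1)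
  · exact hmix hij hc t
  · push Not at hc
    change tv hij t ∈ Z
    rw [tv_comm hc.1 hc.2.2.1.symm hij]
    have h1 := hmix hc.1 (by simp) t
    have h2 := hmix hc.2.2.1.symm (by simp) 1
    exact Z.mul_mem (Z.mul_mem (Z.mul_mem h1 h2) (Z.inv_mem h1)) (Z.inv_mem h2)
end Mautner

end ModuleB4

section ModuleB5
open Matrix MeasureTheory Topology
open scoped ENNReal

section MET
variable {n : ℕ}

instance : LocallyCompactSpace (XSpace n) := by
  have : WeaklyLocallyCompactSpace (XSpace n) := ⟨fun x => by
    obtain ⟨g, rfl⟩ := pr_surj x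
    obtain ⟨s, hs, hn⟩ := exists_compact_mem_nhds g
    exact ⟨pr '' s, hs.image continuous_pr, isOpenMap_pr.image_mem_nhds hn⟩⟩
  infer_instance

lemma mp_rt {μ : Measure (XSpace n)} (hinv : ∀ g, Measure.map (rightTranslate n g) μ = μ) (g : SLR n) :
    MeasurePreserving (rightTranslate n g) μ μ := ⟨measurable_rt g, hinv g⟩

/-- Birkhoff averages along powers of `u`. -/
def AK (u : SLR n) (K : ℕ) (η : XSpace n → ℝ) (x : XSpace n) : ℝ :=
  (K : ℝ)⁻¹ * ∑ k ∈ Finset.range K, η (rightTranslate n (u ^ k) x)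

lemma continuous_AK (u : SLR n) (K : ℕ) {η : XSpace n → ℝ} (hη : Continuous η) : Continuous (AK u K η) := by
  unfold AK
  refine continuous_const.mul (continuous_finsetSum _ fun k _ => hη.comp (continuous_rt _))

lemma AK_bound (u : SLR n) (K : ℕ) {η : XSpace n → ℝ} {B : ℝ} (hB0 : 0 ≤ B) (hb : ∀ x, |η x| ≤ B) (x) : |AK u K η x| ≤ B := by
  unfold AK
  rcases K.eq_zero_or_pos with rfl | hK
  · simpa using hB0
  rw [abs_mul, abs_of_nonneg (by positivity)]
  have : |∑ k ∈ Finset.range K, η (rightTranslate n (u ^ k) x)| ≤ K * B := by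
    refine (Finset.abs_sum_le_sum_abs _ _).trans ?_
    refine (Finset.sum_le_sum fun k _ => hb _).trans ?_
    simp
  calc _ ≤ (K : ℝ)⁻¹ * (K * B) := by gcongr
    _ = B := by field_simp

lemma rt_pow_succ (u : SLR n) (k : ℕ) (x) :
    rightTranslate n (u ^ k) (rightTranslate n u x) = rightTranslate n (u ^ (k+1)) x := by
  rw [← rt_mul, pow_succ']

lemma rho_cont {μ : Measure (XSpace n)} [IsProbabilityMeasure μ]
    (hinv : ∀ g, Measure.map (rightTranslate n g) μ = μ) (φ : Lp ℝ 2 μ) :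
    Continuous (fun g : SLR n => Lp.compMeasurePreserving (rightTranslate n g) (mp_rt hinv g) φ) := by
  let F : C(SLR n, C(XSpace n, XSpace n)) :=
    (ContinuousMap.mk (fun q : SLR n × XSpace n => rightTranslate n q.1 q.2)
      (continuous_rt2.comp continuous_swap)).curry
  exact (continuous_const (y := φ)).compMeasurePreservingLp F.continuous (fun g => mp_rt hinv g) (by norm_num)

lemma rho_mul {μ : Measure (XSpace n)} 
    (hinv : ∀ g, Measure.map (rightTranslate n g) μ = μ) (φ : Lp ℝ 2 μ) (g h : SLR n) :
    Lp.compMeasurePreserving (rightTranslate n (g * h)) (mp_rt hinv _) φ =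
      Lp.compMeasurePreserving (rightTranslate n g) (mp_rt hinv g)
       (Lp.compMeasurePreserving (rightTranslate n h) (mp_rt hinv h) φ) := by
  rw [← Lp.compMeasurePreserving_comp_apply]
  congr 2
  funext x
  exact rt_mul g h x

lemma rho_one {μ : Measure (XSpace n)} 
    (hinv : ∀ g, Measure.map (rightTranslate n g) μ = μ) (φ : Lp ℝ 2 μ) :
    Lp.compMeasurePreserving (rightTranslate n 1) (mp_rt hinv _) φ = φ := by
  conv_rhs => rw [← Lp.compMeasurePreserving_id_apply φ]
  congr 2
  funext x
  exact rt_one x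

lemma fixed_const {μ : Measure (XSpace n)} [IsProbabilityMeasure μ]
    (hinv : ∀ g, Measure.map (rightTranslate n g) μ = μ) {i0 i1 : Fin n} (h01 : i0 ≠ i1) (φ : Lp ℝ 2 μ)
    (hφ : Lp.compMeasurePreserving (rightTranslate n (tv h01.symm 1)) (mp_rt hinv _) φ = φ) :
    ∃ c : ℝ, ∀ᵐ x ∂μ, φ x = c := by
  have hN : ∀ g : SLR n, ‖Lp.compMeasurePreserving (rightTranslate n g) (mp_rt hinv g) φ - φ‖ = 0 := by
    refine mautner h01 _ (fun g => norm_nonneg _) ?_ ?_ ?_ ?_ ?_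
    · intro g h
      rw [rho_mul hinv]
      have : Lp.compMeasurePreserving (rightTranslate n g) (mp_rt hinv g)
          (Lp.compMeasurePreserving (rightTranslate n h) (mp_rt hinv h) φ) - φ =
          Lp.compMeasurePreserving (rightTranslate n g) (mp_rt hinv g)
          (Lp.compMeasurePreserving (rightTranslate n h) (mp_rt hinv h) φ - φ) +
          (Lp.compMeasurePreserving (rightTranslate n g) (mp_rt hinv g) φ - φ) := by
        rw [map_sub]; abel
      rw [this, add_comm]
      refine (norm_add_le _ _).trans ?_
      rw [Lp.norm_compMeasurePreserving]
    · intro g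
      rw [← Lp.norm_compMeasurePreserving _ (mp_rt hinv g), map_sub, ← rho_mul hinv]
      simp only [mul_inv_cancel]
      rw [rho_one hinv, norm_sub_rev]
    · exact ((rho_cont hinv φ).sub continuous_const).norm.continuousAt
    · rw [rho_one hinv]; simp
    · rw [hφ]; simp
  refine ae_const_of_invariant (fun x g => rightTranslate n g x) continuous_rt2.measurable
    (fun x g h => (rt_mul g h x).symm) (Measure.haar : Measure (SLR n)) haar_ne_zero μ
    (IsProbabilityMeasure.ne_zero μ) hinv (pr 1) ?_ φ (Lp.stronglyMeasurable φ).measurable ?_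
  · refine Filter.Eventually.of_forall fun x => ?_
    obtain ⟨g, rfl⟩ := pr_surj x
    exact ⟨g, by simp⟩
  · intro g
    have h1 := Lp.coeFn_compMeasurePreserving φ (mp_rt hinv g)
    rw [sub_eq_zero.1 (norm_eq_zero.1 (hN g))] at h1
    filter_upwards [h1] with x hx
    exact hx.symm

set_option maxHeartbeats 400000 in
theorem met (μ : Measure (XSpace n)) [IsProbabilityMeasure μ]
    (hinv : ∀ g, Measure.map (rightTranslate n g) μ = μ) {i0 i1 : Fin n} (h01 : i0 ≠ i1)
    (η : XSpace n → ℝ) (hη : Continuous η) (B : ℝ) (hb : ∀ x, |η x| ≤ B) (h0 : ∫ x, η x ∂μ = 0) :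
    Filter.Tendsto (fun K => ∫ x, |AK (tv h01.symm 1) K η x| ∂μ) Filter.atTop (𝓝 0) := by
  obtain ⟨u, hu⟩ : ∃ u, u = tv h01.symm 1 := ⟨_, rfl⟩
  rw [← hu]
  have hB0 : 0 ≤ B := (abs_nonneg _).trans (hb (pr 1))
  have hmem : ∀ f : XSpace n → ℝ, Continuous f → ∀ C, (∀ x, |f x| ≤ C) → MemLp f 2 μ := by
    intro f hf C hC
    exact MemLp.of_bound hf.aestronglyMeasurable C (Filter.Eventually.of_forall hC)
  have hηm := hmem η hη B hb
  have hsm : ∀ k, MemLp (fun x => η (rightTranslate n (u ^ k) x)) 2 μ :=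
    fun k => hmem _ (hη.comp (continuous_rt _)) B fun x => hb _
  have hSm : ∀ K, MemLp (fun x => ∑ k ∈ Finset.range K, η (rightTranslate n (u ^ k) x)) 2 μ :=
    fun K => memLp_finset_sum _ fun k _ => hsm k
  have hAm : ∀ K, MemLp (AK u K η) 2 μ := fun K => hmem _ (continuous_AK u K hη) B (AK_bound u K hB0 hb)
  let f : Lp ℝ 2 μ →L[ℝ] Lp ℝ 2 μ := (Lp.compMeasurePreservingₗᵢ ℝ (rightTranslate n u) (mp_rt hinv u)).toContinuousLinearMap
  have hf : ‖f‖ ≤ 1 := LinearIsometry.norm_toContinuousLinearMap_le _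
  have hfa : ∀ φ, f φ = Lp.compMeasurePreserving (rightTranslate n u) (mp_rt hinv u) φ := fun φ => rfl
  have hit : ∀ k, f^[k] (hηm.toLp η) = (hsm k).toLp _ := by
    intro k
    induction k with
    | zero => simp only [Function.iterate_zero, id]; congr 1; funext x; simp
    | succ k ih =>
      rw [Function.iterate_succ_apply', ih, hfa, Lp.toLp_compMeasurePreserving]
      congr 1
      funext x
      simp [rt_pow_succ]
  have hbs : ∀ K, birkhoffSum f id K (hηm.toLp η) = (hSm K).toLp _ := by
    intro K
    induction K with
    | zero => 
      rw [birkhoffSum_zero]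
      apply Lp.ext
      filter_upwards [(hSm 0).coeFn_toLp, Lp.coeFn_zero ℝ 2 μ] with x h1 h2
      rw [h1, h2]
      simp
    | succ K ih =>
      rw [birkhoffSum_succ, ih]
      change _ + f^[K] (hηm.toLp η) = _
      rw [hit, ← MemLp.toLp_add]
      exact MemLp.toLp_congr _ _ (ae_of_all _ fun x => by simp [Finset.sum_range_succ])
  have hba : ∀ K, birkhoffAverage ℝ f id K (hηm.toLp η) = (hAm K).toLp _ := by
    intro K
    rw [birkhoffAverage, hbs, ← MemLp.toLp_const_smul]
    exact MemLp.toLp_congr _ _ (ae_of_all _ fun x => by simp [AK])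
  have hlim := f.tendsto_birkhoffAverage_orthogonalProjection hf (hηm.toLp η)
  set φ0 := (f.eqLocus (1 : Lp ℝ 2 μ →L[ℝ] Lp ℝ 2 μ)).orthogonalProjectionOnto (hηm.toLp η) with hφ0
  set φ : Lp ℝ 2 μ := φ0.1 with hφ
  have hfix : Lp.compMeasurePreserving (rightTranslate n (tv h01.symm 1)) (mp_rt hinv _) φ = φ := by
    have h1 : f φ = φ := φ0.2
    rw [hfa] at h1
    subst hu
    exact h1
  obtain ⟨c, hc⟩ := fixed_const hinv h01 φ hfix
  have hnorm : Filter.Tendsto (fun K => ‖birkhoffAverage ℝ f id K (hηm.toLp η) - φ‖) Filter.atTop (𝓝 0) :=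
    tendsto_iff_norm_sub_tendsto_zero.1 hlim
  have hle : ∀ K, ∫ x, |AK u K η x - c| ∂μ ≤ ‖birkhoffAverage ℝ f id K (hηm.toLp η) - φ‖ := by
    intro K
    rw [hba, Lp.norm_def]
    have he : eLpNorm (((hAm K).toLp (AK u K η) - φ : Lp ℝ 2 μ)) 2 μ = eLpNorm (fun x => AK u K η x - c) 2 μ := by
      apply eLpNorm_congr_ae
      filter_upwards [Lp.coeFn_sub ((hAm K).toLp (AK u K η)) φ, (hAm K).coeFn_toLp, hc] with x h1 h2 h3
      rw [h1, Pi.sub_apply, h2, h3]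
    rw [he]
    have hmm : MemLp (fun x => AK u K η x - c) 2 μ := (hAm K).sub (memLp_const c)
    have h1 : ∫ x, |AK u K η x - c| ∂μ = (eLpNorm (fun x => AK u K η x - c) 1 μ).toReal := by
      rw [eLpNorm_one_eq_lintegral_enorm]
      exact integral_norm_eq_lintegral_enorm hmm.1
    rw [h1]
    refine ENNReal.toReal_mono hmm.2.ne ?_
    exact eLpNorm_le_eLpNorm_of_exponent_le (by norm_num) hmm.1
  have hL1 : Filter.Tendsto (fun K => ∫ x, |AK u K η x - c| ∂μ) Filter.atTop (𝓝 0) :=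
    squeeze_zero (fun K => integral_nonneg fun x => abs_nonneg _) hle hnorm
  have hIntg : ∀ K, ∫ x, AK u K η x ∂μ = 0 := by
    intro K
    unfold AK
    rw [integral_const_mul, integral_finset_sum _ fun k _ => (hsm k).integrable (by norm_num)]
    rw [Finset.sum_eq_zero, mul_zero]
    intro k _
    rw [← h0]
    conv_rhs => rw [← hinv (u ^ k)]
    rw [integral_map (measurable_rt _).aemeasurable hη.aestronglyMeasurable]
  have hc0 : c = 0 := by
    have : ∀ K, |c| ≤ ∫ x, |AK u K η x - c| ∂μ := by
      intro K
      have h1 : ∫ x, (AK u K η x - c) ∂μ = -c := by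
        rw [integral_sub ((hAm K).integrable (by norm_num)) (integrable_const c), hIntg]; simp
      have h2 := abs_integral_le_integral_abs (f := fun x => AK u K η x - c) (μ := μ)
      rwa [h1, abs_neg] at h2
    exact abs_nonpos_iff.1 (ge_of_tendsto' hL1 this)
  simpa [hc0] using hL1
end MET

end ModuleB5

section ModuleB6
open Matrix MeasureTheory Topology
open scoped ENNReal

section Arith

/-- Extending independent vectors to a determinant-one matrix. -/
lemma exists_SL_cols {n : ℕ} {F : Type*} [Field F] (S : Finset (Fin n)) (i1 : Fin n) (hi1 : i1 ∉ S)
    (w : S → (Fin n → F)) (hw : LinearIndependent F w) :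
    ∃ N : SpecialLinearGroup (Fin n) F, ∀ (s : S) (k : Fin n), N.1 k s = w s k := by
  classical
  let b := Module.Basis.sumExtend hw
  have hbl : ∀ s, b (Sum.inl s) = w s := by
    intro s
    simp [b, Module.Basis.sumExtend]
    rfl
  have : Finite (S ⊕ Module.Basis.sumExtendIndex hw) := Module.Finite.finite_basis b
  have : Finite (Module.Basis.sumExtendIndex hw) := Finite.sum_right S
  have := Fintype.ofFinite (Module.Basis.sumExtendIndex hw)
  have hcard : Fintype.card (Module.Basis.sumExtendIndex hw) = Fintype.card {x // x ∉ S} := by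
    have h1 := Module.finrank_eq_card_basis b
    rw [Module.finrank_fin_fun, Fintype.card_sum, Fintype.card_coe] at h1
    have h2 : Fintype.card {x // x ∉ S} = n - S.card := by
      rw [Fintype.card_subtype_compl]; simp
    omega
  let e1 : {x // x ∉ S} ≃ Module.Basis.sumExtendIndex hw := (Fintype.equivOfCardEq hcard).symm
  let e : S ⊕ Module.Basis.sumExtendIndex hw ≃ Fin n :=
    (Equiv.sumCongr (Equiv.refl _) e1.symm).trans (Equiv.sumCompl (fun x => x ∈ S))
  let b' := b.reindex e
  have hb' : ∀ s : S, b' s = w s := by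
    intro s
    rw [← hbl s, Module.Basis.reindex_apply]
    congr 1
    rw [Equiv.symm_apply_eq]
    simp [e]
  let N0 : Matrix (Fin n) (Fin n) F := Matrix.of fun k i => b' i k
  have hdet : N0.det ≠ 0 := by
    have : LinearIndependent F N0.col := b'.linearIndependent
    rw [Matrix.linearIndependent_cols_iff_isUnit, Matrix.isUnit_iff_isUnit_det] at this
    exact this.ne_zero
  refine ⟨⟨N0.updateCol i1 (N0.det⁻¹ • (fun k => N0 k i1)), ?_⟩, ?_⟩
  · rw [Matrix.det_updateCol_smul]
    have : N0.updateCol i1 (fun k => N0 k i1) = N0 := by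
      ext k l
      by_cases h : l = i1
      · subst h; simp
      · simp [Matrix.updateCol_apply, h]
    rw [this]
    exact inv_mul_cancel₀ hdet
  · intro s k
    have : (s : Fin n) ≠ i1 := fun h => hi1 (h ▸ s.2)
    simp [Matrix.updateCol_apply, this, N0, hb']

variable {n : ℕ}

lemma exists_SL_vec [Nontrivial (Fin n)] {F : Type*} [Field F] (k : Fin n) (a : Fin n → F) (ha : a ≠ 0) :
    ∃ N : SpecialLinearGroup (Fin n) F, Pi.single k 1 ᵥ* N.1 = a := by
  obtain ⟨i1, hi1⟩ := exists_ne k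
  obtain ⟨N, hN⟩ := exists_SL_cols {k} i1 (by simpa using hi1) (fun _ => a)
    (LinearIndependent.of_subsingleton ⟨k, by simp⟩ ha)
  refine ⟨N.transpose, ?_⟩
  ext l
  have := hN ⟨k, by simp⟩ l
  simp [this, Matrix.transpose_apply]

lemma exists_SL_trans [Nontrivial (Fin n)] {F : Type*} [Field F] (a b : Fin n → F) (ha : a ≠ 0) (hb : b ≠ 0) :
    ∃ M : SpecialLinearGroup (Fin n) F, a ᵥ* M.1 = b := by
  obtain ⟨k, _⟩ := exists_pair_ne (Fin n)
  obtain ⟨N, hN⟩ := exists_SL_vec k a ha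
  obtain ⟨M, hM⟩ := exists_SL_vec k b hb
  refine ⟨N⁻¹ * M, ?_⟩
  rw [← hN, Matrix.SpecialLinearGroup.coe_mul, Matrix.vecMul_vecMul, ← Matrix.mul_assoc,
    ← Matrix.SpecialLinearGroup.coe_mul]
  simp [hM]

/-- reduction mod p -/
abbrev red (p : ℕ) : SpecialLinearGroup (Fin n) ℤ →* SpecialLinearGroup (Fin n) (ZMod p) :=
  SpecialLinearGroup.map (Int.castRingHom (ZMod p))
/-- to real matrices -/
abbrev toR : SpecialLinearGroup (Fin n) ℤ →* SLR n :=
  SpecialLinearGroup.map (Int.castRingHom ℝ)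

lemma toR_mem (γ : SpecialLinearGroup (Fin n) ℤ) : toR γ ∈ Gamma n := ⟨γ, rfl⟩

lemma red_surj [Nontrivial (Fin n)] (p : ℕ) [Fact p.Prime] : Function.Surjective (red (n := n) p) := by
  intro M
  have := mem_of_transvection_mem (MonoidHom.mrange (red (n := n) p)) ?_ M
  · exact this
  intro i j hij a
  obtain ⟨b, rfl⟩ := ZMod.intCast_surjective a
  refine ⟨SpecialLinearGroup.transvection hij b, ?_⟩
  refine Matrix.SpecialLinearGroup.ext _ _ fun k l => ?_
  change ((Matrix.transvection i j b k l : ℤ) : ZMod p) = Matrix.transvection i j (b : ZMod p) k l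
  simp only [Matrix.transvection, Matrix.add_apply, Matrix.one_apply, Matrix.single_apply]
  push_cast
  rfl

lemma cast_vecMul {R : Type*} [CommRing R] (v : Fin n → ℤ) (γ : SpecialLinearGroup (Fin n) ℤ) :
    (fun i => ((v ᵥ* γ.1) i : R)) = (fun i => (v i : R)) ᵥ* (SpecialLinearGroup.map (Int.castRingHom R) γ).1 := by
  funext i
  exact RingHom.map_vecMul (Int.castRingHom R) γ.1 v i

lemma vecMul_mul_inv {R : Type*} [CommRing R] (v : Fin n → R) (γ : SpecialLinearGroup (Fin n) R) :
    v ᵥ* γ.1 ᵥ* (γ⁻¹).1 = v := by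
  rw [Matrix.vecMul_vecMul]
  change v ᵥ* ((γ * γ⁻¹ : SpecialLinearGroup (Fin n) R)).1 = v
  simp

lemma vecMul_inv_mul {R : Type*} [CommRing R] (v : Fin n → R) (γ : SpecialLinearGroup (Fin n) R) :
    v ᵥ* (γ⁻¹).1 ᵥ* γ.1 = v := by
  have := vecMul_mul_inv v γ⁻¹
  simpa using this

lemma vecMul_eq_iff {R : Type*} [CommRing R] (v w : Fin n → R) (γ : SpecialLinearGroup (Fin n) R) :
    v ᵥ* γ.1 = w ↔ v = w ᵥ* (γ⁻¹).1 := by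
  constructor
  · rintro rfl; rw [vecMul_mul_inv]
  · rintro rfl; rw [vecMul_inv_mul]

/-- the lattice of `x` -/
def InLat (x : XSpace n) (w : Fin n → ℝ) : Prop := ∃ v : Fin n → ℤ, (fun i => (v i : ℝ)) ᵥ* (rep x).1 = w

lemma inLat_pr (g : SLR n) (w : Fin n → ℝ) : InLat (pr g) w ↔ ∃ v : Fin n → ℤ, (fun i => (v i : ℝ)) ᵥ* g.1 = w := by
  have key : ∀ g h : SLR n, pr g = pr h → (∃ v : Fin n → ℤ, (fun i => (v i : ℝ)) ᵥ* g.1 = w) →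
      ∃ v : Fin n → ℤ, (fun i => (v i : ℝ)) ᵥ* h.1 = w := by
    intro g h hgh ⟨v, hv⟩
    obtain ⟨γ, hγ⟩ := pr_eq.1 hgh.symm
    have e : g = toR γ * h := by
      rw [show toR γ = g * h⁻¹ from hγ]; simp
    refine ⟨v ᵥ* γ.1, ?_⟩
    rw [cast_vecMul, ← hv, e, Matrix.SpecialLinearGroup.coe_mul, Matrix.vecMul_vecMul]
  exact ⟨key _ _ (pr_rep _), key _ _ (pr_rep _).symm⟩

lemma pr_eq_of_lat (g h : SLR n) (H : ∀ v : Fin n → ℤ, ∃ w : Fin n → ℤ,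
    (fun i => (v i : ℝ)) ᵥ* h.1 = (fun i => (w i : ℝ)) ᵥ* g.1) : pr g = pr h := by
  rw [pr_eq]
  have H1 : ∀ i, ∃ w : Fin n → ℤ, ∀ j, (h * g⁻¹ : SLR n).1 i j = w j := by
    intro i
    obtain ⟨w, hw⟩ := H (Pi.single i 1)
    refine ⟨w, fun j => ?_⟩
    rw [eq_comm, vecMul_eq_iff, Matrix.vecMul_vecMul] at hw
    have := congrFun hw j
    have e : (fun k => ((Pi.single i 1 : Fin n → ℤ) k : ℝ)) = Pi.single i 1 := by
      funext k; by_cases hk : k = i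
      · subst hk; simp
      · simp [hk]
    rw [this, e, Matrix.single_one_vecMul]
    rfl
  choose W hW using H1
  exact mem_Gamma_of_int (fun i j => ⟨W i j, by first | exact hW i j | exact (hW i j).symm⟩)

lemma inLat_rt (x : XSpace n) (g : SLR n) (w : Fin n → ℝ) : InLat (rightTranslate n g x) (w ᵥ* g.1) ↔ InLat x w := by
  obtain ⟨h, rfl⟩ := pr_surj x
  rw [rt_pr, inLat_pr, inLat_pr]
  refine exists_congr fun v => ?_
  rw [Matrix.SpecialLinearGroup.coe_mul, ← Matrix.vecMul_vecMul]
  constructor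
  · intro h1
    have := congrArg (fun z => z ᵥ* (g⁻¹).1) h1
    simpa only [vecMul_mul_inv] using this
  · intro h1; rw [h1]

variable (p : ℕ) [hp : Fact p.Prime] [NeZero n] (S : Finset (Fin n))

/-- scaling -/
def cS : ℝ := (p : ℝ) ^ (-((S.card : ℝ) / n))
/-- integer diagonal -/
def eS (i : Fin n) : ℤ := if i ∈ S then p else 1

lemma cS_pos : 0 < cS p S := Real.rpow_pos_of_pos (by exact_mod_cast hp.out.pos) _

lemma cS_pow : cS p S ^ n * (p : ℝ) ^ S.card = 1 := by
  have h0 : (0:ℝ) < p := by exact_mod_cast hp.out.pos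
  have hn : (n : ℝ) ≠ 0 := by exact_mod_cast NeZero.ne n
  rw [cS, ← Real.rpow_natCast, ← Real.rpow_mul h0.le, ← Real.rpow_natCast, ← Real.rpow_add h0]
  rw [show -((S.card : ℝ) / n) * n + S.card = 0 by field_simp; ring]
  simp

lemma cS_compl : cS p S * cS p Sᶜ * p = 1 := by
  have h0 : (0:ℝ) < p := by exact_mod_cast hp.out.pos
  have hn : (n : ℝ) ≠ 0 := by exact_mod_cast NeZero.ne n
  have hc : (S.card : ℝ) + (Sᶜ.card : ℝ) = n := by
    rw [← Nat.cast_add, Finset.card_add_card_compl, Fintype.card_fin]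
  rw [cS, cS, ← Real.rpow_add h0, ← Real.rpow_add_one h0.ne']
  rw [show -((S.card : ℝ) / n) + -((Sᶜ.card : ℝ) / n) + 1 = 0 by field_simp; linarith]
  simp

/-- diagonal Hecke element -/
def dS : SLR n := ⟨Matrix.diagonal fun i => cS p S * (eS p S i : ℝ), by
  rw [Matrix.det_diagonal, Finset.prod_mul_distrib, Finset.prod_const, Finset.card_univ, Fintype.card_fin]
  have : ∏ i, (eS p S i : ℝ) = (p : ℝ) ^ S.card := by
    simp only [eS, Int.cast_ite, Int.cast_natCast, Int.cast_one]
    rw [Finset.prod_ite_mem, Finset.univ_inter, Finset.prod_const]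
  rw [this, cS_pow]⟩

lemma dS_compl : dS p Sᶜ = (dS p S)⁻¹ := by
  rw [eq_inv_iff_mul_eq_one]
  refine Matrix.SpecialLinearGroup.ext _ _ fun k l => ?_
  change ((Matrix.diagonal fun i => cS p Sᶜ * (eS p Sᶜ i : ℝ)) * (Matrix.diagonal fun i => cS p S * (eS p S i : ℝ)) : Matrix (Fin n) (Fin n) ℝ) k l = (1 : Matrix _ _ ℝ) k l
  rw [Matrix.diagonal_mul_diagonal, ← Matrix.diagonal_one]
  congr 2
  funext i
  have := cS_compl p S
  by_cases hi : i ∈ S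
  · simp only [eS, hi, Finset.mem_compl, not_true, if_true, if_false]; push_cast; linarith
  · simp only [eS, hi, Finset.mem_compl, not_false_eq_true, if_true, if_false]; push_cast; linarith

/-- subgroup attached to M -/
def Hsub (M : SpecialLinearGroup (Fin n) (ZMod p)) : AddSubgroup (Fin n → ZMod p) where
  carrier := {x | ∀ s ∈ S, (x ᵥ* (M⁻¹).1) s = 0}
  zero_mem' := by simp
  add_mem' := by
    intro a b ha hb s hs
    rw [Matrix.add_vecMul, Pi.add_apply, ha s hs, hb s hs, add_zero]
  neg_mem' := by
    intro a ha s hs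
    rw [Matrix.neg_vecMul, Pi.neg_apply, ha s hs, neg_zero]

lemma lat_iff (γ : SpecialLinearGroup (Fin n) ℤ) (a : Fin n → ℤ) :
    InLat (pr (dS p S * toR γ)) (cS p S • (fun i => (a i : ℝ))) ↔ (fun i => (a i : ZMod p)) ∈ Hsub p S (red p γ) := by
  rw [inLat_pr]
  have hc := (cS_pos p S).ne'
  have h1 : ∀ v : Fin n → ℤ, (fun i => (v i : ℝ)) ᵥ* (dS p S * toR γ : SLR n).1 = cS p S • (fun i => (a i : ℝ)) ↔
      ∀ i, v i * eS p S i = (a ᵥ* (γ⁻¹).1) i := by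
    intro v
    rw [Matrix.SpecialLinearGroup.coe_mul, ← Matrix.vecMul_vecMul, vecMul_eq_iff, Matrix.smul_vecMul]
    have h2 := cast_vecMul (R := ℝ) a γ⁻¹
    rw [map_inv] at h2
    change _ = cS p S • ((fun i => (a i : ℝ)) ᵥ* ((SpecialLinearGroup.map (Int.castRingHom ℝ) γ)⁻¹).1) ↔ _
    rw [← h2, funext_iff]
    refine forall_congr' fun i => ?_
    change ((fun i => (v i : ℝ)) ᵥ* Matrix.diagonal fun i => cS p S * (eS p S i : ℝ)) i = _ ↔ _
    rw [Matrix.vecMul_diagonal, Pi.smul_apply, smul_eq_mul]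
    rw [show (v i : ℝ) * (cS p S * (eS p S i : ℝ)) = cS p S * ((v i : ℝ) * (eS p S i : ℝ)) by ring]
    rw [mul_right_inj' hc]
    exact_mod_cast Iff.rfl
  simp only [h1]
  have h3 : (fun i => (a i : ZMod p)) ∈ Hsub p S (red p γ) ↔ ∀ s ∈ S, (((a ᵥ* (γ⁻¹).1) s : ℤ) : ZMod p) = 0 := by
    have h2 := cast_vecMul (R := ZMod p) a γ⁻¹
    rw [map_inv] at h2
    refine forall_congr' fun s => imp_congr_right fun hs => ?_
    have := congrFun h2 s
    exact ⟨fun h => Eq.trans this h, fun h => Eq.trans this.symm h⟩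
  rw [h3]
  simp only [ZMod.intCast_zmod_eq_zero_iff_dvd]
  constructor
  · rintro ⟨v, hv⟩ s hs
    rw [← hv s]; simp [eS, hs]
  · intro h
    refine ⟨fun i => if i ∈ S then (a ᵥ* (γ⁻¹).1) i / p else (a ᵥ* (γ⁻¹).1) i, fun i => ?_⟩
    by_cases hi : i ∈ S
    · simp only [hi, if_true, eS]; exact Int.ediv_mul_cancel (h i hi)
    · simp [hi, eS]

lemma lat_vec (γ : SpecialLinearGroup (Fin n) ℤ) (v : Fin n → ℤ) :
    ∃ a : Fin n → ℤ, (fun i => (v i : ℝ)) ᵥ* (dS p S * toR γ : SLR n).1 = cS p S • (fun i => (a i : ℝ)) := by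
  refine ⟨(fun i => v i * eS p S i) ᵥ* γ.1, ?_⟩
  rw [cast_vecMul, Matrix.SpecialLinearGroup.coe_mul, ← Matrix.vecMul_vecMul, ← Matrix.smul_vecMul]
  congr 1
  funext i
  change ((fun i => (v i : ℝ)) ᵥ* Matrix.diagonal fun i => cS p S * (eS p S i : ℝ)) i = _
  rw [Matrix.vecMul_diagonal, Pi.smul_apply, smul_eq_mul]
  push_cast
  ring

lemma pr_eq_of_Hsub (γ γ' : SpecialLinearGroup (Fin n) ℤ) (h : Hsub p S (red p γ) = Hsub p S (red p γ')) :
    pr (dS p S * toR γ) = pr (dS p S * toR γ') := by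
  apply pr_eq_of_lat
  intro v
  obtain ⟨a, ha⟩ := lat_vec p S γ' v
  have h1 : InLat (pr (dS p S * toR γ')) (cS p S • (fun i => (a i : ℝ))) := (inLat_pr _ _).2 ⟨v, ha⟩
  rw [lat_iff, ← h, ← lat_iff, inLat_pr] at h1
  obtain ⟨w, hw⟩ := h1
  exact ⟨w, by rw [ha, hw]⟩

section count

/-- lift of M to integral matrices -/
def liftZ [Nontrivial (Fin n)] (M : SpecialLinearGroup (Fin n) (ZMod p)) : SpecialLinearGroup (Fin n) ℤ :=
  Function.surjInv (red_surj p) M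

lemma red_liftZ [Nontrivial (Fin n)] (M : SpecialLinearGroup (Fin n) (ZMod p)) : red p (liftZ p M) = M :=
  Function.surjInv_eq (red_surj p) M

/-- the Hecke correspondence -/
def hS [Nontrivial (Fin n)] : HSet n where
  d := dS p S
  C := by
    classical
    have : Fintype (SpecialLinearGroup (Fin n) (ZMod p)) := Fintype.ofFinite _
    exact Finset.univ.image fun M => pr (dS p S * toR (liftZ p M))
  mem_iff := by
    classical
    intro x
    simp only [Finset.mem_image, Finset.mem_univ, true_and]
    constructor
    · rintro ⟨M, rfl⟩
      exact ⟨_, toR_mem _, rfl⟩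
    · rintro ⟨_, ⟨γ, rfl⟩, rfl⟩
      refine ⟨red p γ, pr_eq_of_Hsub p S _ _ ?_⟩
      rw [red_liftZ]

lemma mem_hS [Nontrivial (Fin n)] (x : XSpace n) : x ∈ (hS p S).C ↔ ∃ γ : SpecialLinearGroup (Fin n) ℤ, x = pr (dS p S * toR γ) := by
  rw [(hS p S).mem_iff]
  constructor
  · rintro ⟨_, ⟨γ, rfl⟩, rfl⟩; exact ⟨γ, rfl⟩
  · rintro ⟨γ, rfl⟩; exact ⟨_, toR_mem γ, rfl⟩

open Classical in
/-- subgroup of a point of the Hecke orbit -/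
def hof (x : XSpace n) : AddSubgroup (Fin n → ZMod p) :=
  if h : ∃ γ : SpecialLinearGroup (Fin n) ℤ, x = pr (dS p S * toR γ) then Hsub p S (red p h.choose) else ⊥

lemma Hsub_eq_of_pr (γ γ' : SpecialLinearGroup (Fin n) ℤ) (h : pr (dS p S * toR γ) = pr (dS p S * toR γ')) :
    Hsub p S (red p γ) = Hsub p S (red p γ') := by
  ext b
  have : ∃ a : Fin n → ℤ, (fun i => (a i : ZMod p)) = b := by
    choose a ha using fun i => ZMod.intCast_surjective (b i)
    exact ⟨a, funext ha⟩
  obtain ⟨a, rfl⟩ := this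
  rw [← lat_iff, ← lat_iff, h]

lemma hof_pr (γ : SpecialLinearGroup (Fin n) ℤ) : hof p S (pr (dS p S * toR γ)) = Hsub p S (red p γ) := by
  have h : ∃ γ' : SpecialLinearGroup (Fin n) ℤ, pr (dS p S * toR γ) = pr (dS p S * toR γ') := ⟨γ, rfl⟩
  rw [hof, dif_pos h]
  exact Hsub_eq_of_pr p S _ _ h.choose_spec.symm

lemma inLat_hof [Nontrivial (Fin n)] {x : XSpace n} (hx : x ∈ (hS p S).C) (a : Fin n → ℤ) :
    InLat x (cS p S • (fun i => (a i : ℝ))) ↔ (fun i => (a i : ZMod p)) ∈ hof p S x := by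
  obtain ⟨γ, rfl⟩ := (mem_hS p S x).1 hx
  rw [lat_iff, hof_pr]

lemma inLat_form [Nontrivial (Fin n)] {x : XSpace n} (hx : x ∈ (hS p S).C) (w : Fin n → ℝ) (hw : InLat x w) :
    ∃ a : Fin n → ℤ, w = cS p S • (fun i => (a i : ℝ)) := by
  obtain ⟨γ, rfl⟩ := (mem_hS p S x).1 hx
  obtain ⟨v, rfl⟩ := (inLat_pr _ _).1 hw
  exact lat_vec p S γ v

lemma hof_injOn [Nontrivial (Fin n)] : Set.InjOn (hof p S) ((hS p S).C : Set (XSpace n)) := by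
  intro x hx y hy h
  obtain ⟨γ, rfl⟩ := (mem_hS p S x).1 hx
  obtain ⟨γ', rfl⟩ := (mem_hS p S y).1 hy
  rw [hof_pr, hof_pr] at h
  exact pr_eq_of_Hsub p S _ _ h

lemma mem_congruenceSet_iff [Nontrivial (Fin n)] (i1 : Fin n) (hi1 : i1 ∉ S) (H : AddSubgroup (Fin n → ZMod p)) :
    H ∈ congruenceSet p n S.card ↔ ∃ γ : SpecialLinearGroup (Fin n) ℤ, H = Hsub p S (red p γ) := by
  have e : S ≃ Fin S.card := S.equivFin
  constructor
  · rintro ⟨A, hA, hH⟩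
    have hind : LinearIndependent (ZMod p) (fun s : S => A (e s)) := by
      have h1 : LinearIndependent (ZMod p) A.row := by
        rw [← Matrix.vecMul_injective_iff]
        intro c c' hc
        funext i
        obtain ⟨x, hx⟩ := hA (Pi.single i 1)
        have h2 : c ᵥ* A ⬝ᵥ x = c' ᵥ* A ⬝ᵥ x := by
          have hc' : c ᵥ* A = c' ᵥ* A := hc
          rw [hc']
        have hx' : A *ᵥ x = Pi.single i 1 := hx
        rw [← Matrix.dotProduct_mulVec, ← Matrix.dotProduct_mulVec, hx'] at h2
        simpa using h2
      exact h1.comp e e.injective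
    obtain ⟨N, hN⟩ := exists_SL_cols S i1 hi1 _ hind
    obtain ⟨γ, hγ⟩ := red_surj p N⁻¹
    refine ⟨γ, SetLike.coe_injective ?_⟩
    rw [hH, hγ]
    ext x
    change A *ᵥ x = 0 ↔ ∀ s ∈ S, (x ᵥ* ((N⁻¹)⁻¹).1) s = 0
    rw [inv_inv]
    have h3 : ∀ s : S, (x ᵥ* N.1) s = (A *ᵥ x) (e s) := by
      intro s
      simp only [Matrix.vecMul, Matrix.mulVec, dotProduct]
      refine Finset.sum_congr rfl fun k _ => ?_
      rw [hN s k, mul_comm]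
    constructor
    · intro h s hs
      rw [h3 ⟨s, hs⟩, h]; rfl
    · intro h
      funext i
      have := h3 (e.symm i)
      rw [h _ (e.symm i).2] at this
      simpa using this.symm
  · rintro ⟨γ, rfl⟩
    set M := red p γ
    refine ⟨Matrix.of fun i k => (M⁻¹).1 k (e.symm i), ?_, ?_⟩
    · intro y
      refine ⟨(fun i => if h : i ∈ S then y (e ⟨i, h⟩) else 0) ᵥ* M.1, ?_⟩
      funext i
      change ∑ k, (M⁻¹).1 k (e.symm i) * _ = _
      have := congrFun (vecMul_mul_inv (fun i => if h : i ∈ S then y (e ⟨i, h⟩) else 0) M) (e.symm i)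
      rw [dif_pos (e.symm i).2] at this
      simp only [Subtype.coe_eta, Equiv.apply_symm_apply] at this
      rw [← this]
      exact Finset.sum_congr rfl fun k _ => mul_comm _ _
    · ext x
      change (∀ s ∈ S, (x ᵥ* (M⁻¹).1) s = 0) ↔ _ = _
      rw [funext_iff]
      constructor
      · intro h i
        refine Eq.trans ?_ (h _ (e.symm i).2)
        change ∑ k, (M⁻¹).1 k (e.symm i) * x k = ∑ k, x k * (M⁻¹).1 k (e.symm i)
        exact Finset.sum_congr rfl fun k _ => mul_comm _ _
      · intro h s hs
        have := h (e ⟨s, hs⟩)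
        refine Eq.trans ?_ this
        change ∑ k, x k * (M⁻¹).1 k s = ∑ k, (M⁻¹).1 k (e.symm (e ⟨s, hs⟩)) * x k
        rw [Equiv.symm_apply_apply]
        exact Finset.sum_congr rfl fun k _ => mul_comm _ _

open Classical in
lemma ncard_congruence [Nontrivial (Fin n)] (i1 : Fin n) (hi1 : i1 ∉ S) (Q : AddSubgroup (Fin n → ZMod p) → Prop) :
    Set.ncard {H ∈ congruenceSet p n S.card | Q H} = ((hS p S).C.filter fun x => Q (hof p S x)).card := by
  rw [← Set.ncard_coe_finset ((hS p S).C.filter _), ← Set.ncard_image_of_injOn (f := hof p S)]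
  · congr 1
    ext H
    simp only [Set.mem_setOf_eq, Set.mem_image, Finset.coe_filter]
    rw [mem_congruenceSet_iff p S i1 hi1]
    constructor
    · rintro ⟨⟨γ, rfl⟩, hQ⟩
      refine ⟨pr (dS p S * toR γ), ⟨(mem_hS p S _).2 ⟨γ, rfl⟩, ?_⟩, hof_pr _ _ _⟩
      rwa [hof_pr]
    · rintro ⟨x, ⟨hx, hQ⟩, rfl⟩
      refine ⟨?_, hQ⟩
      obtain ⟨γ, rfl⟩ := (mem_hS p S x).1 hx
      exact ⟨γ, hof_pr _ _ _⟩
  · exact (hof_injOn p S).mono (by intro x; simp +contextual)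

lemma card_Hsub (M : SpecialLinearGroup (Fin n) (ZMod p)) :
    Nat.card (Hsub p S M) = p ^ (n - S.card) := by
  classical
  have e : Hsub p S M ≃ (Fintype.piFinset fun i : Fin n => if i ∈ S then {(0 : ZMod p)} else Finset.univ) := by
    refine ⟨fun x => ⟨x.1 ᵥ* (M⁻¹).1, ?_⟩, fun y => ⟨y.1 ᵥ* M.1, ?_⟩, ?_, ?_⟩
    · rw [Fintype.mem_piFinset]
      intro i
      by_cases hi : i ∈ S
      · simpa [hi] using x.2 i hi
      · simp [hi]
    · intro s hs
      rw [vecMul_mul_inv]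
      have := Fintype.mem_piFinset.1 y.2 s
      simpa [hs] using this
    · intro x; exact Subtype.ext (vecMul_inv_mul _ _)
    · intro x; exact Subtype.ext (vecMul_mul_inv _ _)
  rw [Nat.card_congr e, Nat.card_eq_fintype_card, Fintype.card_coe, Fintype.card_piFinset]
  have : ∀ i, (if i ∈ S then {(0 : ZMod p)} else Finset.univ).card = if i ∈ S then 1 else p := by
    intro i; split_ifs <;> simp [ZMod.card]
  simp only [this]
  rw [Finset.prod_ite, Finset.prod_const_one, one_mul, Finset.prod_const]
  congr 1
  have : (Finset.univ.filter fun x => x ∉ S) = Sᶜ := by ext; simp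
  rw [this, Finset.card_compl, Fintype.card_fin]

open Classical in
/-- number of Hecke points whose lattice contains `c a` -/
def cnt [Nontrivial (Fin n)] (a : Fin n → ZMod p) : ℕ := ((hS p S).C.filter fun x => a ∈ hof p S x).card

lemma hof_rt [Nontrivial (Fin n)] {x : XSpace n} (hx : x ∈ (hS p S).C) (γ : SpecialLinearGroup (Fin n) ℤ) (a : Fin n → ZMod p) :
    a ᵥ* (red p γ).1 ∈ hof p S (rightTranslate n (toR γ) x) ↔ a ∈ hof p S x := by
  have : ∃ a' : Fin n → ℤ, (fun i => (a' i : ZMod p)) = a := by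
    choose a' ha using fun i => ZMod.intCast_surjective (a i)
    exact ⟨a', funext ha⟩
  obtain ⟨a, rfl⟩ := this
  rw [← inLat_hof p S hx, ← inLat_rt _ (toR γ), ← cast_vecMul, ← inLat_hof p S ((hS p S).inv (toR_mem γ) hx),
    cast_vecMul, Matrix.smul_vecMul]

lemma cnt_const [Nontrivial (Fin n)] (a b : Fin n → ZMod p) (ha : a ≠ 0) (hb : b ≠ 0) : cnt p S a = cnt p S b := by
  classical
  obtain ⟨M, rfl⟩ := exists_SL_trans a b ha hb
  obtain ⟨γ, rfl⟩ := red_surj p M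
  rw [cnt, cnt, Finset.card_filter, Finset.card_filter,
    ← (hS p S).sum_inv (fun x => if a ᵥ* (red p γ).1 ∈ hof p S x then (1:ℕ) else 0) (toR_mem γ)]
  refine Finset.sum_congr rfl fun x hx => ?_
  simp only [hof_rt p S hx]

lemma cnt_eq [Nontrivial (Fin n)] (a : Fin n → ZMod p) (ha : a ≠ 0) :
    cnt p S a * (p ^ n - 1) = (hS p S).C.card * (p ^ (n - S.card) - 1) := by
  classical
  have h1 : ∑ b ∈ Finset.univ.erase (0 : Fin n → ZMod p), cnt p S b = cnt p S a * (p ^ n - 1) := by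
    rw [Finset.sum_congr rfl (fun b hb => cnt_const p S b a (Finset.ne_of_mem_erase hb) ha), Finset.sum_const,
      Finset.card_erase_of_mem (Finset.mem_univ _), Finset.card_univ, Fintype.card_fun, ZMod.card, Fintype.card_fin,
      smul_eq_mul, mul_comm]
  rw [← h1]
  simp only [cnt, Finset.card_filter]
  rw [Finset.sum_comm, Finset.card_eq_sum_ones, Finset.sum_mul]
  refine Finset.sum_congr rfl fun x hx => ?_
  obtain ⟨γ, rfl⟩ := (mem_hS p S x).1 hx
  rw [hof_pr, ← Finset.card_filter, one_mul, ← card_Hsub p S (red p γ), Nat.card_eq_fintype_card,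
    Finset.filter_erase, Finset.card_erase_of_mem, Fintype.card_subtype]
  simp [zero_mem]

end count

end Arith

end ModuleB6

section ModuleB7
open Matrix MeasureTheory Topology
open scoped ENNReal

section Riemann
open Filter
variable {n : ℕ}

/-- coordinatewise floor -/
def fl (x : Fin n → ℝ) : Fin n → ℤ := fun i => ⌊x i⌋
/-- cast -/
abbrev cz (a : Fin n → ℤ) : Fin n → ℝ := fun i => (a i : ℝ)

lemma measurable_fl : Measurable (fl (n := n)) :=
  measurable_pi_lambda _ fun i => Int.measurable_floor.comp (measurable_pi_apply i)

lemma lintegral_fl (k : (Fin n → ℤ) → ℝ≥0∞) : ∫⁻ x : Fin n → ℝ, k (fl x) = ∑' a, k a := by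
  have hk : Measurable k := measurable_of_countable k
  rw [← lintegral_map hk measurable_fl, lintegral_countable']
  refine tsum_congr fun a => ?_
  rw [Measure.map_apply measurable_fl (measurableSet_singleton a)]
  have : fl ⁻¹' {a} = Set.univ.pi fun i => Set.Ico (a i : ℝ) (a i + 1) := by
    ext x
    simp only [Set.mem_preimage, Set.mem_singleton_iff, Set.mem_pi, Set.mem_univ, true_imp_iff, Set.mem_Ico,
      funext_iff, fl, Int.floor_eq_iff]
  rw [this, Real.volume_pi_Ico]
  simp

lemma lintegral_scale {c : ℝ} (hc : 0 < c) (k : (Fin n → ℤ) → ℝ≥0∞) :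
    ∫⁻ x : Fin n → ℝ, k (fl (c⁻¹ • x)) = ENNReal.ofReal (c ^ n) * ∑' a, k a := by
  have hk : Measurable k := measurable_of_countable k
  have h1 := Measure.map_addHaar_smul (volume : Measure (Fin n → ℝ)) (inv_ne_zero hc.ne')
  have h2 := lintegral_map (μ := (volume : Measure (Fin n → ℝ))) (hk.comp measurable_fl) (measurable_const_smul (c⁻¹))
  rw [h1, lintegral_smul_measure] at h2
  simp only [Function.comp_apply] at h2
  rw [← h2, lintegral_fl, Module.finrank_fin_fun, smul_eq_mul, inv_pow, inv_inv, abs_of_pos (by positivity)]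

/-- admissible test functions -/
structure Nice (f : (Fin n → ℝ) → ℝ≥0∞) : Prop where
  meas : Measurable f
  bdd : ∃ B : ℝ≥0∞, B ≠ ∞ ∧ ∀ w, f w ≤ B
  supp : ∃ R : ℝ, 0 < R ∧ ∀ w, R < ‖w‖ → f w = 0
  cont : ∀ᵐ w, ContinuousAt f w

lemma fl_close {c : ℝ} (hc : 0 < c) (x : Fin n → ℝ) : ‖c • cz (fl (c⁻¹ • x)) - x‖ ≤ c := by
  rw [pi_norm_le_iff_of_nonneg hc.le]
  intro i
  have h1 := Int.floor_le (c⁻¹ * x i)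
  have h2 := Int.lt_floor_add_one (c⁻¹ * x i)
  have e : c * (c⁻¹ * x i) = x i := by field_simp
  change |c * (⌊c⁻¹ * x i⌋ : ℝ) - x i| ≤ c
  rw [abs_le]
  constructor <;> nlinarith

lemma riemann {ι : Type*} {l : Filter ι} [l.IsCountablyGenerated] {h : (Fin n → ℝ) → ℝ≥0∞} (hh : Nice h)
    (c : ι → ℝ) (hc0 : ∀ i, 0 < c i) (hc : Tendsto c l (𝓝 0)) :
    Tendsto (fun i => ENNReal.ofReal (c i ^ n) * ∑' a : Fin n → ℤ, h (c i • cz a)) l (𝓝 (∫⁻ x, h x)) := by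
  obtain ⟨B, hB, hb⟩ := hh.bdd
  obtain ⟨R, hR0, hR⟩ := hh.supp
  have e : ∀ i, ENNReal.ofReal (c i ^ n) * ∑' a : Fin n → ℤ, h (c i • cz a) =
      ∫⁻ x, h (c i • cz (fl ((c i)⁻¹ • x))) := fun i => by
    rw [lintegral_scale (hc0 i) (fun a => h (c i • cz a))]
  simp only [e]
  have hmeas : ∀ i, Measurable fun x => h (c i • cz (fl ((c i)⁻¹ • x))) := by
    intro i
    have hk : Measurable (fun a : Fin n → ℤ => h (c i • cz a)) := measurable_of_countable _
    exact hk.comp (measurable_fl.comp (measurable_const_smul _))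
  refine tendsto_lintegral_filter_of_dominated_convergence
    ((Metric.closedBall (0 : Fin n → ℝ) (R + 1)).indicator fun _ => B) (Eventually.of_forall hmeas) ?_ ?_ ?_
  · filter_upwards [hc.eventually_lt_const one_pos] with i hi
    refine Eventually.of_forall fun x => ?_
    by_cases hx : x ∈ Metric.closedBall (0 : Fin n → ℝ) (R + 1)
    · rw [Set.indicator_of_mem hx]; exact hb _
    · rw [Set.indicator_of_notMem hx, nonpos_iff_eq_zero]
      apply hR
      rw [mem_closedBall_zero_iff, not_le] at hx
      have h1 := fl_close (hc0 i) x
      have h2 := norm_sub_norm_le x (c i • cz (fl ((c i)⁻¹ • x)))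
      rw [norm_sub_rev] at h1
      linarith
  · rw [lintegral_indicator_const Metric.isClosed_closedBall.measurableSet]
    exact ENNReal.mul_ne_top hB measure_closedBall_lt_top.ne
  · filter_upwards [hh.cont] with x hx
    refine hx.tendsto.comp ?_
    rw [tendsto_iff_norm_sub_tendsto_zero]
    exact squeeze_zero (fun _ => norm_nonneg _) (fun i => fl_close (hc0 i) x) hc

lemma vecMul_norm_le (A : Matrix (Fin n) (Fin n) ℝ) : ∃ C : ℝ, 0 < C ∧ ∀ w, ‖w ᵥ* A‖ ≤ C * ‖w‖ := by
  refine ⟨∑ i, ∑ j, |A i j| + 1, by positivity, fun w => ?_⟩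
  rw [pi_norm_le_iff_of_nonneg (by positivity)]
  intro j
  simp only [Matrix.vecMul, dotProduct]
  calc ‖∑ i, w i * A i j‖ ≤ ∑ i, ‖w i * A i j‖ := norm_sum_le _ _
    _ ≤ ∑ i, ‖w‖ * ∑ j, |A i j| := by
        refine Finset.sum_le_sum fun i _ => ?_
        rw [norm_mul]
        refine mul_le_mul (norm_le_pi_norm w i) ?_ (norm_nonneg _) (norm_nonneg _)
        exact Finset.single_le_sum (f := fun j => |A i j|) (fun _ _ => abs_nonneg _) (Finset.mem_univ j)
    _ ≤ _ := by rw [← Finset.mul_sum]; nlinarith [norm_nonneg w]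

lemma continuous_vecMulc (A : Matrix (Fin n) (Fin n) ℝ) : Continuous fun w : Fin n → ℝ => w ᵥ* A := by
  refine continuous_pi fun j => ?_
  simp only [Matrix.vecMul, dotProduct]
  fun_prop

lemma map_vecMul (g : SLR n) : Measure.map (fun w : Fin n → ℝ => w ᵥ* g.1) volume = volume := by
  have h := Real.map_matrix_volume_pi_eq_smul_volume_pi (M := g.1ᵀ) (by rw [Matrix.det_transpose, g.2]; exact one_ne_zero)
  rw [Matrix.det_transpose, g.2] at h
  have e : (⇑(Matrix.toLin' g.1ᵀ)) = fun w : Fin n → ℝ => w ᵥ* g.1 := by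
    funext w; rw [Matrix.toLin'_apply, Matrix.mulVec_transpose]
  rw [e] at h
  simpa using h

lemma mp_vecMul (g : SLR n) : MeasurePreserving (fun w : Fin n → ℝ => w ᵥ* g.1) volume volume :=
  ⟨(continuous_vecMulc _).measurable, map_vecMul g⟩

lemma Nice.comp {f : (Fin n → ℝ) → ℝ≥0∞} (hf : Nice f) (g : SLR n) : Nice (fun w => f (w ᵥ* g.1)) where
  meas := hf.meas.comp (continuous_vecMulc _).measurable
  bdd := by
    obtain ⟨B, hB, hb⟩ := hf.bdd
    exact ⟨B, hB, fun w => hb _⟩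
  supp := by
    obtain ⟨R, hR0, hR⟩ := hf.supp
    obtain ⟨C, hC, h⟩ := vecMul_norm_le (g⁻¹).1
    refine ⟨C * R, by positivity, fun w hw => hR _ ?_⟩
    have := h (w ᵥ* g.1)
    rw [vecMul_mul_inv] at this
    by_contra hcon
    push Not at hcon
    nlinarith
  cont := by
    have := (mp_vecMul g).quasiMeasurePreserving.tendsto_ae.eventually hf.cont
    filter_upwards [this] with w hw
    exact ContinuousAt.comp (f := fun w : Fin n → ℝ => w ᵥ* g.1) (g := f) hw (continuous_vecMulc _).continuousAt

lemma lintegral_vecMul {f : (Fin n → ℝ) → ℝ≥0∞} (hf : Measurable f) (g : SLR n) :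
    ∫⁻ w, f (w ᵥ* g.1) = ∫⁻ w, f w := (mp_vecMul g).lintegral_comp hf

end Riemann

section Siegel
open Filter
variable {n : ℕ}

/-- Siegel transform -/
def Es (f : (Fin n → ℝ) → ℝ≥0∞) (x : XSpace n) : ℝ≥0∞ := ∑' v : Fin n → ℤ, f (cz v ᵥ* (rep x).1)

lemma cz_inj : Function.Injective (cz (n := n)) := by
  intro a b h; funext i; have := congrFun h i; exact_mod_cast this

lemma vecMul_injS (g : SLR n) : Function.Injective (fun v : Fin n → ℝ => v ᵥ* g.1) := by
  intro a b h
  have := congrArg (fun z => z ᵥ* (g⁻¹).1) h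
  simpa only [vecMul_mul_inv] using this

lemma Es_pr (f : (Fin n → ℝ) → ℝ≥0∞) (g : SLR n) : Es f (pr g) = ∑' v : Fin n → ℤ, f (cz v ᵥ* g.1) := by
  have h : pr (rep (pr g)) = pr g := pr_rep _
  obtain ⟨γ, hγ⟩ := pr_eq.1 h
  have e : g = toR γ * rep (pr g) := by
    rw [show toR γ = g * (rep (pr g))⁻¹ from hγ]; simp
  have hb : Function.Bijective (fun v : Fin n → ℤ => v ᵥ* γ.1) := by
    refine ⟨fun a b h => ?_, fun b => ⟨b ᵥ* (γ⁻¹).1, vecMul_inv_mul _ _⟩⟩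
    have := congrArg (fun z => z ᵥ* (γ⁻¹).1) h
    simpa only [vecMul_mul_inv] using this
  rw [Es, ← (Equiv.ofBijective _ hb).tsum_eq]
  refine tsum_congr fun v => ?_
  simp only [Equiv.ofBijective_apply]
  conv_rhs => rw [e, Matrix.SpecialLinearGroup.coe_mul, ← Matrix.vecMul_vecMul]
  rw [show cz (v ᵥ* γ.1) = _ from cast_vecMul v γ]

lemma Es_rt (f : (Fin n → ℝ) → ℝ≥0∞) (g : SLR n) (x : XSpace n) :
    Es f (rightTranslate n g x) = Es (fun w => f (w ᵥ* g.1)) x := by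
  obtain ⟨h, rfl⟩ := pr_surj x
  rw [rt_pr, Es_pr, Es_pr]
  simp only [Matrix.SpecialLinearGroup.coe_mul, Matrix.vecMul_vecMul]

lemma continuous_vecMulg (v : Fin n → ℝ) : Continuous fun g : SLR n => v ᵥ* g.1 := by
  refine continuous_pi fun j => ?_
  simp only [Matrix.vecMul, dotProduct]
  exact continuous_finsetSum _ fun i _ => continuous_const.mul (continuous_entry i j)

lemma measurable_Es {f : (Fin n → ℝ) → ℝ≥0∞} (hf : Measurable f) : Measurable (Es f) := by
  rw [measurable_X_iff]
  simp only [Es_pr]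
  exact Measurable.ennreal_tsum fun v => hf.comp (continuous_vecMulg _).measurable

variable [NeZero n] [Nontrivial (Fin n)]

open Classical in
lemma Es_hS (p : ℕ) [Fact p.Prime] (S : Finset (Fin n)) (h : (Fin n → ℝ) → ℝ≥0∞) {y : XSpace n} (hy : y ∈ (hS p S).C) :
    Es h y = ∑' a : Fin n → ℤ, if (fun i => (a i : ZMod p)) ∈ hof p S y then h (cS p S • cz a) else 0 := by
  have h1 : ∀ v : Fin n → ℤ, ∃ a : Fin n → ℤ, cz v ᵥ* (rep y).1 = cS p S • cz a := fun v =>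
    inLat_form p S hy _ ⟨v, rfl⟩
  choose φ hφ using h1
  have hinj : Function.Injective φ := by
    intro v w hvw
    apply cz_inj
    apply vecMul_injS (rep y)
    simp only [hφ, hvw]
  have hm : ∀ v, (fun i => (φ v i : ZMod p)) ∈ hof p S y := by
    intro v
    rw [← inLat_hof p S hy]
    exact ⟨v, hφ v⟩
  rw [← hinj.tsum_eq]
  · refine tsum_congr fun v => ?_
    rw [if_pos (hm v), hφ]
  · intro a ha
    have h2 : (fun i => (a i : ZMod p)) ∈ hof p S y := by
      by_contra hcon
      exact ha (if_neg hcon)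
    rw [← inLat_hof p S hy] at h2
    obtain ⟨v, hv⟩ := h2
    refine ⟨v, cz_inj ?_⟩
    rw [hφ] at hv
    exact smul_right_injective _ (cS_pos p S).ne' hv

lemma Te_Es (p : ℕ) [Fact p.Prime] (S : Finset (Fin n)) (f : (Fin n → ℝ) → ℝ≥0∞) (g : SLR n) :
    (hS p S).Te (Es f) (pr g) = ∑' a : Fin n → ℤ, (((hS p S).C.card : ℝ≥0∞)⁻¹ * (cnt p S (fun i => (a i : ZMod p)) : ℝ≥0∞)) *
      f ((cS p S • cz a) ᵥ* g.1) := by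
  classical
  rw [HSet.Te_pr]
  have : ∀ y ∈ (hS p S).C, Es f (rightTranslate n g y) = ∑' a : Fin n → ℤ, if (fun i => (a i : ZMod p)) ∈ hof p S y then f ((cS p S • cz a) ᵥ* g.1) else 0 := by
    intro y hy
    rw [Es_rt, Es_hS p S _ hy]
  rw [Finset.sum_congr rfl this, ← Summable.tsum_finsetSum (fun _ _ => ENNReal.summable), ← ENNReal.tsum_mul_left]
  refine tsum_congr fun a => ?_
  rw [mul_assoc]
  congr 1
  rw [cnt, Finset.card_filter, Nat.cast_sum, Finset.sum_mul]
  refine Finset.sum_congr rfl fun y _ => ?_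
  split_ifs <;> simp

instance factPrimes (p : Nat.Primes) : Fact (p : ℕ).Prime := ⟨p.2⟩

/-- primes tending to infinity -/
def PF : Filter Nat.Primes := comap (fun p : Nat.Primes => (p : ℕ)) atTop

instance : PF.IsCountablyGenerated := by unfold PF; infer_instance

instance : PF.NeBot := by
  unfold PF
  rw [comap_neBot_iff_frequently]
  refine (Nat.frequently_atTop_iff_infinite.2 Nat.infinite_setOf_prime).mono fun p hp => ⟨⟨p, hp⟩, rfl⟩

lemma tendsto_PF : Tendsto (fun p : Nat.Primes => ((p : ℕ) : ℝ)) PF atTop :=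
  tendsto_natCast_atTop_atTop.comp tendsto_comap

lemma tendsto_cS (S : Finset (Fin n)) (hS : S.Nonempty) : Tendsto (fun p : Nat.Primes => cS (p : ℕ) S) PF (𝓝 0) := by
  have h0 : (0 : ℝ) < (S.card : ℝ) / n := by
    have : 0 < S.card := hS.card_pos
    have : 0 < n := NeZero.pos n
    positivity
  exact (tendsto_rpow_neg_atTop h0).comp tendsto_PF

lemma tendsto_ratio (i : ℕ) (hi : i < n) : Tendsto (fun p : Nat.Primes =>
    ((((p : ℕ) : ℝ) ^ (n - i) - 1) / (((p : ℕ) : ℝ) ^ n - 1)) * ((p : ℕ) : ℝ) ^ i) PF (𝓝 1) := by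
  have hk : ∀ k : ℕ, k ≠ 0 → Tendsto (fun p : Nat.Primes => (((p : ℕ) : ℝ) ^ k)⁻¹) PF (𝓝 0) := fun k hk =>
    tendsto_inv_atTop_zero.comp ((tendsto_pow_atTop hk).comp tendsto_PF)
  have h1 : Tendsto (fun p : Nat.Primes => (1 - (((p : ℕ) : ℝ) ^ (n - i))⁻¹) / (1 - (((p : ℕ) : ℝ) ^ n)⁻¹)) PF (𝓝 ((1 - 0) / (1 - 0))) :=
    ((hk (n - i) (by omega)).const_sub 1).div ((hk n (NeZero.ne n)).const_sub 1) (by norm_num)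
  rw [sub_zero, div_one] at h1
  refine h1.congr fun p => ?_
  have hp : (1 : ℝ) < ((p : ℕ) : ℝ) := by exact_mod_cast p.2.one_lt
  have hpn : (1 : ℝ) < ((p : ℕ) : ℝ) ^ n := one_lt_pow₀ hp (NeZero.ne n)
  have e : ((p : ℕ) : ℝ) ^ n = ((p : ℕ) : ℝ) ^ (n - i) * ((p : ℕ) : ℝ) ^ i := by
    rw [← pow_add]; congr 1; omega
  have h2 : (((p : ℕ) : ℝ) ^ n - 1) ≠ 0 := by linarith
  have h3 : (0:ℝ) < ((p : ℕ) : ℝ) ^ (n - i) := by positivity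
  have h4 : (1 - (((p : ℕ) : ℝ) ^ n)⁻¹) ≠ 0 := by
    have : (((p : ℕ) : ℝ) ^ n)⁻¹ < 1 := inv_lt_one_of_one_lt₀ hpn
    linarith
  have h5 : (0:ℝ) < ((p : ℕ) : ℝ) ^ i := by positivity
  rw [div_mul_eq_mul_div, div_eq_div_iff h4 h2, e]
  field_simp

lemma cnt_ratio (p : Nat.Primes) (S : Finset (Fin n)) (a : Fin n → ZMod p) (ha : a ≠ 0) :
    ((hS (p : ℕ) S).C.card : ℝ≥0∞)⁻¹ * (cnt (p : ℕ) S a : ℝ≥0∞) =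
      ENNReal.ofReal ((((p : ℕ) : ℝ) ^ (n - S.card) - 1) / (((p : ℕ) : ℝ) ^ n - 1)) := by
  have h := cnt_eq (p : ℕ) S a ha
  have hp : (1 : ℝ) < ((p : ℕ) : ℝ) := by exact_mod_cast p.2.one_lt
  have hpn : (1 : ℝ) < ((p : ℕ) : ℝ) ^ n := one_lt_pow₀ hp (NeZero.ne n)
  have hC : (0 : ℝ) < (hS (p : ℕ) S).C.card := by exact_mod_cast (hS (p : ℕ) S).card_pos
  have h' : (cnt (p : ℕ) S a : ℝ) * (((p : ℕ) : ℝ) ^ n - 1) = (hS (p : ℕ) S).C.card * (((p : ℕ) : ℝ) ^ (n - S.card) - 1) := by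
    have := congrArg (Nat.cast : ℕ → ℝ) h
    rw [Nat.cast_mul, Nat.cast_mul, Nat.cast_sub (Nat.one_le_pow _ _ p.2.pos), Nat.cast_sub (Nat.one_le_pow _ _ p.2.pos)] at this
    exact_mod_cast this
  have e : (((p : ℕ) : ℝ) ^ (n - S.card) - 1) / (((p : ℕ) : ℝ) ^ n - 1) = ((hS (p : ℕ) S).C.card : ℝ)⁻¹ * cnt (p : ℕ) S a := by
    rw [div_eq_iff (by linarith), mul_assoc, h', inv_mul_cancel_left₀ hC.ne']
  rw [e, ENNReal.ofReal_mul (by positivity), ENNReal.ofReal_inv_of_pos hC, ENNReal.ofReal_natCast, ENNReal.ofReal_natCast]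

theorem limA {f : (Fin n → ℝ) → ℝ≥0∞} (hf : Nice f) (h0 : f 0 = 0) (S : Finset (Fin n)) (hS1 : S.Nonempty)
    (hS2 : Sᶜ.Nonempty) (x : XSpace n) :
    Tendsto (fun p : Nat.Primes => (hS (p : ℕ) S).Te (Es f) x) PF (𝓝 (∫⁻ w, f w)) := by
  obtain ⟨g, rfl⟩ := pr_surj x
  have hh := hf.comp g
  set h : (Fin n → ℝ) → ℝ≥0∞ := fun w => f (w ᵥ* g.1) with hhdef
  have hh0 : h 0 = 0 := by simp [h, h0]
  rw [← lintegral_vecMul hf.meas g]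
  obtain ⟨R, hR0, hR⟩ := hh.supp
  have hlt : S.card < n := by
    have := Finset.card_add_card_compl S
    rw [Fintype.card_fin] at this
    have := hS2.card_pos
    omega
  have hbig : ∀ᶠ p : Nat.Primes in PF, R < cS (p : ℕ) S * ((p : ℕ) : ℝ) := by
    have h1 := (tendsto_cS Sᶜ hS2).eventually_lt_const (inv_pos.2 hR0)
    filter_upwards [h1] with p hp
    have h2 := cS_compl (p : ℕ) S
    have h3 := cS_pos (p : ℕ) Sᶜ
    have h4 : cS (p : ℕ) S * ((p : ℕ) : ℝ) = (cS (p : ℕ) Sᶜ)⁻¹ := by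
      exact eq_inv_of_mul_eq_one_left (by linarith)
    rw [h4]
    exact (lt_inv_comm₀ hR0 h3).2 hp
  have hmain : (fun p : Nat.Primes => (hS (p : ℕ) S).Te (Es f) (pr g)) =ᶠ[PF] fun p =>
      ENNReal.ofReal (((((p : ℕ) : ℝ) ^ (n - S.card) - 1) / (((p : ℕ) : ℝ) ^ n - 1)) * ((p : ℕ) : ℝ) ^ S.card) *
      (ENNReal.ofReal (cS (p : ℕ) S ^ n) * ∑' a : Fin n → ℤ, h (cS (p : ℕ) S • cz a)) := by
    filter_upwards [hbig] with p hp
    rw [Te_Es, ← mul_assoc, ← ENNReal.tsum_mul_left]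
    have hp1 : (1 : ℝ) < ((p : ℕ) : ℝ) := by exact_mod_cast p.2.one_lt
    have hpn : (1 : ℝ) < ((p : ℕ) : ℝ) ^ n := one_lt_pow₀ hp1 (NeZero.ne n)
    have hpi : (1 : ℝ) ≤ ((p : ℕ) : ℝ) ^ (n - S.card) := one_le_pow₀ hp1.le
    refine tsum_congr fun a => ?_
    change _ * h (cS (p : ℕ) S • cz a) = _
    by_cases ha : (fun i => (a i : ZMod (p : ℕ))) = 0
    · have : h (cS (p : ℕ) S • cz a) = 0 := by
        by_cases ha0 : a = 0
        · subst ha0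
          have : cS (p : ℕ) S • cz (0 : Fin n → ℤ) = 0 := by ext i; simp
          rw [this, hh0]
        · obtain ⟨i, hi⟩ := Function.ne_iff.1 ha0
          apply hR
          have hd : ((p : ℕ) : ℤ) ∣ a i := (ZMod.intCast_zmod_eq_zero_iff_dvd _ _).1 (congrFun ha i)
          have h1 : ((p : ℕ) : ℝ) ≤ |(a i : ℝ)| := by
            have := Int.le_of_dvd (abs_pos.2 hi) ((dvd_abs _ _).2 hd)
            exact_mod_cast this
          have h2 := norm_le_pi_norm (cS (p : ℕ) S • cz a) i
          have h3 : ‖(cS (p : ℕ) S • cz a) i‖ = cS (p : ℕ) S * |(a i : ℝ)| := by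
            change |cS (p : ℕ) S * (a i : ℝ)| = _
            rw [abs_mul, abs_of_pos (cS_pos _ _)]
          rw [h3] at h2
          have h4 := cS_pos (p : ℕ) S
          nlinarith
      rw [this, mul_zero, mul_zero]
    · rw [cnt_ratio p S _ ha, ← ENNReal.ofReal_mul]
      · congr 2
        rw [mul_assoc, mul_comm (((p : ℕ) : ℝ) ^ S.card), cS_pow, mul_one]
      · exact mul_nonneg (div_nonneg (by linarith) (by linarith)) (by positivity)
  refine Tendsto.congr' hmain.symm ?_
  have h1 := ENNReal.tendsto_ofReal (tendsto_ratio (n := n) S.card hlt)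
  have h2 := riemann hh (fun p : Nat.Primes => cS (p : ℕ) S) (fun p => cS_pos _ _) (tendsto_cS S hS1)
  have h3 := ENNReal.Tendsto.mul h1 (Or.inl (by simp)) h2 (Or.inr (by simp))
  simpa using h3

lemma Nice.lintegral_ne_top {f : (Fin n → ℝ) → ℝ≥0∞} (hf : Nice f) : ∫⁻ w, f w ≠ ∞ := by
  obtain ⟨B, hB, hb⟩ := hf.bdd
  obtain ⟨R, hR0, hR⟩ := hf.supp
  have : ∫⁻ w, f w ≤ ∫⁻ w, ((Metric.closedBall (0 : Fin n → ℝ) R).indicator fun _ => B) w := by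
    refine lintegral_mono fun w => ?_
    by_cases hx : w ∈ Metric.closedBall (0 : Fin n → ℝ) R
    · rw [Set.indicator_of_mem hx]; exact hb _
    · rw [Set.indicator_of_notMem hx, hR]
      rwa [mem_closedBall_zero_iff, not_le] at hx
  refine ne_top_of_le_ne_top ?_ this
  rw [lintegral_indicator_const Metric.isClosed_closedBall.measurableSet]
  exact ENNReal.mul_ne_top hB measure_closedBall_lt_top.ne

lemma hS_inv (p : ℕ) [Fact p.Prime] (S : Finset (Fin n)) : (hS p Sᶜ).d = ((hS p S).d)⁻¹ := dS_compl p S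

lemma exists_S : ∃ S : Finset (Fin n), S.Nonempty ∧ Sᶜ.Nonempty := by
  obtain ⟨a, b, hab⟩ := exists_pair_ne (Fin n)
  exact ⟨{a}, ⟨a, by simp⟩, ⟨b, by simp [hab.symm]⟩⟩

theorem siegel (μ : Measure (XSpace n)) [IsProbabilityMeasure μ] (hinv : ∀ g, Measure.map (rightTranslate n g) μ = μ)
    {f : (Fin n → ℝ) → ℝ≥0∞} (hf : Nice f) (h0 : f 0 = 0) : ∫⁻ x, Es f x ∂μ ≤ ∫⁻ w, f w := by
  obtain ⟨S, hS1, hS2⟩ := exists_S (n := n)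
  have hm := measurable_Es hf.meas
  have key : ∀ R : ℕ, ∫⁻ x, min (Es f x) R ∂μ ≤ ∫⁻ w, f w := by
    intro R
    have hmR : Measurable fun x => min (Es f x) (R : ℝ≥0∞) := hm.min measurable_const
    have h1 : ∀ p : Nat.Primes, ∫⁻ x, min (Es f x) R ∂μ ≤ ∫⁻ x, min ((hS (p : ℕ) S).Te (Es f) x) R ∂μ := by
      intro p
      rw [← hecke_lintegral (hS (p : ℕ) S) (hS (p : ℕ) Sᶜ) (hS_inv _ _) μ hinv hmR]
      refine lintegral_mono fun x => le_min ?_ ?_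
      · exact HSet.Te_mono _ (fun y => min_le_left _ _) x
      · exact (HSet.Te_mono _ (fun y => min_le_right _ _) x).trans_eq (HSet.Te_one _ _ _)
    have h2 : Tendsto (fun p : Nat.Primes => ∫⁻ x, min ((hS (p : ℕ) S).Te (Es f) x) R ∂μ) PF
        (𝓝 (∫⁻ x, min (∫⁻ w, f w) R ∂μ)) := by
      refine tendsto_lintegral_filter_of_dominated_convergence (fun _ => (R : ℝ≥0∞))
        (Eventually.of_forall fun p => ((hS (p : ℕ) S).measurable_Te hm).min measurable_const)
        (Eventually.of_forall fun p => Eventually.of_forall fun x => min_le_right _ _) (by simp) ?_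
      exact Eventually.of_forall fun x => (limA hf h0 S hS1 hS2 x).min tendsto_const_nhds
    refine (ge_of_tendsto h2 (Eventually.of_forall h1)).trans ?_
    rw [lintegral_const, measure_univ, mul_one]
    exact min_le_left _ _
  have hlim : Tendsto (fun R : ℕ => ∫⁻ x, min (Es f x) R ∂μ) atTop (𝓝 (∫⁻ x, Es f x ∂μ)) := by
    refine lintegral_tendsto_of_tendsto_of_monotone (fun R => (hm.min measurable_const).aemeasurable) ?_ ?_
    · refine Eventually.of_forall fun x a b hab => ?_
      exact min_le_min_left _ (by exact_mod_cast hab)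
    · refine Eventually.of_forall fun x => ?_
      have : Tendsto (fun R : ℕ => min (Es f x) (R : ℝ≥0∞)) atTop (𝓝 (min (Es f x) ∞)) :=
        tendsto_const_nhds.min ENNReal.tendsto_nat_nhds_top
      simpa using this
  exact le_of_tendsto' hlim key

theorem limRho (μ : Measure (XSpace n)) [IsProbabilityMeasure μ] (hinv : ∀ g, Measure.map (rightTranslate n g) μ = μ)
    {f : (Fin n → ℝ) → ℝ≥0∞} (hf : Nice f) (h0 : f 0 = 0) (S : Finset (Fin n)) (hS1 : S.Nonempty)
    (hS2 : Sᶜ.Nonempty) :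
    Tendsto (fun p : Nat.Primes => ∫⁻ x, ((hS (p : ℕ) S).Te (Es f) x - ∫⁻ w, f w) ∂μ) PF (𝓝 0) := by
  have hm := measurable_Es hf.meas
  set I := ∫⁻ w, f w with hI
  have hIf : I ≠ ∞ := hf.lintegral_ne_top
  have h1 : Tendsto (fun p : Nat.Primes => ∫⁻ x, (I - (hS (p : ℕ) S).Te (Es f) x) ∂μ) PF (𝓝 0) := by
    have : Tendsto (fun p : Nat.Primes => ∫⁻ x, (I - (hS (p : ℕ) S).Te (Es f) x) ∂μ) PF (𝓝 (∫⁻ x, (I - I) ∂μ)) := by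
      refine tendsto_lintegral_filter_of_dominated_convergence (fun _ => I)
        (Eventually.of_forall fun p => measurable_const.sub ((hS (p : ℕ) S).measurable_Te hm))
        (Eventually.of_forall fun p => Eventually.of_forall fun x => tsub_le_self) (by simpa using hIf) ?_
      exact Eventually.of_forall fun x =>
        ENNReal.Tendsto.sub tendsto_const_nhds (limA hf h0 S hS1 hS2 x) (Or.inl hIf)
    simpa using this
  refine tendsto_of_tendsto_of_tendsto_of_le_of_le tendsto_const_nhds h1 (fun _ => zero_le) fun p => ?_
  have hT := (hS (p : ℕ) S).measurable_Te hm
  have e1 : ∫⁻ x, ((hS (p : ℕ) S).Te (Es f) x - I) ∂μ + I = ∫⁻ x, (hS (p : ℕ) S).Te (Es f) x ∂μ + ∫⁻ x, (I - (hS (p : ℕ) S).Te (Es f) x) ∂μ := by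
    have : I = ∫⁻ x, I ∂μ := by simp
    conv_lhs => rw [this]
    rw [← lintegral_add_right _ measurable_const, ← lintegral_add_left hT]
    refine lintegral_congr fun x => ?_
    rw [← this, tsub_add_eq_max, add_tsub_eq_max]
  have e2 : ∫⁻ x, (hS (p : ℕ) S).Te (Es f) x ∂μ ≤ I := by
    rw [hecke_lintegral (hS (p : ℕ) S) (hS (p : ℕ) Sᶜ) (hS_inv _ _) μ hinv hm]
    exact siegel μ hinv hf h0
  have e3 : ∫⁻ x, ((hS (p : ℕ) S).Te (Es f) x - I) ∂μ + I ≤ ∫⁻ x, (I - (hS (p : ℕ) S).Te (Es f) x) ∂μ + I := by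
    rw [e1, add_comm]; gcongr
  exact (ENNReal.add_le_add_iff_right hIf).1 e3

end Siegel

end ModuleB7

section ModuleB8
open Matrix MeasureTheory Topology
open scoped ENNReal Pointwise

section Unip
open Filter
variable {n : ℕ}

/-- kill coordinate i0 -/
def kz (i0 : Fin n) (t : Fin n → ℝ) : Fin n → ℝ := fun k => if k = i0 then 0 else t k

lemma det_rank1 (a b : Fin n → ℝ) (h : b ⬝ᵥ a = 0) : (1 + vecMulVec a b).det = 1 := by
  have := Matrix.det_one_add_replicateCol_mul_replicateRow (ι := Unit) a b
  rw [h, add_zero] at this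
  rw [← this, Matrix.vecMulVec_eq Unit]

/-- lower unipotent column -/
def uu (i0 : Fin n) (t : Fin n → ℝ) : SLR n := ⟨1 + vecMulVec (kz i0 t) (Pi.single i0 1), det_rank1 _ _ (by simp [kz])⟩
/-- upper unipotent row -/
def nn (i0 : Fin n) (q : Fin n → ℝ) : SLR n := ⟨1 + vecMulVec (Pi.single i0 1) (kz i0 q), det_rank1 _ _ (by simp [kz])⟩

variable (i0 : Fin n)

lemma kz_add (s t : Fin n → ℝ) : kz i0 (s + t) = kz i0 s + kz i0 t := by
  funext k; by_cases h : k = i0 <;> simp [kz, h]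

lemma uu_add (s t : Fin n → ℝ) : uu i0 (s + t) = uu i0 s * uu i0 t := by
  apply Subtype.ext
  rw [Matrix.SpecialLinearGroup.coe_mul]
  change 1 + vecMulVec (kz i0 (s + t)) (Pi.single i0 1) = (1 + vecMulVec (kz i0 s) (Pi.single i0 1)) * (1 + vecMulVec (kz i0 t) (Pi.single i0 1))
  have h0 : (Pi.single i0 (1:ℝ) : Fin n → ℝ) ⬝ᵥ kz i0 t = 0 := by simp [kz]
  rw [kz_add, Matrix.add_vecMulVec, mul_add, add_mul, add_mul, Matrix.vecMulVec_mul_vecMulVec, h0]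
  simp
  abel

lemma nn_add (s t : Fin n → ℝ) : nn i0 (s + t) = nn i0 s * nn i0 t := by
  apply Subtype.ext
  rw [Matrix.SpecialLinearGroup.coe_mul]
  change 1 + vecMulVec (Pi.single i0 1) (kz i0 (s + t)) = (1 + vecMulVec (Pi.single i0 1) (kz i0 s)) * (1 + vecMulVec (Pi.single i0 1) (kz i0 t))
  have h0 : kz i0 s ⬝ᵥ (Pi.single i0 (1:ℝ) : Fin n → ℝ) = 0 := by simp [kz]
  rw [kz_add, Matrix.vecMulVec_add, mul_add, add_mul, add_mul, Matrix.vecMulVec_mul_vecMulVec, h0]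
  simp
  abel

lemma uu_zero : uu i0 0 = 1 := by
  apply Subtype.ext
  change 1 + vecMulVec (kz i0 0) (Pi.single i0 1) = 1
  have : kz i0 0 = 0 := by funext k; simp [kz]
  rw [this]; simp

lemma nn_zero : nn i0 0 = 1 := by
  apply Subtype.ext
  change 1 + vecMulVec (Pi.single i0 1) (kz i0 0) = 1
  have : kz i0 0 = 0 := by funext k; simp [kz]
  rw [this]; simp

lemma uu_neg (t : Fin n → ℝ) : uu i0 (-t) = (uu i0 t)⁻¹ := by
  rw [eq_inv_iff_mul_eq_one, ← uu_add, neg_add_cancel, uu_zero]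

lemma nn_neg (t : Fin n → ℝ) : nn i0 (-t) = (nn i0 t)⁻¹ := by
  rw [eq_inv_iff_mul_eq_one, ← nn_add, neg_add_cancel, nn_zero]

lemma uu_pow (t : Fin n → ℝ) (k : ℕ) : uu i0 t ^ k = uu i0 ((k : ℝ) • t) := by
  induction k with
  | zero => simp [uu_zero]
  | succ k ih => rw [pow_succ, ih, ← uu_add]; congr 1; push_cast; rw [add_smul, one_smul]

lemma uu_apply (t : Fin n → ℝ) (k l : Fin n) : (uu i0 t).1 k l = (1 : Matrix (Fin n) (Fin n) ℝ) k l + kz i0 t k * (Pi.single i0 1 : Fin n → ℝ) l := rfl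
lemma nn_apply (q : Fin n → ℝ) (k l : Fin n) : (nn i0 q).1 k l = (1 : Matrix (Fin n) (Fin n) ℝ) k l + (Pi.single i0 1 : Fin n → ℝ) k * kz i0 q l := rfl

lemma continuous_kz (k : Fin n) : Continuous fun t => kz i0 t k := by
  unfold kz; split_ifs <;> fun_prop

lemma continuous_uu : Continuous (uu i0) := by
  apply continuous_toSLR
  intro a b
  simp only [uu_apply]
  exact continuous_const.add ((continuous_kz i0 a).mul continuous_const)

lemma continuous_nn : Continuous (nn i0) := by
  apply continuous_toSLR
  intro a b
  simp only [nn_apply]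
  exact continuous_const.add (continuous_const.mul (continuous_kz i0 b))

lemma uu_mem (k : Fin n → ℤ) : uu i0 (cz k) ∈ Gamma n := by
  refine mem_Gamma_of_int fun a b => ⟨(1 : Matrix (Fin n) (Fin n) ℤ) a b + (if a = i0 then 0 else k a) * (Pi.single i0 1 : Fin n → ℤ) b, ?_⟩
  rw [uu_apply]
  simp only [kz, Matrix.one_apply, Pi.single_apply]
  push_cast
  rfl

lemma tv_eq_uu {i0 i1 : Fin n} (h01 : i0 ≠ i1) : tv h01.symm 1 = uu i0 (Pi.single i1 1) := by
  refine Matrix.SpecialLinearGroup.ext _ _ fun k l => ?_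
  change Matrix.transvection i1 i0 (1:ℝ) k l = (1 : Matrix (Fin n) (Fin n) ℝ) k l + kz i0 (Pi.single i1 1) k * (Pi.single i0 1 : Fin n → ℝ) l
  simp only [Matrix.transvection, Matrix.add_apply, Matrix.single_apply, kz, Pi.single_apply]
  by_cases h1 : k = i0 <;> by_cases h2 : l = i0 <;> by_cases h3 : k = i1 <;> simp_all [eq_comm]

/-- parabolic condition -/
def IsP (p0 : SLR n) : Prop := 0 < p0.1 i0 i0 ∧ ∀ l, l ≠ i0 → p0.1 i0 l = 0

/-- conjugation action on the unipotent -/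
def LL (p0 : SLR n) : Matrix (Fin n) (Fin n) ℝ :=
  Matrix.of fun k l => if l = i0 then (if k = i0 then 1 else 0) else (p0.1 i0 i0)⁻¹ * p0.1 k l

lemma conj_uu {p0 : SLR n} (hp : IsP i0 p0) (s : Fin n → ℝ) : p0 * uu i0 s = uu i0 (LL i0 p0 *ᵥ s) * p0 := by
  apply Subtype.ext
  rw [Matrix.SpecialLinearGroup.coe_mul, Matrix.SpecialLinearGroup.coe_mul]
  change p0.1 * (1 + vecMulVec (kz i0 s) (Pi.single i0 1)) = (1 + vecMulVec (kz i0 (LL i0 p0 *ᵥ s)) (Pi.single i0 1)) * p0.1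
  rw [mul_add, add_mul, mul_one, one_mul, Matrix.mul_vecMulVec, Matrix.vecMulVec_mul, Matrix.single_one_vecMul]
  congr 1
  ext k l
  have hrow : p0.1.row i0 l = p0.1 i0 i0 * (Pi.single i0 1 : Fin n → ℝ) l := by
    by_cases h : l = i0
    · subst h; simp
    · simp [h, hp.2 l h]
  rw [vecMulVec_apply, vecMulVec_apply, hrow, ← mul_assoc]
  congr 1
  have ha := hp.1.ne'
  simp only [Matrix.mulVec, dotProduct, kz]
  by_cases hk : k = i0
  · subst hk
    simp only [if_true, zero_mul]
    refine Finset.sum_eq_zero fun l _ => ?_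
    by_cases hl : l = k
    · simp [hl]
    · simp [hp.2 l hl]
  · simp only [hk, if_false]
    rw [Finset.sum_mul]
    refine Finset.sum_congr rfl fun l _ => ?_
    by_cases hl : l = i0
    · simp [LL, hl, hk]
    · simp only [hl, LL, Matrix.of_apply, if_false]; field_simp

/-- the unit cube -/
def QQ : Set (Fin n → ℝ) := ZSpan.fundamentalDomain (Pi.basisFun ℝ (Fin n))

lemma QQ_eq : (QQ : Set (Fin n → ℝ)) = Set.pi Set.univ fun _ => Set.Ico (0 : ℝ) 1 := ZSpan.fundamentalDomain_pi_basisFun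

lemma measurable_QQ : MeasurableSet (QQ : Set (Fin n → ℝ)) := ZSpan.fundamentalDomain_measurableSet _

lemma vol_QQ : volume (QQ : Set (Fin n → ℝ)) = 1 := by
  rw [QQ_eq, Real.volume_pi_Ico]; simp

lemma norm_QQ {t : Fin n → ℝ} (ht : t ∈ (QQ : Set (Fin n → ℝ))) : ‖t‖ ≤ 1 := by
  rw [QQ_eq] at ht
  rw [pi_norm_le_iff_of_nonneg zero_le_one]
  intro i
  have := ht i (Set.mem_univ i)
  rw [Real.norm_eq_abs, abs_of_nonneg this.1]
  exact this.2.le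

lemma periodic_shift (F : (Fin n → ℝ) → ℝ) (hF : ∀ (k : Fin n → ℤ) t, F (cz k + t) = F t) (b : Fin n → ℝ) :
    ∫ t in QQ, F (t + b) = ∫ t in QQ, F t := by
  have hfd := ZSpan.isAddFundamentalDomain (Pi.basisFun ℝ (Fin n)) volume
  have hfd2 := hfd.vadd_of_comm b
  have hinv : ∀ (g : Submodule.span ℤ (Set.range (Pi.basisFun ℝ (Fin n)))) (x : Fin n → ℝ), F (g +ᵥ x) = F x := by
    intro g x
    have h2 : ∃ k : Fin n → ℤ, cz k = (g : Fin n → ℝ) := by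
      have := (Module.Basis.mem_span_iff_repr_mem ℤ (Pi.basisFun ℝ (Fin n)) (g : Fin n → ℝ)).1 g.2
      choose k hk using this
      exact ⟨k, funext fun i => by simpa using hk i⟩
    obtain ⟨k, hk⟩ := h2
    change F ((g : Fin n → ℝ) + x) = F x
    rw [← hk, hF]
  haveI : VAddInvariantMeasure (Submodule.span ℤ (Set.range (Pi.basisFun ℝ (Fin n)))) (Fin n → ℝ) volume :=
    ⟨fun c s hs => by
      change volume ((fun x => (c : Fin n → ℝ) + x) ⁻¹' s) = volume s
      exact measure_preimage_add _ _ _⟩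
  have h1 := hfd.setIntegral_eq hfd2 hinv
  change ∫ t in ZSpan.fundamentalDomain (Pi.basisFun ℝ (Fin n)), F (t + b) = ∫ t in ZSpan.fundamentalDomain (Pi.basisFun ℝ (Fin n)), F t
  rw [h1]
  have h3 := (measurePreserving_vadd b (volume : Measure (Fin n → ℝ))).setIntegral_image_emb (measurableEmbedding_const_vadd b) F (ZSpan.fundamentalDomain (Pi.basisFun ℝ (Fin n)))
  rw [show b +ᵥ ZSpan.fundamentalDomain (Pi.basisFun ℝ (Fin n)) = (fun x => b +ᵥ x) '' ZSpan.fundamentalDomain (Pi.basisFun ℝ (Fin n)) from rfl, h3]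
  simp only [vadd_eq_add, add_comm]

end Unip

end ModuleB8

section ModuleB9
open Matrix MeasureTheory Topology
open scoped ENNReal Pointwise

section UCsec
open Filter
variable {n : ℕ}

/-- uniform continuity along the group action -/
def UC (η : XSpace n → ℝ) : Prop := ∀ ε : ℝ, 0 < ε → ∀ᶠ g in 𝓝 (1 : SLR n), ∀ x, |η (rightTranslate n g x) - η x| ≤ ε

lemma UC.continuous {η : XSpace n → ℝ} (h : UC η) : Continuous η := by
  rw [continuous_X_iff]
  rw [continuous_iff_continuousAt]
  intro g
  rw [ContinuousAt, Metric.tendsto_nhds]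
  intro ε hε
  have h1 : Tendsto (fun a : SLR n => g⁻¹ * a) (𝓝 g) (𝓝 1) := by
    have : Continuous fun a : SLR n => g⁻¹ * a := by fun_prop
    simpa using this.tendsto g
  filter_upwards [h1.eventually (h (ε / 2) (by positivity))] with a ha
  have := ha (pr g)
  rw [rt_pr] at this
  simp only [mul_inv_cancel_left] at this
  rw [Real.dist_eq]
  linarith

lemma UC.rt {η : XSpace n → ℝ} (h : UC η) (u : SLR n) : UC (fun x => η (rightTranslate n u x)) := by
  intro ε hε
  have h1 : Tendsto (fun g : SLR n => u⁻¹ * g * u) (𝓝 1) (𝓝 1) := by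
    have : Continuous fun g : SLR n => u⁻¹ * g * u := by fun_prop
    simpa using this.tendsto 1
  filter_upwards [h1.eventually (h ε hε)] with g hg x
  have := hg (rightTranslate n u x)
  rw [← rt_mul] at this ⊢
  simpa [mul_assoc] using this

lemma UC.AK {η : XSpace n → ℝ} (h : UC η) (u : SLR n) (K : ℕ) : UC (AK u K η) := by
  intro ε hε
  have h1 : ∀ᶠ g in 𝓝 (1 : SLR n), ∀ k ∈ Finset.range K, ∀ x, |η (rightTranslate n (u ^ k) (rightTranslate n g x)) - η (rightTranslate n (u ^ k) x)| ≤ ε := by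
    rw [Filter.eventually_all_finset]
    intro k _
    exact (h.rt (u ^ k)) ε hε
  filter_upwards [h1] with g hg x
  unfold _root_.AK
  rw [← mul_sub, ← Finset.sum_sub_distrib, abs_mul, abs_of_nonneg (by positivity)]
  rcases K.eq_zero_or_pos with rfl | hK
  · simpa using hε.le
  have : |∑ k ∈ Finset.range K, (η (rightTranslate n (u ^ k) (rightTranslate n g x)) - η (rightTranslate n (u ^ k) x))| ≤ K * ε := by
    refine (Finset.abs_sum_le_sum_abs _ _).trans ?_
    refine (Finset.sum_le_sum fun k hk => hg k hk x).trans ?_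
    simp
  calc _ ≤ (K : ℝ)⁻¹ * (K * ε) := by gcongr
    _ = ε := by field_simp

lemma UC.abs {η : XSpace n → ℝ} (h : UC η) : UC (fun x => |η x|) := by
  intro ε hε
  filter_upwards [h ε hε] with g hg x
  exact (abs_abs_sub_abs_le _ _).trans (hg x)

lemma UC.sub_const {η : XSpace n → ℝ} (h : UC η) (c : ℝ) : UC (fun x => η x - c) := by
  intro ε hε
  filter_upwards [h ε hε] with g hg x
  simpa using hg x

lemma HSet.T_close (S : HSet n) {f g : XSpace n → ℝ} {ε : ℝ} (h : ∀ x, |f x - g x| ≤ ε) (x : XSpace n) :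
    |S.T f x - S.T g x| ≤ ε := by
  rw [← S.T_sub]
  refine (S.T_abs _ _).trans ?_
  exact (S.T_mono h x).trans_eq (S.T_const _ _)

lemma HSet.T_bound (S : HSet n) {f : XSpace n → ℝ} {B : ℝ} (h : ∀ x, |f x| ≤ B) (x : XSpace n) :
    |S.T f x| ≤ B := (S.T_abs _ _).trans ((S.T_mono h x).trans_eq (S.T_const _ _))

lemma HSet.Te_add_const (S : HSet n) {f g : XSpace n → ℝ≥0∞} {c : ℝ≥0∞} (h : ∀ x, f x ≤ g x + c) (x : XSpace n) :
    S.Te f x ≤ S.Te g x + c := by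
  refine (S.Te_mono h x).trans_eq ?_
  conv_rhs => rw [← S.Te_one c x]
  unfold HSet.Te
  rw [Finset.sum_add_distrib, mul_add]

lemma HSet.T_AK (S : HSet n) (u : SLR n) (K : ℕ) (η : XSpace n → ℝ) (x : XSpace n) :
    S.T (_root_.AK u K η) x = (K : ℝ)⁻¹ * ∑ k ∈ Finset.range K, S.T (fun y => η (rightTranslate n (u ^ k) y)) x := by
  unfold _root_.AK
  rw [S.T_const_mul, S.T_finset_sum]

variable (i0 : Fin n)

lemma unfold_bound (S : HSet n) {p0 : SLR n} (hp : IsP i0 p0) (hdet : (LL i0 p0).det ≠ 0) (hdet2 : |(LL i0 p0).det| ≤ 2)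
    (hLL : ∀ s, ‖s‖ ≤ 2 * ‖LL i0 p0 *ᵥ s‖) {η : XSpace n → ℝ} (hη : Continuous η) {B : ℝ} (hB : ∀ x, |η x| ≤ B)
    (e : Fin n → ℝ) {K : ℕ} (hK : K ≠ 0) :
    ENNReal.ofReal |∫ t in QQ, S.T η (pr (uu i0 t * p0))| ≤
      2 * ∫⁻ s in Metric.closedBall 0 2, S.Te (fun x => ENNReal.ofReal |AK (uu i0 e) K η x|) (pr (p0 * uu i0 s)) := by
  set u := uu i0 e with hu
  have hQf : IsFiniteMeasure (volume.restrict (QQ : Set (Fin n → ℝ))) := ⟨by rw [Measure.restrict_apply_univ, vol_QQ]; exact ENNReal.one_lt_top⟩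
  have hcont : ∀ f : XSpace n → ℝ, Continuous f → Continuous fun t => S.T f (pr (uu i0 t * p0)) := by
    intro f hf
    exact (S.continuous_T hf).comp (continuous_pr.comp ((continuous_uu i0).mul continuous_const))
  have hIntg : ∀ f : XSpace n → ℝ, Continuous f → (∀ x, |f x| ≤ B) → Integrable (fun t => S.T f (pr (uu i0 t * p0))) (volume.restrict QQ) := by
    intro f hf hB
    exact Integrable.of_bound (hcont f hf).aestronglyMeasurable B (Eventually.of_forall fun t => S.T_bound hB _)
  have hper : ∀ (k : Fin n → ℤ) t, S.T η (pr (uu i0 (cz k + t) * p0)) = S.T η (pr (uu i0 t * p0)) := by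
    intro k t
    rw [uu_add, mul_assoc, pr_gamma (uu_mem i0 k)]
  have hk : ∀ k : ℕ, ∫ t in QQ, S.T (fun y => η (rightTranslate n (u ^ k) y)) (pr (uu i0 t * p0)) = ∫ t in QQ, S.T η (pr (uu i0 t * p0)) := by
    intro k
    rw [← periodic_shift (fun t => S.T η (pr (uu i0 t * p0))) hper (LL i0 p0 *ᵥ ((k : ℝ) • e))]
    refine integral_congr_ae (Eventually.of_forall fun t => ?_)
    simp only
    rw [← S.T_rt, rt_pr, uu_add, mul_assoc, mul_assoc, ← conj_uu i0 hp, hu, uu_pow]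
  have h1 : ∫ t in QQ, S.T η (pr (uu i0 t * p0)) = ∫ t in QQ, S.T (AK u K η) (pr (uu i0 t * p0)) := by
    simp only [S.T_AK]
    rw [integral_const_mul, integral_finset_sum]
    · rw [Finset.sum_congr rfl fun k _ => hk k]
      simp [hK]
    · intro k _
      exact hIntg _ (hη.comp (continuous_rt _)) fun x => hB _
  rw [h1]
  set G : (Fin n → ℝ) → ℝ≥0∞ := fun t => S.Te (fun x => ENNReal.ofReal |AK u K η x|) (pr (uu i0 t * p0)) with hG
  have hGm : Measurable G := by
    refine (S.measurable_Te ?_).comp (continuous_pr.comp ((continuous_uu i0).mul continuous_const)).measurable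
    exact (continuous_AK u K hη).abs.measurable.ennreal_ofReal
  have h2 : ENNReal.ofReal |∫ t in QQ, S.T (AK u K η) (pr (uu i0 t * p0))| ≤ ∫⁻ t in QQ, G t := by
    rw [← Real.norm_eq_abs, ofReal_norm]
    refine (enorm_integral_le_lintegral_enorm _).trans ?_
    refine lintegral_mono fun t => ?_
    rw [← ofReal_norm, Real.norm_eq_abs]
    refine (ENNReal.ofReal_le_ofReal (S.T_abs _ _)).trans ?_
    rw [S.ofReal_T (fun x => abs_nonneg _)]
  refine h2.trans ?_
  have hmap := Real.map_matrix_volume_pi_eq_smul_volume_pi hdet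
  have hLm : Measurable (Matrix.toLin' (LL i0 p0)) := (LinearMap.continuous_of_finiteDimensional _).measurable
  have h3 : ∫⁻ t in QQ, G t = ENNReal.ofReal |(LL i0 p0).det| * ∫⁻ s, QQ.indicator G (LL i0 p0 *ᵥ s) := by
    have e1 : ∫⁻ s, QQ.indicator G (LL i0 p0 *ᵥ s) = ∫⁻ t, QQ.indicator G t ∂(Measure.map (Matrix.toLin' (LL i0 p0)) volume) := by
      rw [lintegral_map (hGm.indicator measurable_QQ) hLm]
      rfl
    rw [e1, hmap, lintegral_smul_measure, smul_eq_mul, ← mul_assoc, ← ENNReal.ofReal_mul (abs_nonneg _), ← abs_mul, mul_inv_cancel₀ hdet,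
      lintegral_indicator measurable_QQ]
    simp
  rw [h3]
  have h4 : ∫⁻ s, QQ.indicator G (LL i0 p0 *ᵥ s) ≤ ∫⁻ s in Metric.closedBall 0 2, S.Te (fun x => ENNReal.ofReal |AK u K η x|) (pr (p0 * uu i0 s)) := by
    rw [← lintegral_indicator Metric.isClosed_closedBall.measurableSet]
    refine lintegral_mono fun s => ?_
    by_cases hs : LL i0 p0 *ᵥ s ∈ (QQ : Set (Fin n → ℝ))
    · have : s ∈ Metric.closedBall (0 : Fin n → ℝ) 2 := by
        rw [mem_closedBall_zero_iff]
        have := norm_QQ hs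
        linarith [hLL s]
      rw [Set.indicator_of_mem hs, Set.indicator_of_mem this, hG, conj_uu i0 hp]
    · rw [Set.indicator_of_notMem hs]; exact zero_le
  have h5 : ENNReal.ofReal |(LL i0 p0).det| ≤ 2 := by
    rw [show (2 : ℝ≥0∞) = ENNReal.ofReal 2 by simp]
    exact ENNReal.ofReal_le_ofReal hdet2
  exact mul_le_mul' h5 h4

end UCsec

end ModuleB9

section ModuleB10
open Matrix MeasureTheory Topology
open scoped ENNReal Pointwise

section Vfam
open Filter
variable {n : ℕ}

lemma mu_open_pos (μ : Measure (XSpace n)) [IsProbabilityMeasure μ] (hinv : ∀ g, Measure.map (rightTranslate n g) μ = μ)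
    {U : Set (XSpace n)} (hU : IsOpen U) (hne : U.Nonempty) : μ U ≠ 0 := by
  intro h0
  have hcov : (Set.univ : Set (XSpace n)) ⊆ ⋃ i : ℕ, rightTranslate n (TopologicalSpace.denseSeq (SLR n) i) ⁻¹' U := by
    intro x _
    obtain ⟨g, rfl⟩ := pr_surj x
    obtain ⟨y, hy⟩ := hne
    obtain ⟨h, rfl⟩ := pr_surj y
    have ho : IsOpen {a : SLR n | pr (g * a) ∈ U} := hU.preimage (continuous_pr.comp (continuous_const.mul continuous_id))
    obtain ⟨a, ha⟩ := (TopologicalSpace.denseRange_denseSeq (SLR n)).exists_mem_open ho ⟨g⁻¹ * h, by simpa using hy⟩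
    refine Set.mem_iUnion.2 ⟨a, ?_⟩
    simpa using ha
  have h1 : ∀ i : ℕ, μ (rightTranslate n (TopologicalSpace.denseSeq (SLR n) i) ⁻¹' U) = 0 := by
    intro i
    rw [(mp_rt hinv _).measure_preimage hU.measurableSet.nullMeasurableSet, h0]
  have := measure_mono hcov (μ := μ)
  rw [measure_iUnion_null h1, measure_univ] at this
  simp at this

lemma nice_indicator {B : Set (Fin n → ℝ)} (hm : MeasurableSet B) (hb : Bornology.IsBounded B) (hf : volume (frontier B) = 0) :
    Nice (B.indicator fun _ => (1 : ℝ≥0∞)) where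
  meas := measurable_const.indicator hm
  bdd := ⟨1, ENNReal.one_ne_top, fun w => Set.indicator_le_self' (fun _ _ => zero_le) w⟩
  supp := by
    obtain ⟨R, hR⟩ := hb.exists_norm_le
    refine ⟨max R 1, by positivity, fun w hw => ?_⟩
    refine Set.indicator_of_notMem (fun h => ?_) _
    have := hR w h
    have := le_max_left R 1
    linarith
  cont := by
    have : ∀ᵐ w : Fin n → ℝ, w ∉ frontier B := measure_eq_zero_iff_ae_notMem.1 hf
    filter_upwards [this] with w hw
    exact continuous_const.continuousOn.continuousAt_indicator hw

variable (i0 : Fin n)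

def qof (g : SLR n) : Fin n → ℝ := fun l => if l = i0 then 0 else g.1 i0 l / g.1 i0 i0
def pof (g : SLR n) : SLR n := g * nn i0 (-(qof i0 g))

lemma mul_nn_apply (g : SLR n) (q : Fin n → ℝ) (k l : Fin n) : (g * nn i0 q).1 k l = g.1 k l + g.1 k i0 * kz i0 q l := by
  rw [Matrix.SpecialLinearGroup.coe_mul]
  change (g.1 * (1 + vecMulVec (Pi.single i0 1) (kz i0 q))) k l = _
  rw [mul_add, mul_one, Matrix.mul_vecMulVec, Matrix.add_apply, vecMulVec_apply]
  simp

lemma pof_isP {g : SLR n} (h : 0 < g.1 i0 i0) : IsP i0 (pof i0 g) := by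
  refine ⟨?_, fun l hl => ?_⟩
  · rw [pof, mul_nn_apply]; simpa [kz] using h
  · rw [pof, mul_nn_apply]; simp only [kz, hl, if_false, qof, Pi.neg_apply]; field_simp; ring

lemma pof_00 (g : SLR n) : (pof i0 g).1 i0 i0 = g.1 i0 i0 := by
  rw [pof, mul_nn_apply]; simp [kz]

lemma pof_mul (g : SLR n) : pof i0 g * nn i0 (qof i0 g) = g := by
  rw [pof, nn_neg]; simp

def OO (V : Set (SLR n)) (δ : ℝ) : Set (SLR n) := {g | 0 < g.1 i0 i0 ∧ (∀ l, |qof i0 g l| < δ) ∧ pof i0 g ∈ V}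

lemma isOpen_OO {V : Set (SLR n)} (hV : IsOpen V) (δ : ℝ) : IsOpen (OO i0 V δ) := by
  rw [isOpen_iff_mem_nhds]
  rintro g ⟨h1, h2, h3⟩
  have hq : ContinuousAt (qof i0) g := by
    refine continuousAt_pi.2 fun l => ?_
    unfold qof
    split_ifs
    · exact continuousAt_const
    · exact (continuous_entry i0 l).continuousAt.div (continuous_entry i0 i0).continuousAt h1.ne'
  have hp : ContinuousAt (pof i0) g := continuousAt_id.mul ((continuous_nn i0).continuousAt.comp hq.neg)
  have e1 : ∀ᶠ a in 𝓝 g, 0 < a.1 i0 i0 := (continuous_entry i0 i0).continuousAt.eventually (lt_mem_nhds h1)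
  have e2 : ∀ᶠ a in 𝓝 g, ∀ l, |qof i0 a l| < δ := by
    rw [eventually_all]
    intro l
    exact ((continuousAt_pi.1 hq l).abs).eventually (gt_mem_nhds (h2 l))
  have e3 : ∀ᶠ a in 𝓝 g, pof i0 a ∈ V := hp.eventually (hV.mem_nhds h3)
  filter_upwards [e1, e2, e3] with a a1 a2 a3
  exact ⟨a1, a2, a3⟩

lemma one_mem_OO {V : Set (SLR n)} (h1 : 1 ∈ V) {δ : ℝ} (hδ : 0 < δ) : 1 ∈ OO i0 V δ := by
  have hq : qof i0 (1 : SLR n) = 0 := by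
    funext l
    by_cases h : l = i0
    · simp [qof, h]
    · simp [qof, h, Ne.symm h]
  refine ⟨by simp, fun l => by simpa [hq] using hδ, ?_⟩
  simpa [pof, hq, nn_zero] using h1

def mset (N : ℕ) : Finset (Fin n → ℤ) := Fintype.piFinset fun l => if l = i0 then {0} else Finset.Ico (-(N : ℤ)) N

lemma card_mset (N : ℕ) : (mset i0 N).card = ∏ l, if l = i0 then 1 else 2 * N := by
  rw [mset, Fintype.card_piFinset]
  refine Finset.prod_congr rfl fun l _ => ?_
  split_ifs
  · simp
  · simp only [Int.card_Ico]; omega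

lemma cover_OO (V : Set (SLR n)) {N : ℕ} (hN : 0 < N) {g : SLR n} (hg : g ∈ OO i0 V 1) :
    ∃ m ∈ mset i0 N, g * nn i0 (-((N : ℝ)⁻¹ • cz m)) ∈ OO i0 V ((N : ℝ)⁻¹) := by
  obtain ⟨h1, h2, h3⟩ := hg
  have hN' : (0 : ℝ) < N := by exact_mod_cast hN
  set q := qof i0 g with hq
  have hq0 : q i0 = 0 := by simp [hq, qof]
  refine ⟨fun l => ⌊N * q l⌋, ?_, ?_⟩
  · rw [mset, Fintype.mem_piFinset]
    intro l
    split_ifs with h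
    · simp [h, hq0]
    · have := abs_lt.1 (h2 l)
      rw [Finset.mem_Ico]
      constructor
      · rw [Int.le_floor]; push_cast; nlinarith
      · rw [Int.floor_lt]; push_cast; nlinarith
  · set m : Fin n → ℤ := fun l => ⌊N * q l⌋ with hm
    set g' := g * nn i0 (-((N : ℝ)⁻¹ • cz m)) with hg'
    have hm0 : m i0 = 0 := by simp [hm, hq0]
    have e0 : g'.1 i0 i0 = g.1 i0 i0 := by rw [hg', mul_nn_apply]; simp [kz]
    have eq' : qof i0 g' = q - (N : ℝ)⁻¹ • cz m := by
      funext l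
      by_cases h : l = i0
      · subst h; simp [qof, hq0, hm0]
      · simp only [qof, h, if_false, e0, Pi.sub_apply, hq]
        rw [hg', mul_nn_apply]
        simp only [kz, h, if_false, Pi.neg_apply]
        field_simp
        ring
    refine ⟨by rw [e0]; exact h1, fun l => ?_, ?_⟩
    · rw [eq']
      simp only [Pi.sub_apply, Pi.smul_apply, smul_eq_mul]
      have a1 := Int.floor_le (N * q l)
      have a2 := Int.lt_floor_add_one (N * q l)
      have e : q l - (N : ℝ)⁻¹ * (m l : ℝ) = (N : ℝ)⁻¹ * (N * q l - ⌊N * q l⌋) := by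
        simp only [hm]; field_simp
      rw [e, abs_mul, abs_of_pos (inv_pos.2 hN'), abs_of_nonneg (by linarith)]
      have : (N : ℝ) * q l - ⌊N * q l⌋ < 1 := by linarith
      calc _ < (N : ℝ)⁻¹ * 1 := by gcongr
        _ = _ := mul_one _
    · have : pof i0 g' = pof i0 g := by
        rw [pof, eq', hg', mul_assoc, ← nn_add, pof]
        congr 2
        rw [← hq]; abel
      rw [this]; exact h3

/-- bounding box -/
def bx (N : ℕ) : Set (Fin n → ℝ) := Set.Icc (fun l => if l = i0 then 1/2 else -(2 * (N : ℝ)⁻¹)) (fun l => if l = i0 then 2 else 2 * (N : ℝ)⁻¹)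

lemma vol_bx (N : ℕ) : volume (bx i0 N) = ∏ l, if l = i0 then ENNReal.ofReal (3/2) else ENNReal.ofReal (4 * (N : ℝ)⁻¹) := by
  rw [bx, Real.volume_Icc_pi]
  refine Finset.prod_congr rfl fun l _ => ?_
  split_ifs
  · norm_num
  · congr 1; ring

lemma nice_bx (N : ℕ) : Nice ((bx i0 N).indicator fun _ => (1 : ℝ≥0∞)) := by
  refine nice_indicator measurableSet_Icc (Metric.isBounded_Icc _ _) ?_
  exact (convex_Icc _ _).addHaar_frontier _

lemma bx_zero (N : ℕ) : (bx i0 N).indicator (fun _ => (1 : ℝ≥0∞)) 0 = 0 := by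
  refine Set.indicator_of_notMem (fun h => ?_) _
  have := h.1 i0
  simp at this
  linarith

lemma Es_OO {V : Set (SLR n)} (hV : ∀ p0 ∈ V, 1/2 ≤ p0.1 i0 i0 ∧ p0.1 i0 i0 ≤ 2) {N : ℕ} {g : SLR n} (hg : g ∈ OO i0 V ((N : ℝ)⁻¹)) :
    1 ≤ Es ((bx i0 N).indicator fun _ => (1 : ℝ≥0∞)) (pr g) := by
  obtain ⟨h1, h2, h3⟩ := hg
  have h00 := hV _ h3
  rw [pof_00] at h00
  rw [Es_pr]
  refine le_trans ?_ (ENNReal.le_tsum (Pi.single i0 1))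
  rw [Set.indicator_of_mem]
  have e : cz (Pi.single i0 1) = (Pi.single i0 1 : Fin n → ℝ) := by
    funext l; by_cases h : l = i0
    · subst h; simp [cz]
    · simp [cz, h]
  rw [e, Matrix.single_one_vecMul]
  have key : ∀ l, l ≠ i0 → |g.1 i0 l| ≤ 2 * (N : ℝ)⁻¹ := by
    intro l hl
    have := (h2 l).le
    simp only [qof, hl, if_false] at this
    rw [abs_div, abs_of_pos h1, div_le_iff₀ h1] at this
    have hn0 : (0 : ℝ) ≤ (N : ℝ)⁻¹ := by positivity
    nlinarith
  constructor
  · intro l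
    by_cases h : l = i0
    · subst h; simpa using h00.1
    · simpa [h] using (abs_le.1 (key l h)).1
  · intro l
    by_cases h : l = i0
    · subst h; simpa using h00.2
    · simpa [h] using (abs_le.1 (key l h)).2

theorem vfam (μ : Measure (XSpace n)) [IsProbabilityMeasure μ] (hinv : ∀ g, Measure.map (rightTranslate n g) μ = μ)
    {V : Set (SLR n)} (hVo : IsOpen V) (hV1 : 1 ∈ V) (hV : ∀ p0 ∈ V, 1/2 ≤ p0.1 i0 i0 ∧ p0.1 i0 i0 ≤ 2) :
    ∃ C : ℝ≥0∞, C ≠ ∞ ∧ ∀ N : ℕ, 0 < N → ∃ (U : Set (XSpace n)) (f : (Fin n → ℝ) → ℝ≥0∞), MeasurableSet U ∧ Nice f ∧ f 0 = 0 ∧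
      μ U ≠ 0 ∧ (∀ x ∈ U, 1 ≤ Es f x) ∧ (∀ x ∈ U, ∃ p0 ∈ V, IsP i0 p0 ∧ ∃ q : Fin n → ℝ, (∀ l, |q l| < (N : ℝ)⁻¹) ∧ x = pr (p0 * nn i0 q)) ∧
      ∫⁻ w, f w ≤ C * μ U := by
  have hopen : ∀ δ, IsOpen (pr '' OO i0 V δ) := fun δ => isOpenMap_pr _ (isOpen_OO i0 hVo δ)
  have hpos : ∀ δ : ℝ, 0 < δ → μ (pr '' OO i0 V δ) ≠ 0 := fun δ hδ =>
    mu_open_pos μ hinv (hopen δ) ⟨pr 1, 1, one_mem_OO i0 hV1 hδ, rfl⟩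
  set P : ℝ≥0∞ := ∏ l : Fin n, if l = i0 then ENNReal.ofReal (3/2) else ENNReal.ofReal 8 with hP
  have hPf : P ≠ ∞ := by
    refine ENNReal.prod_ne_top fun l _ => ?_
    split_ifs <;> exact ENNReal.ofReal_ne_top
  refine ⟨P / μ (pr '' OO i0 V 1), ENNReal.div_ne_top hPf (hpos 1 one_pos), fun N hN => ?_⟩
  have hN' : (0 : ℝ) < N := by exact_mod_cast hN
  refine ⟨pr '' OO i0 V ((N : ℝ)⁻¹), (bx i0 N).indicator fun _ => 1, (hopen _).measurableSet, nice_bx i0 N, bx_zero i0 N, hpos _ (inv_pos.2 hN'), ?_, ?_, ?_⟩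
  · rintro x ⟨g, hg, rfl⟩
    exact Es_OO i0 hV hg
  · rintro x ⟨g, hg, rfl⟩
    exact ⟨pof i0 g, hg.2.2, pof_isP i0 hg.1, qof i0 g, hg.2.1, by rw [pof_mul]⟩
  · have hc : μ (pr '' OO i0 V 1) ≤ (mset i0 N).card * μ (pr '' OO i0 V ((N : ℝ)⁻¹)) := by
      have hs : pr '' OO i0 V 1 ⊆ ⋃ m ∈ mset i0 N, rightTranslate n (nn i0 (-((N : ℝ)⁻¹ • cz m))) ⁻¹' (pr '' OO i0 V ((N : ℝ)⁻¹)) := by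
        rintro x ⟨g, hg, rfl⟩
        obtain ⟨m, hm, hm2⟩ := cover_OO i0 V hN hg
        refine Set.mem_iUnion₂.2 ⟨m, hm, ?_⟩
        rw [Set.mem_preimage, rt_pr]
        exact ⟨_, hm2, rfl⟩
      refine (measure_mono hs).trans ((measure_biUnion_finset_le _ _).trans ?_)
      rw [Finset.sum_congr rfl fun m _ => (mp_rt hinv _).measure_preimage (hopen _).measurableSet.nullMeasurableSet]
      simp
    have hbm : MeasurableSet (bx i0 N) := measurableSet_Icc
    rw [lintegral_indicator_const hbm, one_mul]
    have hprod : volume (bx i0 N) * (mset i0 N).card = P := by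
      rw [vol_bx, card_mset, hP]
      push_cast
      rw [← Finset.prod_mul_distrib]
      refine Finset.prod_congr rfl fun l _ => ?_
      split_ifs
      · simp
      · rw [show (2 * (N : ℝ≥0∞)) = ENNReal.ofReal (2 * N) by rw [ENNReal.ofReal_mul (by norm_num)]; simp, ← ENNReal.ofReal_mul (by positivity)]
        congr 1; field_simp; norm_num
    set a := μ (pr '' OO i0 V 1)
    set b := μ (pr '' OO i0 V ((N : ℝ)⁻¹))
    have ha0 : a ≠ 0 := hpos 1 one_pos
    have haf : a ≠ ∞ := measure_ne_top _ _
    rw [← ENNReal.mul_div_right_comm, ENNReal.le_div_iff_mul_le (Or.inl ha0) (Or.inl haf)]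
    calc volume (bx i0 N) * a ≤ volume (bx i0 N) * ((mset i0 N).card * b) := by gcongr
      _ = P * b := by rw [← mul_assoc, hprod]

end Vfam

end ModuleB10

section ModuleB11
open Matrix MeasureTheory Topology
open scoped ENNReal Pointwise

section S1sec
open Filter
variable {n : ℕ} (i0 : Fin n)

lemma good_nhds : ∀ᶠ p0 in 𝓝 (1 : SLR n), (1/2 ≤ p0.1 i0 i0 ∧ p0.1 i0 i0 ≤ 2) ∧ (LL i0 p0).det ≠ 0 ∧ |(LL i0 p0).det| ≤ 2 ∧
    ∀ s, ‖s‖ ≤ 2 * ‖LL i0 p0 *ᵥ s‖ := by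
  have hn : (0 : ℝ) < n := by exact_mod_cast (Fin.pos i0)
  have h00 : Tendsto (fun g : SLR n => g.1 i0 i0) (𝓝 1) (𝓝 1) := by
    simpa using (continuous_entry i0 i0).tendsto 1
  have hc : ∀ k l, Tendsto (fun g : SLR n => LL i0 g k l) (𝓝 1) (𝓝 ((1 : Matrix (Fin n) (Fin n) ℝ) k l)) := by
    intro k l
    by_cases hl : l = i0
    · subst hl
      have : (fun g : SLR n => LL l g k l) = fun _ => (1 : Matrix (Fin n) (Fin n) ℝ) k l := by
        funext g; simp [LL, Matrix.one_apply]
      rw [this]; exact tendsto_const_nhds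
    · simp only [LL, Matrix.of_apply, hl, if_false]
      have h2 : Tendsto (fun g : SLR n => g.1 k l) (𝓝 1) (𝓝 ((1 : Matrix (Fin n) (Fin n) ℝ) k l)) := (continuous_entry k l).tendsto 1
      simpa using (h00.inv₀ one_ne_zero).mul h2
  have hM : Tendsto (fun g : SLR n => LL i0 g) (𝓝 1) (𝓝 1) :=
    tendsto_pi_nhds.2 fun k => tendsto_pi_nhds.2 fun l => hc k l
  have hdet : Tendsto (fun g : SLR n => (LL i0 g).det) (𝓝 1) (𝓝 1) := by
    have : Continuous fun A : Matrix (Fin n) (Fin n) ℝ => A.det := Continuous.matrix_det continuous_id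
    have h := (this.tendsto 1).comp hM
    rw [Matrix.det_one] at h
    exact h
  have e1 := h00.eventually (Icc_mem_nhds (show (1/2 : ℝ) < 1 by norm_num) (show (1 : ℝ) < 2 by norm_num))
  have e2 := hdet.eventually (Icc_mem_nhds (show (1/2 : ℝ) < 1 by norm_num) (show (1 : ℝ) < 2 by norm_num))
  have e3 : ∀ᶠ g in 𝓝 (1 : SLR n), ∀ k l, |LL i0 g k l - (1 : Matrix (Fin n) (Fin n) ℝ) k l| ≤ 1 / (2 * n) := by
    rw [eventually_all]; intro k; rw [eventually_all]; intro l
    have := (hc k l).eventually (Metric.closedBall_mem_nhds _ (show (0 : ℝ) < 1 / (2 * n) by positivity))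
    simpa [Metric.mem_closedBall, Real.dist_eq] using this
  filter_upwards [e1, e2, e3] with g h1 h2 h3
  refine ⟨h1, by linarith [h2.1] |> ne_of_gt, by rw [abs_of_pos (by linarith [h2.1])]; exact h2.2, fun s => ?_⟩
  have h4 : ‖(LL i0 g - 1) *ᵥ s‖ ≤ 1/2 * ‖s‖ := by
    rw [pi_norm_le_iff_of_nonneg (by positivity)]
    intro k
    rw [Matrix.mulVec, dotProduct]
    refine (norm_sum_le _ _).trans ?_
    calc ∑ l, ‖(LL i0 g - 1) k l * s l‖ ≤ ∑ l : Fin n, 1 / (2 * n) * ‖s‖ := by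
          refine Finset.sum_le_sum fun l _ => ?_
          rw [norm_mul]
          exact mul_le_mul (h3 k l) (norm_le_pi_norm s l) (norm_nonneg _) (by positivity)
      _ = 1/2 * ‖s‖ := by
          rw [Finset.sum_const, Finset.card_univ, Fintype.card_fin, nsmul_eq_mul]; field_simp
  have h5 : s = LL i0 g *ᵥ s - (LL i0 g - 1) *ᵥ s := by
    rw [Matrix.sub_mulVec, Matrix.one_mulVec]; abel
  have h6 : ‖s‖ ≤ ‖LL i0 g *ᵥ s‖ + ‖(LL i0 g - 1) *ᵥ s‖ := by
    conv_lhs => rw [h5]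
    exact norm_sub_le _ _
  linarith

lemma conj_small {P : SLR n → Prop} (hP : ∀ᶠ g in 𝓝 (1 : SLR n), P g) :
    ∃ N : ℕ, 0 < N ∧ ∀ q : Fin n → ℝ, (∀ l, |q l| < (N : ℝ)⁻¹) → ∀ s : Fin n → ℝ, ‖s‖ ≤ 2 → P (uu i0 (-s) * nn i0 (-q) * uu i0 s) := by
  have hn : 0 < n := Fin.pos i0
  have h1 : ∀ᶠ q in 𝓝 (0 : Fin n → ℝ), ∀ s ∈ Metric.closedBall (0 : Fin n → ℝ) 2, P (uu i0 (-s) * nn i0 (-q) * uu i0 s) := by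
    refine (isCompact_closedBall (0 : Fin n → ℝ) 2).eventually_forall_of_forall_eventually fun s _ => ?_
    have hc : Continuous fun z : (Fin n → ℝ) × (Fin n → ℝ) => uu i0 (-z.2) * nn i0 (-z.1) * uu i0 z.2 :=
      (((continuous_uu i0).comp continuous_snd.neg).mul ((continuous_nn i0).comp continuous_fst.neg)).mul ((continuous_uu i0).comp continuous_snd)
    have := hc.tendsto (0, s)
    simp only [neg_zero, nn_zero, mul_one, ← uu_add, neg_add_cancel, uu_zero] at this
    exact this.eventually hP
  obtain ⟨δ, hδ, h2⟩ := Metric.eventually_nhds_iff.1 h1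
  obtain ⟨N, hN⟩ := exists_nat_gt δ⁻¹
  have hN0 : (0 : ℝ) < N := (inv_pos.2 hδ).trans hN
  refine ⟨N, by exact_mod_cast hN0, fun q hq s hs => h2 ?_ s (by simpa using hs)⟩
  rw [dist_zero_right]
  have h3 : (N : ℝ)⁻¹ < δ := inv_lt_of_inv_lt₀ hδ hN
  rw [pi_norm_lt_iff hδ]
  intro l
  exact (hq l).trans h3

lemma avg_bound (S S' : HSet n) (hd : S'.d = S.d⁻¹) (μ : Measure (XSpace n))
    [IsProbabilityMeasure μ] (hinv : ∀ g, Measure.map (rightTranslate n g) μ = μ)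
    {U : Set (XSpace n)} (hU : MeasurableSet U) {f : (Fin n → ℝ) → ℝ≥0∞} (hf : Measurable f)
    (hUf : ∀ x ∈ U, 1 ≤ Es f x) {H : XSpace n → ℝ≥0∞} (hH : Measurable H) {B : ℝ≥0∞} (hB : ∀ x, H x ≤ B) (I : ℝ≥0∞)
    (Z : Set (Fin n → ℝ)) :
    ∫⁻ x in U, (∫⁻ s in Z, S.Te H (rightTranslate n (uu i0 s) x)) ∂μ ≤
      volume Z * (I * ∫⁻ x, H x ∂μ + B * ∫⁻ x, (S'.Te (Es f) x - I) ∂μ) := by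
  have hm : Measurable fun z : XSpace n × (Fin n → ℝ) => S.Te H (rightTranslate n (uu i0 z.2) z.1) :=
    (S.measurable_Te hH).comp (continuous_rt2.comp (continuous_fst.prodMk ((continuous_uu i0).comp continuous_snd))).measurable
  have hEm := measurable_Es hf
  rw [lintegral_lintegral_swap hm.aemeasurable]
  have hin : ∀ s, ∫⁻ x in U, S.Te H (rightTranslate n (uu i0 s) x) ∂μ ≤ I * ∫⁻ x, H x ∂μ + B * ∫⁻ x, (S'.Te (Es f) x - I) ∂μ := by
    intro s
    have hHs : Measurable fun x => H (rightTranslate n (uu i0 s) x) := hH.comp (measurable_rt _)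
    have hTm := S.measurable_Te hHs
    have hT'm := S'.measurable_Te hEm
    have hsubm : Measurable fun x => S'.Te (Es f) x - I := hT'm.sub measurable_const
    calc ∫⁻ x in U, S.Te H (rightTranslate n (uu i0 s) x) ∂μ
        ≤ ∫⁻ x, Es f x * S.Te (fun y => H (rightTranslate n (uu i0 s) y)) x ∂μ := by
          rw [← lintegral_indicator hU]
          refine lintegral_mono fun x => ?_
          by_cases hx : x ∈ U
          · rw [Set.indicator_of_mem hx, S.Te_rt]
            exact le_mul_of_one_le_left zero_le (hUf x hx)
          · rw [Set.indicator_of_notMem hx]; exact zero_le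
      _ = ∫⁻ x, S'.Te (Es f) x * H (rightTranslate n (uu i0 s) x) ∂μ := hecke_adjoint S S' hd μ hinv hEm hHs
      _ ≤ ∫⁻ x, (I * H (rightTranslate n (uu i0 s) x) + B * (S'.Te (Es f) x - I)) ∂μ := by
          refine lintegral_mono fun x => ?_
          calc _ ≤ (I + (S'.Te (Es f) x - I)) * H (rightTranslate n (uu i0 s) x) := by
                gcongr; exact le_add_tsub
            _ = I * H (rightTranslate n (uu i0 s) x) + H (rightTranslate n (uu i0 s) x) * (S'.Te (Es f) x - I) := by ring
            _ ≤ _ := by gcongr; exact hB _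
      _ = _ := by
          rw [lintegral_add_left (hHs.const_mul _), lintegral_const_mul _ hHs, lintegral_const_mul _ hsubm,
            (mp_rt hinv _).lintegral_comp hH]
  refine (lintegral_mono fun s => hin s).trans ?_
  rw [lintegral_const, Measure.restrict_apply_univ, mul_comm]

variable [NeZero n] [Nontrivial (Fin n)]

set_option maxHeartbeats 800000 in
theorem S1 (μ : Measure (XSpace n)) [IsProbabilityMeasure μ] (hinv : ∀ g, Measure.map (rightTranslate n g) μ = μ)
    {i0 i1 : Fin n} (h01 : i0 ≠ i1)
    {η : XSpace n → ℝ} (hη : UC η) {B : ℝ} (hB : ∀ x, |η x| ≤ B) (h0 : ∫ x, η x ∂μ = 0) (S : Finset (Fin n)) (hS1 : S.Nonempty)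
    (hS2 : Sᶜ.Nonempty) :
    Tendsto (fun p : Nat.Primes => ∫ t in QQ, (hS (p : ℕ) S).T η (pr (uu i0 t))) PF (𝓝 0) := by
  have hB0 : 0 ≤ B := (abs_nonneg _).trans (hB (pr 1))
  have hηc := hη.continuous
  have hQf : IsFiniteMeasure (volume.restrict (QQ : Set (Fin n → ℝ))) := ⟨by rw [Measure.restrict_apply_univ, vol_QQ]; exact ENNReal.one_lt_top⟩
  set u := uu i0 (Pi.single i1 1) with hu
  set Z : Set (Fin n → ℝ) := Metric.closedBall 0 2 with hZ
  set M := volume Z with hM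
  have hMf : M ≠ ∞ := measure_closedBall_lt_top.ne
  suffices hs : ∀ ε : ℝ, 0 < ε → ∀ᶠ p : Nat.Primes in PF, |∫ t in QQ, (hS (p : ℕ) S).T η (pr (uu i0 t))| ≤ 4 * ε by
    rw [Metric.tendsto_nhds]
    intro ε hε
    filter_upwards [hs (ε / 8) (by positivity)] with p hp
    rw [dist_zero_right, Real.norm_eq_abs]
    linarith
  intro ε hε
  -- the neighbourhood
  obtain ⟨V, hV, hVo, hV1⟩ := eventually_nhds_iff.1 ((hη ε hε).and (good_nhds i0))
  obtain ⟨C, hCf, hfam⟩ := vfam i0 μ hinv hVo hV1 fun p0 hp => (hV p0 hp).2.1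
  -- choice of K
  have hmet : Tendsto (fun K => 2 * M * C * ENNReal.ofReal (∫ x, |AK u K η x| ∂μ)) atTop (𝓝 0) := by
    have h1 := met μ hinv h01 η hηc B hB h0
    rw [tv_eq_uu h01] at h1
    have h2 := ENNReal.Tendsto.const_mul (a := 2 * M * C) (ENNReal.tendsto_ofReal h1) (Or.inr (ENNReal.mul_ne_top (ENNReal.mul_ne_top (by simp) hMf) hCf))
    simpa using h2
  have hεp : 0 < ENNReal.ofReal ε := ENNReal.ofReal_pos.2 hε
  obtain ⟨K, hK1, hK⟩ := ((hmet.eventually (gt_mem_nhds hεp)).and (eventually_ge_atTop 1)).exists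
  have hAc := continuous_AK u K hηc
  set H : XSpace n → ℝ≥0∞ := fun x => ENNReal.ofReal |AK u K η x| with hH
  have hHm : Measurable H := hAc.abs.measurable.ennreal_ofReal
  have hHB : ∀ x, H x ≤ ENNReal.ofReal B := fun x => ENNReal.ofReal_le_ofReal (AK_bound u K hB0 hB x)
  have hHint : ∫⁻ x, H x ∂μ = ENNReal.ofReal (∫ x, |AK u K η x| ∂μ) := by
    rw [ofReal_integral_eq_lintegral_ofReal]
    · exact Integrable.of_bound hAc.abs.aestronglyMeasurable B (Eventually.of_forall fun x => by simpa using AK_bound u K hB0 hB x)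
    · exact Eventually.of_forall fun x => abs_nonneg _
  rw [← hHint] at hK1
  -- choice of ε2, N
  obtain ⟨ε2, hε2, hε2'⟩ : ∃ ε2 : ℝ, 0 < ε2 ∧ 2 * (ENNReal.ofReal ε2 * M) ≤ ENNReal.ofReal ε := by
    refine ⟨ε / (2 * M.toReal + 1), by positivity, ?_⟩
    rw [← ENNReal.ofReal_toReal hMf, show (2 : ℝ≥0∞) = ENNReal.ofReal 2 by simp, ← ENNReal.ofReal_mul (by positivity), ← ENNReal.ofReal_mul (by positivity)]
    refine ENNReal.ofReal_le_ofReal ?_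
    rw [ENNReal.toReal_ofReal (by positivity)]
    have : 0 ≤ M.toReal := by positivity
    rw [div_mul_eq_mul_div, ← mul_div_assoc, div_le_iff₀ (by positivity)]
    nlinarith
  obtain ⟨N, hN, hconj⟩ := conj_small i0 ((hη.AK u K).abs ε2 hε2)
  obtain ⟨U, f, hUm, hf, hf0, hU0, hUf, hUx, hfC⟩ := hfam N hN
  have hrho := limRho μ hinv hf hf0 Sᶜ hS2 (by simpa using hS1)
  have hUfin : μ U ≠ ∞ := measure_ne_top _ _
  set c2 : ℝ≥0∞ := 2 * M * ENNReal.ofReal B / μ U with hc2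
  have hc2f : c2 ≠ ∞ := ENNReal.div_ne_top (ENNReal.mul_ne_top (ENNReal.mul_ne_top (by simp) hMf) ENNReal.ofReal_ne_top) hU0
  have hrho2 : Tendsto (fun p : Nat.Primes => c2 * ∫⁻ x, ((hS (p : ℕ) Sᶜ).Te (Es f) x - ∫⁻ w, f w) ∂μ) PF (𝓝 0) := by
    simpa using ENNReal.Tendsto.const_mul (a := c2) hrho (Or.inr hc2f)
  filter_upwards [hrho2.eventually (gt_mem_nhds hεp)] with p hp
  set T := hS (p : ℕ) S with hT
  set τ := ∫ t in QQ, T.T η (pr (uu i0 t)) with hτ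
  set ρ := ∫⁻ x, ((hS (p : ℕ) Sᶜ).Te (Es f) x - ∫⁻ w, f w) ∂μ with hρ
  have hIntg : ∀ g : SLR n, Integrable (fun t => T.T η (pr (uu i0 t * g))) (volume.restrict QQ) := by
    intro g
    refine Integrable.of_bound ?_ B (Eventually.of_forall fun t => T.T_bound hB _)
    exact ((T.continuous_T hηc).comp (continuous_pr.comp ((continuous_uu i0).mul continuous_const))).aestronglyMeasurable
  -- pointwise bound
  have hpt : ∀ x ∈ U, ENNReal.ofReal |τ| ≤ ENNReal.ofReal ε + 2 * ((∫⁻ s in Z, T.Te H (rightTranslate n (uu i0 s) x)) + ENNReal.ofReal ε2 * M) := by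
    intro x hx
    obtain ⟨p0, hp0V, hP, q, hq, rfl⟩ := hUx x hx
    obtain ⟨hη1, hg1, hg2, hg3, hg4⟩ := hV p0 hp0V
    have h1 : |τ - ∫ t in QQ, T.T η (pr (uu i0 t * p0))| ≤ ε := by
      have hi1 := hIntg 1
      simp only [mul_one] at hi1
      rw [hτ, ← integral_sub hi1 (hIntg p0)]
      have := norm_setIntegral_le_of_norm_le_const (μ := volume) (s := QQ) (C := ε) (f := fun t => T.T η (pr (uu i0 t)) - T.T η (pr (uu i0 t * p0)))
        (by rw [vol_QQ]; exact ENNReal.one_lt_top) (fun t _ => by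
          rw [← rt_pr, T.T_rt, Real.norm_eq_abs, abs_sub_comm]
          exact T.T_close hη1 _)
      simpa [Measure.real, vol_QQ] using this
    have h2 : |τ| ≤ ε + |∫ t in QQ, T.T η (pr (uu i0 t * p0))| := by
      have := abs_sub_abs_le_abs_sub τ (∫ t in QQ, T.T η (pr (uu i0 t * p0)))
      linarith
    refine (ENNReal.ofReal_le_ofReal h2).trans ?_
    rw [ENNReal.ofReal_add hε.le (abs_nonneg _)]
    gcongr
    refine (unfold_bound i0 T hP hg2 hg3 hg4 hηc hB (Pi.single i1 1) (by omega : K ≠ 0)).trans ?_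
    gcongr
    calc ∫⁻ s in Z, T.Te H (pr (p0 * uu i0 s)) ≤ ∫⁻ s in Z, (T.Te H (rightTranslate n (uu i0 s) (pr (p0 * nn i0 q))) + ENNReal.ofReal ε2) := by
          refine setLIntegral_mono' Metric.isClosed_closedBall.measurableSet fun s hs => ?_
          have hs2 : ‖s‖ ≤ 2 := by simpa [hZ] using hs
          have hcl := hconj q hq s hs2
          set w := uu i0 (-s) * nn i0 (-q) * uu i0 s with hw
          have e1 : pr (p0 * uu i0 s) = rightTranslate n w (rightTranslate n (uu i0 s) (pr (p0 * nn i0 q))) := by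
            rw [rt_pr, rt_pr, hw, uu_neg, nn_neg]
            congr 1; group
          rw [e1, T.Te_rt]
          refine T.Te_add_const (fun y => ?_) _
          rw [hH]
          simp only
          rw [← ENNReal.ofReal_add (abs_nonneg _) hε2.le]
          refine ENNReal.ofReal_le_ofReal ?_
          have := (abs_le.1 (hcl y)).2
          linarith
      _ = _ := by
          rw [lintegral_add_right _ measurable_const, lintegral_const, Measure.restrict_apply_univ]
  -- integrate
  have hmain : ENNReal.ofReal |τ| * μ U ≤ (3 * ENNReal.ofReal ε) * μ U + 2 * M * ENNReal.ofReal B * ρ := by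
    calc ENNReal.ofReal |τ| * μ U = ∫⁻ x in U, ENNReal.ofReal |τ| ∂μ := by rw [lintegral_const, Measure.restrict_apply_univ]
      _ ≤ ∫⁻ x in U, (ENNReal.ofReal ε + 2 * ((∫⁻ s in Z, T.Te H (rightTranslate n (uu i0 s) x)) + ENNReal.ofReal ε2 * M)) ∂μ :=
          setLIntegral_mono' hUm hpt
      _ = ENNReal.ofReal ε * μ U + 2 * ((∫⁻ x in U, (∫⁻ s in Z, T.Te H (rightTranslate n (uu i0 s) x)) ∂μ) + ENNReal.ofReal ε2 * M * μ U) := by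
          rw [lintegral_add_left measurable_const, lintegral_const_mul' _ _ (by simp), lintegral_add_right _ measurable_const, lintegral_const, lintegral_const,
            Measure.restrict_apply_univ]
      _ ≤ ENNReal.ofReal ε * μ U + 2 * (M * ((∫⁻ w, f w) * ∫⁻ x, H x ∂μ + ENNReal.ofReal B * ρ) + ENNReal.ofReal ε2 * M * μ U) := by
          gcongr
          exact avg_bound i0 T (hS (p : ℕ) Sᶜ) (hS_inv _ _) μ hinv hUm hf.meas hUf hHm hHB _ Z
      _ ≤ ENNReal.ofReal ε * μ U + 2 * (M * ((C * μ U) * ∫⁻ x, H x ∂μ + ENNReal.ofReal B * ρ) + ENNReal.ofReal ε2 * M * μ U) := by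
          gcongr
      _ = (ENNReal.ofReal ε + 2 * M * C * (∫⁻ x, H x ∂μ) + 2 * (ENNReal.ofReal ε2 * M)) * μ U + 2 * M * ENNReal.ofReal B * ρ := by ring
      _ ≤ (ENNReal.ofReal ε + ENNReal.ofReal ε + ENNReal.ofReal ε) * μ U + 2 * M * ENNReal.ofReal B * ρ := by gcongr
      _ = _ := by ring
  have hfin : ENNReal.ofReal |τ| ≤ 3 * ENNReal.ofReal ε + c2 * ρ := by
    have e : (3 * ENNReal.ofReal ε) * μ U + 2 * M * ENNReal.ofReal B * ρ = (3 * ENNReal.ofReal ε + c2 * ρ) * μ U := by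
      rw [add_mul, hc2, mul_right_comm (2 * M * ENNReal.ofReal B / μ U), ENNReal.div_mul_cancel hU0 hUfin]
    rw [e] at hmain
    exact (ENNReal.mul_le_mul_iff_left hU0 hUfin).1 hmain
  have hfin2 : ENNReal.ofReal |τ| ≤ ENNReal.ofReal (4 * ε) := by
    refine hfin.trans ?_
    calc _ ≤ 3 * ENNReal.ofReal ε + ENNReal.ofReal ε := by gcongr
      _ = ENNReal.ofReal (4 * ε) := by rw [ENNReal.ofReal_mul (by norm_num)]; simp; ring
  exact (ENNReal.ofReal_le_ofReal_iff (by positivity)).1 hfin2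

end S1sec

end ModuleB11

section ModuleB12
open Matrix MeasureTheory Topology
open scoped ENNReal Pointwise

section S2sec
open Filter
variable {n : ℕ} [NeZero n] [Nontrivial (Fin n)]

theorem S2_zero (μ : Measure (XSpace n)) [IsProbabilityMeasure μ] (hinv : ∀ g, Measure.map (rightTranslate n g) μ = μ)
    {η : XSpace n → ℝ} (hη : UC η) {B : ℝ} (hB : ∀ x, |η x| ≤ B) (h0 : ∫ x, η x ∂μ = 0) (S : Finset (Fin n)) (hS1 : S.Nonempty)
    (hS2 : Sᶜ.Nonempty) :
    Tendsto (fun p : Nat.Primes => (hS (p : ℕ) S).T η (pr 1)) PF (𝓝 0) := by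
  obtain ⟨i0, i1, h01⟩ := exists_pair_ne (Fin n)
  have hB0 : 0 ≤ B := (abs_nonneg _).trans (hB (pr 1))
  have hηc := hη.continuous
  have hQf : IsFiniteMeasure (volume.restrict (QQ : Set (Fin n → ℝ))) := ⟨by rw [Measure.restrict_apply_univ, vol_QQ]; exact ENNReal.one_lt_top⟩
  set u := uu i0 (Pi.single i1 1) with hu
  suffices hs : ∀ ε : ℝ, 0 < ε → ∀ᶠ p : Nat.Primes in PF, |(hS (p : ℕ) S).T η (pr 1)| ≤ 3 * ε by
    rw [Metric.tendsto_nhds]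
    intro ε hε
    filter_upwards [hs (ε / 8) (by positivity)] with p hp
    rw [dist_zero_right, Real.norm_eq_abs]
    linarith
  intro ε hε
  have hcu : Tendsto (uu i0) (𝓝 0) (𝓝 1) := by
    have := (continuous_uu i0).tendsto 0
    rwa [uu_zero] at this
  obtain ⟨δ, hδ, hδ2⟩ := Metric.eventually_nhds_iff.1 (hcu.eventually (hη ε hε))
  obtain ⟨κ, hκ0, hκ1, hκδ⟩ : ∃ κ : ℝ, 0 < κ ∧ κ ≤ 1 ∧ κ ≤ δ := ⟨min 1 δ, by positivity, min_le_left _ _, min_le_right _ _⟩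
  set Q : Set (Fin n → ℝ) := Set.pi Set.univ fun _ => Set.Ico (0 : ℝ) κ with hQ
  have hQQ : Q ⊆ QQ := by
    rw [QQ_eq]
    exact Set.pi_mono fun _ _ => Set.Ico_subset_Ico_right hκ1
  have hQm : MeasurableSet Q := MeasurableSet.univ_pi fun _ => measurableSet_Ico
  have hQv : volume.real Q = κ ^ n := by
    rw [Measure.real, hQ, Real.volume_pi_Ico, ENNReal.toReal_prod]
    simp [hκ0.le]
  have hQn : ∀ t ∈ Q, ∀ x, |η (rightTranslate n (uu i0 t) x) - η x| ≤ ε := by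
    intro t ht
    refine hδ2 ?_
    rw [dist_zero_right, pi_norm_lt_iff hδ]
    intro l
    have := ht l (Set.mem_univ l)
    rw [Real.norm_eq_abs, abs_of_nonneg this.1]
    exact this.2.trans_le hκδ
  have hκn : 0 < κ ^ n := by positivity
  -- K
  have hmet := met μ hinv h01 η hηc B hB h0
  rw [tv_eq_uu h01] at hmet
  obtain ⟨K, hK1, hK⟩ := ((hmet.eventually (gt_mem_nhds (show 0 < κ ^ n * ε by positivity))).and (eventually_ge_atTop 1)).exists
  rw [← hu] at hK1
  set H : XSpace n → ℝ := fun x => |AK u K η x| with hH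
  have hHu : UC H := (hη.AK u K).abs
  have hHc := hHu.continuous
  have hHB : ∀ x, |H x| ≤ B := fun x => by rw [hH]; simpa using AK_bound u K hB0 hB x
  have hHi : Integrable H μ := Integrable.of_bound hHc.aestronglyMeasurable B (Eventually.of_forall hHB)
  set m := ∫ x, H x ∂μ with hm
  have hm0 : 0 ≤ m := integral_nonneg fun x => abs_nonneg _
  have hS1' := S1 μ hinv h01 (hHu.sub_const m) (B := B + m) (fun x => by
    refine (abs_sub _ _).trans ?_
    rw [abs_of_nonneg hm0]; linarith [hHB x]) (by
      rw [integral_sub hHi (integrable_const _)]; simp [hm]) S hS1 hS2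
  filter_upwards [(hS1'.eventually (gt_mem_nhds (show 0 < κ ^ n * ε by positivity)))] with p hp
  set T := hS (p : ℕ) S
  have hcont : Continuous fun t => T.T H (pr (uu i0 t)) := (T.continuous_T hHc).comp (continuous_pr.comp (continuous_uu i0))
  have hIntg : IntegrableOn (fun t => T.T H (pr (uu i0 t))) QQ :=
    Integrable.of_bound hcont.aestronglyMeasurable B (Eventually.of_forall fun t => T.T_bound hHB _)
  have h1 : ∫ t in QQ, T.T H (pr (uu i0 t)) < κ ^ n * ε + κ ^ n * ε := by
    have e : ∫ t in QQ, T.T (fun x => H x - m) (pr (uu i0 t)) = (∫ t in QQ, T.T H (pr (uu i0 t))) - m := by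
      have : ∀ t, T.T (fun x => H x - m) (pr (uu i0 t)) = T.T H (pr (uu i0 t)) - m := by
        intro t; rw [T.T_sub, T.T_const]
      simp only [this]
      rw [integral_sub hIntg (integrable_const _), setIntegral_const, Measure.real, vol_QQ]
      simp
    rw [e] at hp
    linarith
  have hpt : ∀ t ∈ Q, |T.T η (pr 1)| - ε ≤ T.T H (pr (uu i0 t)) := by
    intro t ht
    have a1 : |T.T η (pr (uu i0 t)) - T.T η (pr 1)| ≤ ε := by
      have : pr (uu i0 t) = rightTranslate n (uu i0 t) (pr 1) := by rw [rt_pr, one_mul]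
      rw [this, T.T_rt]
      exact T.T_close (hQn t ht) _
    have a2 : T.T (AK u K η) (pr (uu i0 t)) = T.T η (pr (uu i0 t)) := by
      rw [T.T_AK]
      have : ∀ k : ℕ, T.T (fun y => η (rightTranslate n (u ^ k) y)) (pr (uu i0 t)) = T.T η (pr (uu i0 t)) := by
        intro k
        have hmem : u ^ k ∈ Gamma n := by
          refine pow_mem ?_ k
          have := uu_mem i0 (Pi.single i1 1)
          have e : cz (Pi.single i1 1) = (Pi.single i1 1 : Fin n → ℝ) := by
            funext l; by_cases h : l = i1
            · subst h; simp [cz]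
            · simp [cz, h]
          rwa [e] at this
        rw [← T.T_rt, rt_pr]
        have hcomm : uu i0 t * u ^ k = u ^ k * uu i0 t := by rw [hu, uu_pow, ← uu_add, ← uu_add, add_comm]
        rw [hcomm, pr_gamma hmem]
      simp only [this]
      have : (K : ℝ) ≠ 0 := by exact_mod_cast (by omega : K ≠ 0)
      simp [this]
    have a3 := T.T_abs (AK u K η) (pr (uu i0 t))
    rw [a2] at a3
    have a4 := abs_sub_abs_le_abs_sub (T.T η (pr 1)) (T.T η (pr (uu i0 t)))
    rw [abs_sub_comm] at a1
    linarith
  have h2 : κ ^ n * (|T.T η (pr 1)| - ε) ≤ ∫ t in QQ, T.T H (pr (uu i0 t)) := by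
    calc κ ^ n * (|T.T η (pr 1)| - ε) = ∫ t in Q, (|T.T η (pr 1)| - ε) := by
          rw [setIntegral_const, hQv, smul_eq_mul]
      _ ≤ ∫ t in Q, T.T H (pr (uu i0 t)) := by
          refine setIntegral_mono_on ?_ (hIntg.mono_set hQQ) hQm hpt
          have hci : IntegrableOn (fun _ : Fin n → ℝ => |T.T η (pr 1)| - ε) QQ volume := by
            apply integrableOn_const
            · rw [vol_QQ]; simp
            · simp
          exact hci.mono_set hQQ
      _ ≤ _ := setIntegral_mono_set hIntg (Eventually.of_forall fun t => T.T_nonneg (fun x => abs_nonneg _) _) hQQ.eventuallyLE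
  have h3 : κ ^ n * (|T.T η (pr 1)| - ε) < κ ^ n * (2 * ε) := by linarith
  have h4 := lt_of_mul_lt_mul_left h3 hκn.le
  linarith

theorem S2 (μ : Measure (XSpace n)) [IsProbabilityMeasure μ] (hinv : ∀ g, Measure.map (rightTranslate n g) μ = μ)
    {η : XSpace n → ℝ} (hη : UC η) {B : ℝ} (hB : ∀ x, |η x| ≤ B) (S : Finset (Fin n)) (hS1 : S.Nonempty)
    (hS2 : Sᶜ.Nonempty) :
    Tendsto (fun p : Nat.Primes => (hS (p : ℕ) S).T η (pr 1)) PF (𝓝 (∫ x, η x ∂μ)) := by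
  set m := ∫ x, η x ∂μ with hm
  have hi : Integrable η μ := Integrable.of_bound hη.continuous.aestronglyMeasurable B (Eventually.of_forall hB)
  have := S2_zero μ hinv (hη.sub_const m) (B := B + |m|) (fun x => (abs_sub _ _).trans (by linarith [hB x])) (by
      rw [integral_sub hi (integrable_const _)]; simp [hm]) S hS1 hS2
  have h2 := this.add_const m
  rw [zero_add] at h2
  refine h2.congr fun p => ?_
  rw [HSet.T_sub, HSet.T_const]; ring

end S2sec

end ModuleB12

section ModuleB13
open Matrix MeasureTheory Topology
open scoped ENNReal Pointwise

section Final
open Filter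
variable {n : ℕ}

/-- lattice points of norm at most `s` -/
def NN (s : ℝ) (x : XSpace n) : Set (Fin n → ℝ) := {w | InLat x w ∧ ‖w‖ ≤ s}

/-- there are at least `r` lattice points of norm at most `s` -/
def Ar (r : ℕ) (s : ℝ) (x : XSpace n) : Prop := ∃ F : Finset (Fin n → ℝ), F.card = r ∧ ∀ w ∈ F, InLat x w ∧ ‖w‖ ≤ s

lemma Ar.mono {r : ℕ} {s t : ℝ} {x : XSpace n} (h : Ar r s x) (hst : s ≤ t) : Ar r t x := by
  obtain ⟨F, hF, hw⟩ := h
  exact ⟨F, hF, fun w h => ⟨(hw w h).1, (hw w h).2.trans hst⟩⟩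

lemma NN_pr (s : ℝ) (g : SLR n) : NN s (pr g) = (fun v : Fin n → ℤ => cz v ᵥ* g.1) '' {v | ‖cz v ᵥ* g.1‖ ≤ s} := by
  ext w
  simp only [NN, Set.mem_setOf_eq, inLat_pr, Set.mem_image]
  constructor
  · rintro ⟨⟨v, rfl⟩, h⟩; exact ⟨v, h, rfl⟩
  · rintro ⟨v, h, rfl⟩; exact ⟨⟨v, rfl⟩, h⟩

lemma czg_inj (g : SLR n) : Function.Injective (fun v : Fin n → ℤ => cz v ᵥ* g.1) :=
  (vecMul_injS g).comp cz_inj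

lemma ncard_NN_pr (s : ℝ) (g : SLR n) : (NN s (pr g)).ncard = Set.ncard {v : Fin n → ℤ | ‖cz v ᵥ* g.1‖ ≤ s} := by
  rw [NN_pr, Set.ncard_image_of_injective _ (czg_inj g)]

lemma finite_cz (R : ℝ) : {v : Fin n → ℤ | ‖cz v‖ ≤ R}.Finite := by
  refine (Set.finite_Icc (fun _ => -⌈R⌉ : Fin n → ℤ) (fun _ => ⌈R⌉)).subset fun v hv => ?_
  have h1 : ∀ i, |(v i : ℝ)| ≤ R := fun i => (norm_le_pi_norm (cz v) i).trans hv
  refine ⟨fun i => ?_, fun i => ?_⟩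
  · have := (abs_le.1 (h1 i)).1
    have h2 := Int.le_ceil R
    have : (-(⌈R⌉ : ℝ)) ≤ v i := by linarith
    exact_mod_cast this
  · have := (abs_le.1 (h1 i)).2
    have h2 := Int.le_ceil R
    have : (v i : ℝ) ≤ ⌈R⌉ := by linarith
    exact_mod_cast this

lemma NN_finite (s : ℝ) (x : XSpace n) : (NN s x).Finite := by
  obtain ⟨g, rfl⟩ := pr_surj x
  rw [NN_pr]
  apply Set.Finite.image
  obtain ⟨C, hC0, hC⟩ := vecMul_norm_le (g⁻¹).1
  refine (finite_cz (C * s)).subset fun v hv => ?_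
  have := hC (cz v ᵥ* g.1)
  rw [vecMul_mul_inv] at this
  exact this.trans (mul_le_mul_of_nonneg_left hv hC0.le)

lemma Ar_iff (r : ℕ) (s : ℝ) (x : XSpace n) : Ar r s x ↔ r ≤ (NN s x).ncard := by
  constructor
  · rintro ⟨F, rfl, h⟩
    rw [← Set.ncard_coe_finset]
    exact Set.ncard_le_ncard (fun w hw => h w hw) (NN_finite s x)
  · intro h
    rw [Set.ncard_eq_toFinset_card _ (NN_finite s x)] at h
    obtain ⟨F, hF, hc⟩ := Finset.exists_subset_card_eq h
    exact ⟨F, hc, fun w hw => (NN_finite s x).mem_toFinset.1 (hF hw)⟩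

lemma exists_Ar [NeZero n] (r : ℕ) (x : XSpace n) : ∃ s, 0 ≤ s ∧ Ar r s x := by
  obtain ⟨g, rfl⟩ := pr_surj x
  have : Infinite (Fin n → ℤ) := by
    have : Nonempty (Fin n) := ⟨⟨0, NeZero.pos n⟩⟩
    infer_instance
  obtain ⟨F, hF⟩ := Infinite.exists_subset_card_eq (Fin n → ℤ) r
  classical
  refine ⟨∑ v ∈ F, ‖cz v ᵥ* g.1‖, Finset.sum_nonneg fun _ _ => norm_nonneg _, F.image (fun v => cz v ᵥ* g.1), ?_, ?_⟩
  · rw [Finset.card_image_of_injective _ (czg_inj g), hF]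
  · intro w hw
    obtain ⟨v, hv, rfl⟩ := Finset.mem_image.1 hw
    exact ⟨(inLat_pr _ _).2 ⟨v, rfl⟩, Finset.single_le_sum (f := fun v : Fin n → ℤ => ‖cz v ᵥ* g.1‖) (fun _ _ => norm_nonneg _) hv⟩

lemma measurableSet_Ar (r : ℕ) (s : ℝ) : MeasurableSet {x : XSpace n | Ar r s x} := by
  rw [measurableSet_setOf, measurable_X_iff, ← measurableSet_setOf]
  have : {g : SLR n | Ar r s (pr g)} = ⋃ F ∈ {F : Finset (Fin n → ℤ) | F.card = r}, ⋂ v ∈ F, {g : SLR n | ‖cz v ᵥ* g.1‖ ≤ s} := by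
    ext g
    simp only [Set.mem_setOf_eq, Set.mem_iUnion, Set.mem_iInter, exists_prop]
    constructor
    · rintro ⟨F, hF, h⟩
      classical
      refine ⟨F.preimage (fun v => cz v ᵥ* g.1) (czg_inj g).injOn, ?_, fun v hv => (h _ (Finset.mem_preimage.1 hv)).2⟩
      rw [← hF, Finset.card_preimage]
      congr 1
      rw [Finset.filter_eq_self]
      exact fun w hw => (inLat_pr _ _).1 (h w hw).1
    · rintro ⟨F, hF, h⟩
      classical
      refine ⟨F.image (fun v => cz v ᵥ* g.1), ?_, ?_⟩
      · rw [Finset.card_image_of_injective _ (czg_inj g), hF]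
      · intro w hw
        obtain ⟨v, hv, rfl⟩ := Finset.mem_image.1 hw
        exact ⟨(inLat_pr _ _).2 ⟨v, rfl⟩, h v hv⟩
  rw [this]
  refine MeasurableSet.biUnion (Set.to_countable _) fun F _ => Finset.measurableSet_biInter _ fun v _ => ?_
  exact (isClosed_le (continuous_vecMulg _).norm continuous_const).measurableSet

/-- the `r`-th smallest norm -/
def nu (r : ℕ) (x : XSpace n) : ℝ := sInf {s | 0 ≤ s ∧ Ar r s x}

lemma nu_bdd (r : ℕ) (x : XSpace n) : BddBelow {s | 0 ≤ s ∧ Ar r s x} := ⟨0, fun _ h => h.1⟩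

lemma nu_nonneg (r : ℕ) (x : XSpace n) : 0 ≤ nu r x := Real.sInf_nonneg fun _ h => h.1

lemma nu_rt [NeZero n] (r : ℕ) (x : XSpace n) (g : SLR n) (c : ℝ) (hc : 0 < c) (h : ∀ w : Fin n → ℝ, ‖w ᵥ* g.1‖ ≤ c * ‖w‖) :
    nu r (rightTranslate n g x) ≤ c * nu r x := by
  rw [mul_comm, ← div_le_iff₀ hc]
  refine le_csInf (exists_Ar r x) fun s ⟨hs0, F, hF, hw⟩ => ?_
  rw [div_le_iff₀ hc]
  refine csInf_le (nu_bdd _ _) ⟨by positivity, ?_⟩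
  classical
  refine ⟨F.image (fun w => w ᵥ* g.1), ?_, ?_⟩
  · rw [Finset.card_image_of_injective _ (vecMul_injS g), hF]
  · intro w' hw'
    obtain ⟨w, hwF, rfl⟩ := Finset.mem_image.1 hw'
    refine ⟨(inLat_rt _ _ _).2 (hw w hwF).1, (h w).trans ?_⟩
    rw [mul_comm]
    exact mul_le_mul_of_nonneg_right (hw w hwF).2 hc.le

lemma near_one {δ : ℝ} (hδ : 0 < δ) : ∀ᶠ g in 𝓝 (1 : SLR n), ∀ w : Fin n → ℝ, ‖w ᵥ* g.1‖ ≤ (1 + δ) * ‖w‖ := by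
  have h1 : ∀ᶠ g in 𝓝 (1 : SLR n), ∀ i j, |g.1 i j - (1 : Matrix (Fin n) (Fin n) ℝ) i j| < δ / (n + 1) := by
    rw [eventually_all]; intro i
    rw [eventually_all]; intro j
    have hc : Continuous (fun g : SLR n => |g.1 i j - (1 : Matrix (Fin n) (Fin n) ℝ) i j|) :=
      ((continuous_entry i j).sub continuous_const).abs
    have := hc.tendsto' (1 : SLR n) 0 (by simp)
    exact this.eventually_lt_const (by positivity)
  filter_upwards [h1] with g hg w
  rw [pi_norm_le_iff_of_nonneg (by positivity)]
  intro j
  have e : (w ᵥ* g.1) j = w j + ∑ i, w i * (g.1 i j - (1 : Matrix (Fin n) (Fin n) ℝ) i j) := by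
    simp only [mul_sub, Finset.sum_sub_distrib, Matrix.vecMul, dotProduct, Matrix.one_apply]
    simp
  rw [e]
  have h2 : |∑ i, w i * (g.1 i j - (1 : Matrix (Fin n) (Fin n) ℝ) i j)| ≤ δ * ‖w‖ := by
    calc _ ≤ ∑ i : Fin n, ‖w‖ * (δ / (n + 1)) := by
          refine (Finset.abs_sum_le_sum_abs _ _).trans (Finset.sum_le_sum fun i _ => ?_)
          rw [abs_mul]
          exact mul_le_mul (norm_le_pi_norm w i) (hg i j).le (abs_nonneg _) (norm_nonneg _)
      _ = δ * ‖w‖ * (n / (n + 1)) := by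
          rw [Finset.sum_const, Finset.card_univ, Fintype.card_fin, nsmul_eq_mul]; ring
      _ ≤ δ * ‖w‖ * 1 := by
          gcongr
          rw [div_le_one (by positivity)]; linarith
      _ = _ := by ring
  have h3 : |w j| ≤ ‖w‖ := norm_le_pi_norm w j
  rw [Real.norm_eq_abs]
  refine (abs_add_le _ _).trans ?_
  linarith

/-- bump -/
def eta (r : ℕ) (a b : ℝ) (x : XSpace n) : ℝ := min 1 ((b - min (nu r x) b) / (b - a))

lemma eta_nonneg (r : ℕ) {a b : ℝ} (hab : a < b) (x : XSpace n) : 0 ≤ eta r a b x := by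
  refine le_min zero_le_one (div_nonneg ?_ ?_)
  · linarith [min_le_right (nu r x) b]
  · linarith

lemma eta_le_one (r : ℕ) (a b : ℝ) (x : XSpace n) : eta r a b x ≤ 1 := min_le_left _ _

lemma eta_UC [NeZero n] (r : ℕ) {a b : ℝ} (h0 : 0 ≤ a) (hab : a < b) : UC (eta (n := n) r a b) := by
  intro ε hε
  have hb : 0 < b := by linarith
  have hd : 0 < b - a := by linarith
  set δ := ε * (b - a) / b with hδd
  have hδ : 0 < δ := by positivity
  have hδb : δ * b = ε * (b - a) := by rw [hδd]; field_simp
  have h1 := near_one (n := n) hδ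
  have h2 : ∀ᶠ g in 𝓝 (1 : SLR n), ∀ w : Fin n → ℝ, ‖w ᵥ* (g⁻¹).1‖ ≤ (1 + δ) * ‖w‖ := by
    have : Tendsto (fun g : SLR n => g⁻¹) (𝓝 1) (𝓝 1) := by
      simpa using (continuous_inv (G := SLR n)).tendsto 1
    exact this.eventually h1
  filter_upwards [h1, h2] with g hg hg' x
  have k1 := nu_rt r x g (1 + δ) (by positivity) hg
  have k2 := nu_rt r (rightTranslate n g x) g⁻¹ (1 + δ) (by positivity) hg'
  rw [← rt_mul, mul_inv_cancel, rt_one] at k2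
  have key : ∀ s t : ℝ, 0 ≤ s → 0 ≤ t → s ≤ (1 + δ) * t → min s b - min t b ≤ ε * (b - a) := by
    intro s t hs ht h
    rw [← hδb]
    rcases le_total t b with htb | htb
    · rw [min_eq_left htb]
      have := min_le_left s b
      nlinarith
    · rw [min_eq_right htb]
      have := min_le_right s b
      nlinarith
  have m1 := key _ _ (nu_nonneg r _) (nu_nonneg r _) k1
  have m2 := key _ _ (nu_nonneg r _) (nu_nonneg r _) k2
  unfold eta
  refine (abs_min_sub_min_le_max _ _ _ _).trans ?_
  rw [sub_self, abs_zero, max_eq_right (abs_nonneg _), ← sub_div, abs_div, abs_of_pos hd, div_le_iff₀ hd, abs_le]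
  constructor <;> linarith

open Classical in
lemma le_eta (r : ℕ) {a b : ℝ} (h0 : 0 ≤ a) (hab : a < b) (x : XSpace n) : (if Ar r a x then (1:ℝ) else 0) ≤ eta r a b x := by
  split_ifs with h
  · have : nu r x ≤ a := csInf_le (nu_bdd _ _) ⟨h0, h⟩
    refine le_min le_rfl ?_
    rw [le_div_iff₀ (by linarith)]
    have := min_le_left (nu r x) b
    linarith
  · exact eta_nonneg r hab x

open Classical in
lemma eta_le [NeZero n] (r : ℕ) {a b : ℝ} (x : XSpace n) : eta r a b x ≤ (if Ar r b x then (1:ℝ) else 0) := by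
  split_ifs with h
  · exact eta_le_one _ _ _ _
  · have : b ≤ nu r x := by
      refine le_csInf (exists_Ar r x) fun s hs => ?_
      by_contra hlt
      exact h (hs.2.mono (not_le.1 hlt).le)
    refine (min_le_right _ _).trans ?_
    rw [min_eq_right this]; simp

lemma shell_nice {a b : ℝ} : Nice ((Metric.closedBall (0 : Fin n → ℝ) b \ Metric.closedBall 0 a).indicator fun _ => (1 : ℝ≥0∞)) := by
  refine nice_indicator (measurableSet_closedBall.diff measurableSet_closedBall) (Metric.isBounded_closedBall.subset Set.diff_subset) ?_
  refine measure_mono_null (t := frontier (Metric.closedBall (0 : Fin n → ℝ) b) ∪ frontier (Metric.closedBall (0 : Fin n → ℝ) a)) ?_ ?_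
  · rw [Set.diff_eq]
    refine (frontier_inter_subset _ _).trans ?_
    rw [frontier_compl]
    exact Set.union_subset_union Set.inter_subset_left Set.inter_subset_right
  · rw [measure_union_null_iff]
    exact ⟨(convex_closedBall _ _).addHaar_frontier _, (convex_closedBall _ _).addHaar_frontier _⟩

lemma shell_vol {a b : ℝ} (h0 : 0 ≤ a) (hab : a ≤ b) : volume (Metric.closedBall (0 : Fin n → ℝ) b \ Metric.closedBall 0 a) = ENNReal.ofReal ((2 * b) ^ n - (2 * a) ^ n) := by
  rw [measure_diff (Metric.closedBall_subset_closedBall hab) measurableSet_closedBall.nullMeasurableSet (measure_closedBall_lt_top).ne,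
    Real.volume_pi_closedBall _ (h0.trans hab), Real.volume_pi_closedBall _ h0, Fintype.card_fin, ENNReal.ofReal_sub _ (by positivity)]

lemma shell_bound [NeZero n] [Nontrivial (Fin n)] (μ : Measure (XSpace n)) [IsProbabilityMeasure μ] (hinv : ∀ g, Measure.map (rightTranslate n g) μ = μ)
    (r : ℕ) {a b : ℝ} (h0 : 0 ≤ a) (hab : a ≤ b) :
    μ.real {x | Ar r b x} ≤ μ.real {x | Ar r a x} + ((2 * b) ^ n - (2 * a) ^ n) := by
  set f : (Fin n → ℝ) → ℝ≥0∞ := (Metric.closedBall (0 : Fin n → ℝ) b \ Metric.closedBall 0 a).indicator fun _ => 1 with hf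
  have hpos : 0 ≤ (2 * b) ^ n - (2 * a) ^ n := by
    have : (2 * a) ^ n ≤ (2 * b) ^ n := by gcongr
    linarith
  have h1 : {x : XSpace n | Ar r b x} ⊆ {x | Ar r a x} ∪ {x | 1 ≤ Es f x} := by
    rintro x ⟨F, hF, hw⟩
    by_cases h : ∀ w ∈ F, ‖w‖ ≤ a
    · exact Or.inl ⟨F, hF, fun w hwF => ⟨(hw w hwF).1, h w hwF⟩⟩
    · right
      push Not at h
      obtain ⟨w, hwF, hwa⟩ := h
      obtain ⟨v, hv⟩ := (hw w hwF).1
      have : f (cz v ᵥ* (rep x).1) = 1 := by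
        change f ((fun i => (v i : ℝ)) ᵥ* (rep x).1) = 1
        rw [hv, hf, Set.indicator_of_mem]
        simp only [Set.mem_diff, mem_closedBall_zero_iff, not_le]
        exact ⟨(hw w hwF).2, hwa⟩
      rw [Set.mem_setOf_eq, ← this]
      exact ENNReal.le_tsum v
  have h2 : μ {x | 1 ≤ Es f x} ≤ ENNReal.ofReal ((2 * b) ^ n - (2 * a) ^ n) := by
    have := mul_meas_ge_le_lintegral (μ := μ) (measurable_Es (shell_nice (n := n) (a := a) (b := b)).meas) 1
    rw [one_mul] at this
    refine this.trans ((siegel μ hinv shell_nice ?_).trans ?_)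
    · rw [Set.indicator_of_notMem]; simp [h0]
    · rw [lintegral_indicator (measurableSet_closedBall.diff measurableSet_closedBall)]
      simp [shell_vol h0 hab]
  calc μ.real {x | Ar r b x} ≤ μ.real ({x | Ar r a x} ∪ {x | 1 ≤ Es f x}) := measureReal_mono h1
    _ ≤ μ.real {x | Ar r a x} + μ.real {x | 1 ≤ Es f x} := measureReal_union_le _ _
    _ ≤ _ := by
        gcongr
        exact ENNReal.toReal_le_of_le_ofReal hpos h2

open Classical in
lemma integral_Ar (μ : Measure (XSpace n)) [IsProbabilityMeasure μ] (r : ℕ) (s : ℝ) :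
    ∫ x, (if Ar r s x then (1:ℝ) else 0) ∂μ = μ.real {x | Ar r s x} := by
  rw [← integral_indicator_one (measurableSet_Ar r s)]
  rfl

open Classical in
lemma integrable_Ar (μ : Measure (XSpace n)) [IsProbabilityMeasure μ] (r : ℕ) (s : ℝ) :
    Integrable (fun x => if Ar r s x then (1:ℝ) else 0) μ := by
  have := (integrable_const (μ := μ) (1:ℝ)).indicator (measurableSet_Ar r s)
  exact this

open Classical in
theorem main_Ar [NeZero n] [Nontrivial (Fin n)] (μ : Measure (XSpace n)) [IsProbabilityMeasure μ] (hinv : ∀ g, Measure.map (rightTranslate n g) μ = μ)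
    (S : Finset (Fin n)) (hS1 : S.Nonempty) (hS2 : Sᶜ.Nonempty) (r : ℕ) {D : ℝ} (hD : 0 < D) :
    Tendsto (fun p : Nat.Primes => (hS (p : ℕ) S).T (fun x => if Ar r D x then (1:ℝ) else 0) (pr 1)) PF (𝓝 (μ.real {x | Ar r D x})) := by
  rw [Metric.tendsto_nhds]
  intro ε hε
  have hex : ∀ᶠ t in 𝓝[>] (0:ℝ), t < D ∧ (2 * (D + t)) ^ n - (2 * (D - t)) ^ n < ε / 2 ∧ 0 < t := by
    have c : Continuous fun t : ℝ => (2 * (D + t)) ^ n - (2 * (D - t)) ^ n := by fun_prop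
    have e1 := (c.tendsto' 0 0 (by simp)).eventually_lt_const (half_pos hε)
    have e2 : ∀ᶠ t in 𝓝 (0:ℝ), t < D := eventually_lt_nhds hD
    filter_upwards [nhdsWithin_le_nhds e1, nhdsWithin_le_nhds e2, self_mem_nhdsWithin] with t h1 h2 h3
    exact ⟨h2, h1, h3⟩
  obtain ⟨t, htD, hv, ht0⟩ := hex.exists
  have hbd : ∀ a b : ℝ, a < b → ∀ x : XSpace n, |eta r a b x| ≤ 1 := fun a b hab x =>
    abs_le.2 ⟨by linarith [eta_nonneg r hab x], eta_le_one _ _ _ _⟩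
  have hi : ∀ a b : ℝ, 0 ≤ a → a < b → Integrable (eta (n := n) r a b) μ := fun a b h0 hab =>
    Integrable.of_bound (eta_UC r h0 hab).continuous.aestronglyMeasurable 1 (Eventually.of_forall (hbd a b hab))
  have up := S2 μ hinv (eta_UC (n := n) r hD.le (show D < D + t by linarith)) (hbd _ _ (by linarith)) S hS1 hS2
  have lo := S2 μ hinv (eta_UC (n := n) r (show 0 ≤ D - t by linarith) (show D - t < D by linarith)) (hbd _ _ (by linarith)) S hS1 hS2
  have iu : ∫ x, eta r D (D + t) x ∂μ ≤ μ.real {x | Ar r (D + t) x} := by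
    rw [← integral_Ar]
    exact integral_mono (hi _ _ hD.le (by linarith)) (integrable_Ar μ _ _) fun x => eta_le r x
  have il : μ.real {x | Ar r (D - t) x} ≤ ∫ x, eta r (D - t) D x ∂μ := by
    rw [← integral_Ar]
    exact integral_mono (integrable_Ar μ _ _) (hi _ _ (by linarith) (by linarith)) fun x => le_eta r (by linarith) (by linarith) x
  have sb := shell_bound μ hinv r (show 0 ≤ D - t by linarith) (show D - t ≤ D + t by linarith)
  have m1 : μ.real {x | Ar r (D - t) x} ≤ μ.real {x : XSpace n | Ar r D x} := measureReal_mono fun x (hx : Ar r (D - t) x) => hx.mono (by linarith)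
  have m2 : μ.real {x : XSpace n | Ar r D x} ≤ μ.real {x | Ar r (D + t) x} := measureReal_mono fun x (hx : Ar r D x) => hx.mono (by linarith)
  filter_upwards [up.eventually_lt_const (show _ < μ.real {x : XSpace n | Ar r D x} + ε by linarith),
    lo.eventually_const_lt (show μ.real {x : XSpace n | Ar r D x} - ε < _ by linarith)] with p hp1 hp2
  have t1 := (hS (p : ℕ) S).T_mono (fun x => le_eta r hD.le (show D < D + t by linarith) x) (pr 1)
  have t2 := (hS (p : ℕ) S).T_mono (fun x => eta_le (n := n) (a := D - t) (b := D) r x) (pr 1)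
  rw [Real.dist_eq, abs_lt]
  constructor <;> linarith

end Final

end ModuleB13

section ModuleB14
open Matrix MeasureTheory Topology
open scoped ENNReal Pointwise

section Final2
open Filter
variable {n : ℕ}

lemma omega_eq (D : ℝ) (r : ℕ) (x : XSpace n) : x ∈ OmegaTilde n D r ↔ (NN D x).ncard = r := by
  constructor
  · rintro ⟨g, rfl, h⟩
    exact (ncard_NN_pr D g).trans h
  · intro h
    obtain ⟨g, rfl⟩ := pr_surj x
    exact ⟨g, rfl, (ncard_NN_pr D g).symm.trans h⟩

lemma ncard_NN_hS [NeZero n] [Nontrivial (Fin n)] (p : ℕ) [hp : Fact p.Prime] (S : Finset (Fin n)) {x : XSpace n}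
    (hx : x ∈ (hS p S).C) (D : ℝ) :
    (NN D x).ncard = Set.ncard {a : Fin n → ℤ | ‖(fun i => (a i : ℝ))‖ ≤ D * (p : ℝ) ^ ((S.card : ℝ) / (n : ℝ)) ∧
            (fun i => ((a i : ZMod p))) ∈ hof p S x} := by
  have hc := cS_pos p S
  have hp0 : (0:ℝ) < p := by exact_mod_cast hp.out.pos
  have hinj : Function.Injective (fun a : Fin n → ℤ => cS p S • cz a) :=
    (smul_right_injective _ hc.ne').comp cz_inj
  rw [← Set.ncard_image_of_injective _ hinj]
  have hcc : (p : ℝ) ^ ((S.card : ℝ) / (n : ℝ)) = (cS p S)⁻¹ := by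
    rw [cS, Real.rpow_neg hp0.le, inv_inv]
  have hnorm : ∀ a : Fin n → ℤ, ‖cS p S • cz a‖ ≤ D ↔ ‖(fun i => (a i : ℝ))‖ ≤ D * (p : ℝ) ^ ((S.card : ℝ) / (n : ℝ)) := by
    intro a
    rw [norm_smul, Real.norm_eq_abs, abs_of_pos hc, hcc, ← div_eq_mul_inv, le_div_iff₀ hc, mul_comm]
  congr 1
  ext w
  simp only [NN, Set.mem_setOf_eq, Set.mem_image]
  constructor
  · rintro ⟨h1, h2⟩
    obtain ⟨a, rfl⟩ := inLat_form p S hx w h1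
    exact ⟨a, ⟨(hnorm a).1 h2, (inLat_hof p S hx a).1 h1⟩, rfl⟩
  · rintro ⟨a, ⟨h1, h2⟩, rfl⟩
    exact ⟨(inLat_hof p S hx a).2 h2, (hnorm a).2 h1⟩

open Classical in
lemma proportion_eq [NeZero n] [Nontrivial (Fin n)] (p : ℕ) [hp : Fact p.Prime] (S : Finset (Fin n)) (i1 : Fin n) (hi1 : i1 ∉ S)
    (D : ℝ) (r : ℕ) :
    (Set.ncard {H ∈ congruenceSet p n S.card |
          Set.ncard {x : Fin n → ℤ |
            ‖(fun i => (x i : ℝ))‖ ≤ D * (p : ℝ) ^ ((S.card : ℝ) / (n : ℝ)) ∧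
            (fun i => ((x i : ZMod p))) ∈ H} = r} : ℝ) /
        (Set.ncard (congruenceSet p n S.card) : ℝ) =
    (hS p S).T (fun x => if Ar r D x then (1:ℝ) else 0) (pr 1) - (hS p S).T (fun x => if Ar (r + 1) D x then (1:ℝ) else 0) (pr 1) := by
  have h1 := ncard_congruence p S i1 hi1 (fun _ => True)
  have e1 : {H ∈ congruenceSet p n S.card | True} = congruenceSet p n S.card := by simp
  rw [e1] at h1
  have e2 : ∀ (inst : DecidablePred fun _ : XSpace n => True),
      (@Finset.filter _ (fun _ : XSpace n => True) inst (hS p S).C) = (hS p S).C := by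
    intro inst; ext x; simp
  rw [e2] at h1
  rw [h1, ncard_congruence p S i1 hi1, ← HSet.T_sub, HSet.T_pr, div_eq_inv_mul, Finset.card_filter]
  simp only [rt_one]
  rw [Nat.cast_sum]
  congr 1
  refine Finset.sum_congr rfl fun x hx => ?_
  simp only [← ncard_NN_hS p S hx D, Ar_iff]
  by_cases a1 : r ≤ (NN D x).ncard <;> by_cases a2 : r + 1 ≤ (NN D x).ncard <;>
    by_cases a3 : (NN D x).ncard = r <;> simp [a1, a2, a3] <;> omega

lemma measure_eq (μ : Measure (XSpace n)) [IsProbabilityMeasure μ] (D : ℝ) (r : ℕ) :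
    (μ (OmegaTilde n D r)).toReal = μ.real {x | Ar r D x} - μ.real {x | Ar (r + 1) D x} := by
  have e : OmegaTilde n D r = {x | Ar r D x} \ {x | Ar (r + 1) D x} := by
    ext x
    rw [omega_eq, Set.mem_diff, Set.mem_setOf_eq, Set.mem_setOf_eq, Ar_iff, Ar_iff]
    omega
  change μ.real _ = _
  rw [e, measureReal_diff _ (measurableSet_Ar _ _)]
  intro x (hx : Ar (r + 1) D x)
  rw [Ar_iff] at hx
  rw [Set.mem_setOf_eq, Ar_iff]
  omega

theorem final_aux (n j r : ℕ)
    (hn : 2 ≤ n) (hj1 : 1 ≤ j) (hj : j ≤ n - 1)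
    (D : ℝ) (hD0 : 0 < D)
    (μ : Measure (XSpace n)) (hprob : IsProbabilityMeasure μ)
    (hinv : ∀ g, Measure.map (rightTranslate n g) μ = μ) :
    Tendsto (fun p : ℕ =>
      (Set.ncard {H ∈ congruenceSet p n j |
          Set.ncard {x : Fin n → ℤ |
            ‖(fun i => (x i : ℝ))‖ ≤ D * (p : ℝ) ^ ((j : ℝ) / (n : ℝ)) ∧
            (fun i => ((x i : ZMod p))) ∈ H} = r} : ℝ) /
        (Set.ncard (congruenceSet p n j) : ℝ))
      (atTop ⊓ Filter.principal {p : ℕ | p.Prime})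
      (nhds ((μ (OmegaTilde n D r)).toReal)) := by
  haveI : NeZero n := ⟨by omega⟩
  haveI : Nontrivial (Fin n) := Fin.nontrivial_iff_two_le.2 hn
  obtain ⟨S, -, rfl⟩ := Finset.exists_subset_card_eq (s := (Finset.univ : Finset (Fin n))) (n := j) (by simp; omega)
  have hS1 : S.Nonempty := Finset.card_pos.1 (by omega)
  have hS2 : Sᶜ.Nonempty := Finset.card_pos.1 (by rw [Finset.card_compl, Fintype.card_fin]; omega)
  obtain ⟨i1, hi1⟩ := hS2
  rw [Finset.mem_compl] at hi1
  have hF : (atTop ⊓ Filter.principal {p : ℕ | p.Prime} : Filter ℕ) = map (fun p : Nat.Primes => (p : ℕ)) PF := by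
    rw [PF, Filter.map_comap]
    congr 2
    ext p
    exact ⟨fun h => ⟨⟨p, h⟩, rfl⟩, fun ⟨q, hq⟩ => hq ▸ q.2⟩
  rw [hF, tendsto_map'_iff, measure_eq]
  have h1 := main_Ar μ hinv S hS1 ⟨i1, by simpa using hi1⟩ r hD0
  have h2 := main_Ar μ hinv S hS1 ⟨i1, by simpa using hi1⟩ (r + 1) hD0
  refine (h1.sub h2).congr fun p => ?_
  exact (proportion_eq (p : ℕ) S i1 hi1 D r).symm

end Final2

end ModuleB14

open Filter in
/-- Let `n ≥ 2`, `1 ≤ j ≤ n−1`, `0 < D < 1`, `r ≥ 1`, and let `μ` be the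
right-invariant Borel probability measure on `X = SL_n(ℤ)\SL_n(ℝ)`. As `p → ∞` along
primes, the proportion of `H ∈ H_{p,j}(n)` such that
`#{x ∈ ℤⁿ : ‖x‖∞ ≤ D·p^{j/n}, (x mod p) ∈ H} = r` tends to `c_{n,r} = μ(Ω̃_{n,r})`. -/
theorem prob_system_has_r_short_solutions_prime (n j r : ℕ)
    (hn : 2 ≤ n) (hj1 : 1 ≤ j) (hj : j ≤ n - 1) (hr : 1 ≤ r)
    (D : ℝ) (hD0 : 0 < D) (hD1 : D < 1)
    (μ : Measure (XSpace n)) (hprob : IsProbabilityMeasure μ)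
    (hinv : ∀ g, Measure.map (rightTranslate n g) μ = μ) :
    Tendsto (fun p : ℕ =>
      (Set.ncard {H ∈ congruenceSet p n j |
          Set.ncard {x : Fin n → ℤ |
            ‖(fun i => (x i : ℝ))‖ ≤ D * (p : ℝ) ^ ((j : ℝ) / (n : ℝ)) ∧
            (fun i => ((x i : ZMod p))) ∈ H} = r} : ℝ) /
        (Set.ncard (congruenceSet p n j) : ℝ))
      (atTop ⊓ Filter.principal {p : ℕ | p.Prime})
      (nhds ((μ (OmegaTilde n D r)).toReal)) := by
  exact final_aux n j r hn hj1 hj D hD0 μ hprob hinv
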